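/- Fix θ ∈ [1/4, 1). There is a constant C > 0 depending only on θ with the following property. Let Y be as in the context, satisfying the well-stretched condition with constant λ > 0 and ‖Y‖_{Ḣ^{2+θ}(𝕋)} < ∞, and let g_Y be as in the context. Then ‖g_Y‖_{Ḣ²(𝕋)} ≤ C λ^{−3} ‖Y‖_{Ḣ^{9/4}(𝕋)}⁴. -/

import Mathlib

open MeasureTheory Real Filter Topology
open scoped RealInnerProductSpace ENNReal

noncomputable section

abbrev E2 : Type := EuclideanSpace ℝ (Fin 2)

/-- Squared modulus of the `k`-th Fourier coefficient
`ĝ_k = ∫_{-π}^{π} g(s) e^{-iks} ds` (componentwise complexified). -/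
def coefSq (g : ℝ → E2) (k : ℤ) : ℝ :=
  ∑ j : Fin 2,
    Complex.normSq (∫ s in (-π)..π, (g s j : ℂ) * Complex.exp (-Complex.I * (k : ℂ) * (s : ℂ)))

/-- Summand of the homogeneous Sobolev seminorm: `|k|^{2σ} |ĝ_k|²` for `k ≠ 0`. -/
def sobSummand (σ : ℝ) (g : ℝ → E2) (k : ℤ) : ℝ :=
  if k = 0 then 0 else (|k| : ℝ) ^ (2 * σ) * coefSq g k

/-- The homogeneous Sobolev seminorm `‖g‖_{Ḣ^σ(𝕋)} = (Σ_{k≠0} |k|^{2σ} |ĝ_k|²)^{1/2}`. -/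
def sobNorm (σ : ℝ) (g : ℝ → E2) : ℝ := Real.sqrt (∑' k : ℤ, sobSummand σ g k)

/-- The `L²(𝕋)` norm (vector-valued). -/
def normL2v (g : ℝ → E2) : ℝ := Real.sqrt (∫ s in (-π)..π, ‖g s‖ ^ 2)

/-- The nonlinear remainder `g_Y` in the contour dynamic equation (Hookean case):
`g_Y(s) = (1/4π) ∫_{−π}^{π} [ (−|Y'(s+τ)|²/|L|² + 2(L·Y'(s+τ))²/|L|⁴ − 1) L/τ
+ (1/τ − τ/(4 sin²(τ/2))) L ] dτ` with `L = (Y(s+τ) − Y(s))/τ`. -/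
def gY (Y Y' : ℝ → E2) (s : ℝ) : E2 :=
  ((4 * π)⁻¹ : ℝ) • ∫ τ in (-π)..π,
    (((-‖Y' (s + τ)‖ ^ 2 / ‖τ⁻¹ • (Y (s + τ) - Y s)‖ ^ 2
          + 2 * (⟪τ⁻¹ • (Y (s + τ) - Y s), Y' (s + τ)⟫) ^ 2 /
              ‖τ⁻¹ • (Y (s + τ) - Y s)‖ ^ 4
          - 1) / τ
        + (1 / τ - τ / (4 * Real.sin (τ / 2) ^ 2))) • (τ⁻¹ • (Y (s + τ) - Y s)))


/-! ### Trigonometric polynomials -/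

/-- Trigonometric polynomial with frequencies in `S`. -/
def TP (S : Finset ℤ) (c : ℤ → ℂ) (s : ℝ) : ℂ :=
  ∑ k ∈ S, c k * Complex.exp (Complex.I * (k : ℂ) * (s : ℂ))

/-- Coefficients of the derivative. -/
def dc (c : ℤ → ℂ) (k : ℤ) : ℂ := Complex.I * (k : ℂ) * c k

lemma TP_hasDerivAt (S : Finset ℤ) (c : ℤ → ℂ) (s : ℝ) :
    HasDerivAt (TP S c) (TP S (dc c) s) s := by
  unfold TP
  refine HasDerivAt.fun_sum fun k _ => ?_
  have h1 : HasDerivAt (fun s : ℝ => Complex.I * (k : ℂ) * (s : ℂ)) (Complex.I * (k : ℂ)) s := by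
    simpa using (Complex.ofRealCLM.hasDerivAt (x := s)).const_mul (Complex.I * (k : ℂ))
  refine ((h1.cexp).const_mul (c k)).congr_deriv ?_
  simp only [dc]; ring

lemma TP_continuous (S : Finset ℤ) (c : ℤ → ℂ) : Continuous (TP S c) :=
  continuous_iff_continuousAt.2 fun s => (TP_hasDerivAt S c s).continuousAt

lemma exp_int_periodic (k : ℤ) (s : ℝ) :
    Complex.exp (Complex.I * (k : ℂ) * ((s + 2 * π : ℝ) : ℂ))
      = Complex.exp (Complex.I * (k : ℂ) * (s : ℂ)) := by
  rw [show Complex.I * (k : ℂ) * ((s + 2 * π : ℝ) : ℂ)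
    = Complex.I * (k : ℂ) * (s : ℂ) + k * (2 * π * Complex.I) by push_cast; ring]
  rw [Complex.exp_add, Complex.exp_int_mul_two_pi_mul_I, mul_one]

lemma TP_periodic (S : Finset ℤ) (c : ℤ → ℂ) : Function.Periodic (TP S c) (2 * π) := by
  intro s
  unfold TP
  refine Finset.sum_congr rfl fun k _ => ?_
  rw [exp_int_periodic]

lemma TP_shift (S : Finset ℤ) (c : ℤ → ℂ) (s t : ℝ) :
    TP S c (s + t) = TP S (fun k => c k * Complex.exp (Complex.I * (k : ℂ) * (t : ℂ))) s := by
  unfold TP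
  refine Finset.sum_congr rfl fun k _ => ?_
  rw [mul_assoc (c k), ← Complex.exp_add]
  congr 2
  push_cast; ring

lemma TP_sub (S : Finset ℤ) (c d : ℤ → ℂ) (s : ℝ) :
    TP S c s - TP S d s = TP S (fun k => c k - d k) s := by
  unfold TP
  rw [← Finset.sum_sub_distrib]
  refine Finset.sum_congr rfl fun k _ => ?_
  ring

lemma norm_exp_int (k : ℤ) (s : ℝ) : ‖Complex.exp (Complex.I * (k : ℂ) * (s : ℂ))‖ = 1 := by
  have := Complex.norm_exp_I_mul_ofReal (k * s)
  push_cast at this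
  rwa [← mul_assoc] at this

lemma integral_exp_int (N : ℕ) (k : ℤ) (hk : k ≠ 0) :
    ∫ s in (-(N * π))..(N * π), Complex.exp (Complex.I * (k : ℂ) * (s : ℂ)) = 0 := by
  have hc : Complex.I * (k : ℂ) ≠ 0 := mul_ne_zero Complex.I_ne_zero (by exact_mod_cast hk)
  rw [integral_exp_mul_complex hc]
  have : Complex.exp (Complex.I * (k : ℂ) * ((N * π : ℝ) : ℂ))
      = Complex.exp (Complex.I * (k : ℂ) * ((-(N * π) : ℝ) : ℂ)) := by
    rw [show Complex.I * (k : ℂ) * ((N * π : ℝ) : ℂ) = Complex.I * (k : ℂ) * ((-(N * π) : ℝ) : ℂ)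
      + ((N * k : ℤ) : ℂ) * (2 * π * Complex.I) by push_cast; ring]
    rw [Complex.exp_add, Complex.exp_int_mul_two_pi_mul_I, mul_one]
  rw [this]; simp

/-- Parseval for trigonometric polynomials, on `N` periods. -/
lemma TP_parseval (N : ℕ) (S : Finset ℤ) (c : ℤ → ℂ) :
    ∫ s in (-(N * π))..(N * π), ‖TP S c s‖ ^ 2 = 2 * (N * π) * ∑ k ∈ S, ‖c k‖ ^ 2 := by
  have key : ∀ s : ℝ, ((‖TP S c s‖ ^ 2 : ℝ) : ℂ) = ∑ k ∈ S, ∑ m ∈ S,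
      c k * (starRingEnd ℂ) (c m) * Complex.exp (Complex.I * ((k - m : ℤ) : ℂ) * (s : ℂ)) := by
    intro s
    rw [← Complex.normSq_eq_norm_sq, Complex.normSq_eq_conj_mul_self, mul_comm]
    unfold TP
    rw [map_sum, Finset.sum_mul_sum]
    refine Finset.sum_congr rfl fun k _ => Finset.sum_congr rfl fun m _ => ?_
    rw [map_mul, ← Complex.exp_conj]
    simp only [map_mul, Complex.conj_I, Complex.conj_ofReal, map_intCast]
    rw [mul_mul_mul_comm, ← Complex.exp_add]
    congr 2
    push_cast; ring
  have hcast : ((∫ s in (-(N * π))..(N * π), ‖TP S c s‖ ^ 2 : ℝ) : ℂ)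
      = ((2 * (N * π) * ∑ k ∈ S, ‖c k‖ ^ 2 : ℝ) : ℂ) := by
    rw [← intervalIntegral.integral_ofReal]
    simp_rw [key]
    rw [intervalIntegral.integral_finsetSum]
    · rw [Finset.mul_sum]
      push_cast
      refine Finset.sum_congr rfl fun k hk => ?_
      rw [intervalIntegral.integral_finsetSum]
      · rw [Finset.sum_eq_single k]
        · simp only [sub_self, mul_zero, zero_mul, Complex.exp_zero, mul_one]
          rw [intervalIntegral.integral_const]
          rw [← Complex.ofReal_pow, ← Complex.normSq_eq_norm_sq, Complex.normSq_eq_conj_mul_self]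
          rw [Complex.real_smul]
          push_cast; ring
        · intro m _ hm
          rw [intervalIntegral.integral_const_mul]
          have := integral_exp_int N (k - m) (sub_ne_zero.2 hm.symm)
          rw [Int.cast_sub] at this
          rw [this, mul_zero]
        · intro h; exact absurd hk h
      · intro m _
        apply Continuous.intervalIntegrable
        fun_prop
    · intro k _
      apply Continuous.intervalIntegrable
      fun_prop
  exact_mod_cast hcast

/-! ### Differentiation under the integral sign -/

lemma paramDeriv {F F' : ℝ → ℝ → ℂ} {a b : ℝ} (hab : a ≤ b)
    (hF : ContinuousOn (Function.uncurry F) (Set.univ ×ˢ Set.Icc a b))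
    (hF' : ContinuousOn (Function.uncurry F') (Set.univ ×ˢ Set.Icc a b))
    (hd : ∀ s, ∀ t ∈ Set.Icc a b, t ≠ 0 → HasDerivAt (fun x => F x t) (F' s t) s) (s : ℝ) :
    HasDerivAt (fun s => ∫ t in a..b, F s t) (∫ t in a..b, F' s t) s := by
  have hsec : ∀ {H : ℝ → ℝ → ℂ}, ContinuousOn (Function.uncurry H) (Set.univ ×ˢ Set.Icc a b) →
      ∀ x, ContinuousOn (H x) (Set.Icc a b) := by
    intro H hH x
    have : ContinuousOn (fun t => Function.uncurry H (x, t)) (Set.Icc a b) :=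
      hH.comp (by fun_prop) (fun t ht => ⟨Set.mem_univ _, ht⟩)
    exact this
  have hIntg : ∀ {H : ℝ → ℝ → ℂ}, ContinuousOn (Function.uncurry H) (Set.univ ×ˢ Set.Icc a b) →
      ∀ x, IntervalIntegrable (H x) volume a b := by
    intro H hH x
    apply ContinuousOn.intervalIntegrable
    rw [Set.uIcc_of_le hab]
    exact hsec hH x
  obtain ⟨K, hK⟩ := ((isCompact_Icc (a := s - 1) (b := s + 1)).prod
    (isCompact_Icc (a := a) (b := b))).exists_bound_of_continuousOn
      (hF'.mono (Set.prod_mono (Set.subset_univ _) le_rfl))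
  have h0 : ∀ᵐ t : ℝ, t ≠ 0 := by
    simp [ae_iff]
  refine (intervalIntegral.hasDerivAt_integral_of_dominated_loc_of_deriv_le
    (s := Set.Icc (s - 1) (s + 1)) (bound := fun _ => K)
    (Icc_mem_nhds (by linarith) (by linarith)) ?_ (hIntg hF s) ?_ ?_ ?_ ?_).2
  · exact Eventually.of_forall fun x => (intervalIntegrable_iff.1 (hIntg hF x)).aestronglyMeasurable
  · exact (intervalIntegrable_iff.1 (hIntg hF' s)).aestronglyMeasurable
  · refine Eventually.of_forall fun t ht x hx => ?_
    rw [Set.uIoc_of_le hab] at ht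
    exact hK (x, t) ⟨hx, Set.Ioc_subset_Icc_self ht⟩
  · exact intervalIntegrable_const
  · filter_upwards [h0] with t ht0 ht x _
    rw [Set.uIoc_of_le hab] at ht
    exact hd x t (Set.Ioc_subset_Icc_self ht) ht0

lemma param_continuous {F : ℝ → ℝ → ℂ} {a b : ℝ} (hab : a ≤ b)
    (hF : ContinuousOn (Function.uncurry F) (Set.univ ×ˢ Set.Icc a b)) :
    Continuous (fun s => ∫ t in a..b, F s t) := by
  rw [continuous_iff_continuousAt]
  intro s
  obtain ⟨K, hK⟩ := ((isCompact_Icc (a := s - 1) (b := s + 1)).prod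
    (isCompact_Icc (a := a) (b := b))).exists_bound_of_continuousOn
      (hF.mono (Set.prod_mono (Set.subset_univ _) le_rfl))
  have hsec : ∀ x, ContinuousOn (F x) (Set.Icc a b) := by
    intro x
    have : ContinuousOn (fun t => Function.uncurry F (x, t)) (Set.Icc a b) :=
      hF.comp (by fun_prop) (fun t ht => ⟨Set.mem_univ _, ht⟩)
    exact this
  have hIntg : ∀ x, IntervalIntegrable (F x) volume a b := by
    intro x
    apply ContinuousOn.intervalIntegrable
    rw [Set.uIcc_of_le hab]
    exact hsec x
  refine intervalIntegral.continuousAt_of_dominated_interval (bound := fun _ => K) ?_ ?_ ?_ ?_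
  · exact Eventually.of_forall fun x => (intervalIntegrable_iff.1 (hIntg x)).aestronglyMeasurable
  · filter_upwards [Icc_mem_nhds (show s - 1 < s by linarith) (show s < s + 1 by linarith)] with x hx
    refine Eventually.of_forall fun t ht => ?_
    rw [Set.uIoc_of_le hab] at ht
    exact hK (x, t) ⟨hx, Set.Ioc_subset_Icc_self ht⟩
  · exact intervalIntegrable_const
  · refine Eventually.of_forall fun t ht => ?_
    rw [Set.uIoc_of_le hab] at ht
    have : ContinuousOn (fun x => Function.uncurry F (x, t)) Set.univ :=
      hF.comp (by fun_prop) (fun x _ => ⟨Set.mem_univ _, Set.Ioc_subset_Icc_self ht⟩)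
    exact this.continuousAt Filter.univ_mem

/-! ### Weighted averages -/

/-- Weighted average `∫₀¹ φ(u) f(s+uτ) du`. -/
def Av (φ : ℝ → ℂ) (f : ℝ → ℂ) (s t : ℝ) : ℂ := ∫ u in (0:ℝ)..1, φ u * f (s + u * t)

lemma Av_continuous {φ f : ℝ → ℂ} (hφ : Continuous φ) (hf : Continuous f) :
    Continuous (fun p : ℝ × ℝ => Av φ f p.1 p.2) := by
  unfold Av
  apply intervalIntegral.continuous_parametric_intervalIntegral_of_continuous'
  fun_prop

lemma Av_hasDerivAt_left {φ f f' : ℝ → ℂ} (hφ : Continuous φ) (hf' : Continuous f')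
    (hd : ∀ s, HasDerivAt f (f' s) s) (s t : ℝ) :
    HasDerivAt (fun s => Av φ f s t) (Av φ f' s t) s := by
  have hf : Continuous f := continuous_iff_continuousAt.2 fun s => (hd s).continuousAt
  unfold Av
  apply paramDeriv (F := fun s u => φ u * f (s + u * t)) (F' := fun s u => φ u * f' (s + u * t))
    zero_le_one
  · apply Continuous.continuousOn; fun_prop
  · apply Continuous.continuousOn; fun_prop
  · intro s u _ _
    exact ((hd (s + u * t)).comp_add_const s (u * t)).const_mul (φ u)

lemma Av_hasDerivAt_right {φ f f' : ℝ → ℂ} (hφ : Continuous φ) (hf' : Continuous f')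
    (hd : ∀ s, HasDerivAt f (f' s) s) (s t : ℝ) :
    HasDerivAt (fun t => Av φ f s t) (Av (fun u => u * φ u) f' s t) t := by
  have hf : Continuous f := continuous_iff_continuousAt.2 fun s => (hd s).continuousAt
  unfold Av
  apply paramDeriv (F := fun t u => φ u * f (s + u * t))
    (F' := fun t u => (u * φ u) * f' (s + u * t)) zero_le_one
  · apply Continuous.continuousOn; fun_prop
  · apply Continuous.continuousOn; fun_prop
  · intro t u _ _
    have h1 : HasDerivAt (fun t : ℝ => s + u * t) u t := by
      simpa using ((hasDerivAt_id t).const_mul u).const_add s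
    have := ((hd (s + u * t)).scomp t h1).const_mul (φ u)
    refine this.congr_deriv ?_
    rw [Complex.real_smul]; ring

/-- `τ ∫₀¹ f'(s+uτ)du = f(s+τ) - f(s)`. -/
lemma Av_one {f f' : ℝ → ℂ} (hf' : Continuous f') (hd : ∀ s, HasDerivAt f (f' s) s) (s t : ℝ) :
    (t : ℂ) * Av (fun _ => 1) f' s t = f (s + t) - f s := by
  unfold Av
  rw [← intervalIntegral.integral_const_mul]
  have := intervalIntegral.integral_eq_sub_of_hasDerivAt (a := 0) (b := 1)
    (f := fun u : ℝ => f (s + u * t)) (f' := fun u : ℝ => (t : ℂ) * (1 * f' (s + u * t))) ?_ ?_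
  · simpa using this
  · intro u _
    have h1 : HasDerivAt (fun u : ℝ => s + u * t) t u := by
      simpa using ((hasDerivAt_id u).mul_const t).const_add s
    have := (hd (s + u * t)).scomp u h1
    refine this.congr_deriv ?_
    rw [Complex.real_smul]; ring
  · apply Continuous.intervalIntegrable; fun_prop

/-- `τ ∫₀¹ u f'(s+uτ)du = f(s+τ) - ∫₀¹ f(s+uτ)du`. -/
lemma Av_id {f f' : ℝ → ℂ} (hf' : Continuous f') (hd : ∀ s, HasDerivAt f (f' s) s) (s t : ℝ) :
    (t : ℂ) * Av (fun u => u) f' s t = f (s + t) - Av (fun _ => 1) f s t := by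
  have hf : Continuous f := continuous_iff_continuousAt.2 fun s => (hd s).continuousAt
  have := intervalIntegral.integral_eq_sub_of_hasDerivAt (a := 0) (b := 1)
    (f := fun u : ℝ => (u : ℂ) * f (s + u * t))
    (f' := fun u : ℝ => 1 * f (s + u * t) + (t : ℂ) * (u * f' (s + u * t))) ?_ ?_
  · rw [intervalIntegral.integral_add, intervalIntegral.integral_const_mul] at this
    · simp only [Av]
      rw [eq_sub_iff_add_eq']
      simpa using this
    · apply Continuous.intervalIntegrable; fun_prop
    · apply Continuous.intervalIntegrable; fun_prop
  · intro u _
    have h1 : HasDerivAt (fun u : ℝ => s + u * t) t u := by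
      simpa using ((hasDerivAt_id u).mul_const t).const_add s
    have h2 := (hd (s + u * t)).scomp u h1
    have h3 : HasDerivAt (fun u : ℝ => (u : ℂ)) 1 u := Complex.ofRealCLM.hasDerivAt
    refine (h3.mul h2).congr_deriv ?_
    rw [Complex.real_smul, Function.comp]; ring
  · apply Continuous.intervalIntegrable; fun_prop

lemma Av_sub {φ ψ f : ℝ → ℂ} (hφ : Continuous φ) (hψ : Continuous ψ) (hf : Continuous f)
    (s t : ℝ) : Av (fun u => φ u - ψ u) f s t = Av φ f s t - Av ψ f s t := by
  unfold Av
  rw [← intervalIntegral.integral_sub]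
  · simp only [sub_mul]
  · apply Continuous.intervalIntegrable; fun_prop
  · apply Continuous.intervalIntegrable; fun_prop


/-! ### Algebra of the kernels -/

def F0a (t p pb l il ilb : ℂ) : ℂ :=
  p + pb * l * ilb + t / 2 * (p ^ 2 * il + pb ^ 2 * l * ilb ^ 2)

def F0sa (t p pb ps pbs a ab l il ilb : ℂ) : ℂ :=
  ps + (pbs * l * ilb + pb * a * ilb - pb * l * ab * ilb ^ 2)
    + t / 2 * ((2 * p * ps * il - p ^ 2 * a * il ^ 2)
      + (2 * pb * pbs * l * ilb ^ 2 + pb ^ 2 * a * ilb ^ 2 - 2 * pb ^ 2 * l * ab * ilb ^ 3))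

def A0a (y yb y0 yb0 a ab l il ilb : ℂ) : ℂ :=
  y * a * il / 2 + yb * ab * l * ilb ^ 2 / 2 + (y0 * ab - yb0 * a) * ilb / 2 + a

def A0ta (y yb y0 yb0 z zb a ab p pb ps pbs l il ilb : ℂ) : ℂ :=
  (z * a * il + y * ps * il - y * a * p * il ^ 2) / 2
    + (zb * ab * l * ilb ^ 2 + yb * pbs * l * ilb ^ 2 + yb * ab * p * ilb ^ 2
        - 2 * yb * ab * l * pb * ilb ^ 3) / 2
    + ((y0 * pbs - yb0 * ps) * ilb - (y0 * ab - yb0 * a) * pb * ilb ^ 2) / 2 + ps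

def R1a (y0 yb0 z zb m mb il ilb : ℂ) : ℂ :=
  z * (-(m * il) - mb * ilb) / 2 + zb * (yb0 * m - y0 * mb) * ilb ^ 2 / 2

def R1sa (y0 yb0 z0 zb0 z zb w wb m mb ms mbs a ab il ilb : ℂ) : ℂ :=
  (w * (-(m * il) - mb * ilb)
      + z * (-(ms * il - m * a * il ^ 2) - (mbs * ilb - mb * ab * ilb ^ 2))) / 2
    + (wb * (yb0 * m - y0 * mb) * ilb ^ 2
      + zb * (zb0 * m + yb0 * ms - z0 * mb - y0 * mbs) * ilb ^ 2
      - 2 * zb * (yb0 * m - y0 * mb) * ab * ilb ^ 3) / 2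

def R1ta (y0 yb0 z zb w wb m mb mt mbt p pb il ilb : ℂ) : ℂ :=
  (w * (-(m * il) - mb * ilb)
      + z * (-(mt * il - m * p * il ^ 2) - (mbt * ilb - mb * pb * ilb ^ 2))) / 2
    + (wb * (yb0 * m - y0 * mb) * ilb ^ 2
      + zb * (yb0 * mt - y0 * mbt) * ilb ^ 2
      - 2 * zb * (yb0 * m - y0 * mb) * pb * ilb ^ 3) / 2

def R2a (t y0 yb0 z0 zb0 z zb m mb l lb il ilb : ℂ) : ℂ :=
  z * ((y0 * (z0 - 2 * m) / t + m * (z0 - m)) * il ^ 2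
        + (yb0 * (zb0 - 2 * mb) / t + mb * (zb0 - mb)) * ilb ^ 2) / 2
    + zb * (-(yb0 * (yb0 * (z0 - 2 * m) - y0 * (zb0 - 2 * mb)) / t)
        + (zb0 * m - z0 * mb) * yb0 + (zb0 * l - z0 * lb) * mb) * ilb ^ 3 / 2

lemma identity1 (t l lb y yb y0 yb0 z zb p pb a ab ps pbs m mb : ℂ) (ht : t ≠ 0) (hl : l ≠ 0)
    (hlb : lb ≠ 0) (hp : t * p = y - l) (hpb : t * pb = yb - lb) (ha : t * a = y - y0)
    (hab : t * ab = yb - yb0) (hps : t * ps = z - a) (hpbs : t * pbs = zb - ab)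
    (hm : t * m = l - y0) (hmb : t * mb = lb - yb0) :
    F0sa t p pb ps pbs a ab l l⁻¹ lb⁻¹
      = A0ta y yb y0 yb0 z zb a ab p pb ps pbs l l⁻¹ lb⁻¹ + R1a y0 yb0 z zb m mb l⁻¹ lb⁻¹ := by
  have e1 : y = l + t * p := by linear_combination -hp
  have e2 : yb = lb + t * pb := by linear_combination -hpb
  have e3 : y0 = l - t * m := by linear_combination hm
  have e4 : yb0 = lb - t * mb := by linear_combination hmb
  have e5 : a = p + m := by
    apply mul_left_cancel₀ ht; linear_combination ha - hp - hm
  have e6 : ab = pb + mb := by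
    apply mul_left_cancel₀ ht; linear_combination hab - hpb - hmb
  have e7 : z = t * ps + p + m := by linear_combination -hps + e5
  have e8 : zb = t * pbs + pb + mb := by linear_combination -hpbs + e6
  subst e1 e2 e3 e4 e7 e8
  rw [e5, e6]
  unfold F0sa A0ta R1a
  field_simp
  ring

lemma identity2 (t l lb y0 yb0 z0 zb0 z zb w wb p pb a ab m mb ms mbs mt mbt : ℂ)
    (ht : t ≠ 0) (hl : l ≠ 0)
    (hlb : lb ≠ 0) (ha : a = p + m)
    (hab : ab = pb + mb) 
    (hm : t * m = l - y0) (hmb : t * mb = lb - yb0)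
    (hms : t * ms = a - z0) (hmbs : t * mbs = ab - zb0)
    (hmt : t * mt = p - m) (hmbt : t * mbt = pb - mb) :
    R1sa y0 yb0 z0 zb0 z zb w wb m mb ms mbs a ab l⁻¹ lb⁻¹
     - R1ta y0 yb0 z zb w wb m mb mt mbt p pb l⁻¹ lb⁻¹
      = R2a t y0 yb0 z0 zb0 z zb m mb l lb l⁻¹ lb⁻¹ := by
  have e3 : y0 = l - t * m := by linear_combination hm
  have e4 : yb0 = lb - t * mb := by linear_combination hmb
  have e5 : p = m + t * mt := by linear_combination -hmt
  have e6 : pb = mb + t * mbt := by linear_combination -hmbt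
  subst e5 e6
  have e7 : z0 = 2 * m + t * mt - t * ms := by linear_combination hms + ha
  have e8 : zb0 = 2 * mb + t * mbt - t * mbs := by linear_combination hmbs + hab
  subst e3 e4 e7 e8 ha hab
  unfold R1sa R1ta R2a
  field_simp
  ring

/-! ### Derivatives of the nonlinear part -/

abbrev one1 : ℝ → ℂ := fun _ => 1
abbrev idw : ℝ → ℂ := fun u => (u : ℂ)
abbrev omw : ℝ → ℂ := fun u => 1 - (u : ℂ)
abbrev quw : ℝ → ℂ := fun u => (u : ℂ) * (1 - (u : ℂ))

lemma Av_omw {f : ℝ → ℂ} (hf : Continuous f) (s t : ℝ) :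
    Av omw f s t = Av one1 f s t - Av idw f s t :=
  Av_sub (φ := one1) (ψ := idw) (by fun_prop) (by fun_prop) hf s t

lemma Av_quw {f f' : ℝ → ℂ} (hf' : Continuous f') (hd : ∀ s, HasDerivAt f (f' s) s) (s t : ℝ) :
    (t : ℂ) * Av quw f' s t = Av idw f s t - Av omw f s t := by
  have hf : Continuous f := continuous_iff_continuousAt.2 fun s => (hd s).continuousAt
  have := intervalIntegral.integral_eq_sub_of_hasDerivAt (a := 0) (b := 1)
    (f := fun u : ℝ => (u : ℂ) * (1 - (u : ℂ)) * f (s + u * t))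
    (f' := fun u : ℝ => ((1 - (u : ℂ)) * f (s + u * t) - u * f (s + u * t))
      + (t : ℂ) * (u * (1 - (u : ℂ)) * f' (s + u * t))) ?_ ?_
  · rw [intervalIntegral.integral_add, intervalIntegral.integral_sub,
      intervalIntegral.integral_const_mul] at this
    · simp only [Av]
      simp only [Complex.ofReal_one, sub_self, Complex.ofReal_zero, mul_zero, zero_mul] at this
      linear_combination this
    all_goals apply Continuous.intervalIntegrable; fun_prop
  · intro u _
    have h1 : HasDerivAt (fun u : ℝ => s + u * t) t u := by
      simpa using ((hasDerivAt_id u).mul_const t).const_add s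
    have h2 := (hd (s + u * t)).scomp u h1
    have h3 : HasDerivAt (fun u : ℝ => (u : ℂ)) 1 u := Complex.ofRealCLM.hasDerivAt
    refine ((h3.mul (h3.const_sub 1)).mul h2).congr_deriv ?_
    simp only [Complex.real_smul, Function.comp, Pi.mul_apply]; ring
  · apply Continuous.intervalIntegrable; fun_prop

def F0 (y z yb zb : ℝ → ℂ) (s t : ℝ) : ℂ :=
  F0a t (Av idw z s t) (Av idw zb s t) (Av one1 y s t) (Av one1 y s t)⁻¹ (Av one1 yb s t)⁻¹

def F0s (y z w yb zb wb : ℝ → ℂ) (s t : ℝ) : ℂ :=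
  F0sa t (Av idw z s t) (Av idw zb s t) (Av idw w s t) (Av idw wb s t)
    (Av one1 z s t) (Av one1 zb s t) (Av one1 y s t) (Av one1 y s t)⁻¹ (Av one1 yb s t)⁻¹

def A0 (y z yb zb : ℝ → ℂ) (s t : ℝ) : ℂ :=
  A0a (y (s + t)) (yb (s + t)) (y s) (yb s) (Av one1 z s t) (Av one1 zb s t)
    (Av one1 y s t) (Av one1 y s t)⁻¹ (Av one1 yb s t)⁻¹

def A0t (y z w yb zb wb : ℝ → ℂ) (s t : ℝ) : ℂ :=
  A0ta (y (s + t)) (yb (s + t)) (y s) (yb s) (z (s + t)) (zb (s + t))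
    (Av one1 z s t) (Av one1 zb s t)
    (Av idw z s t) (Av idw zb s t) (Av idw w s t) (Av idw wb s t)
    (Av one1 y s t) (Av one1 y s t)⁻¹ (Av one1 yb s t)⁻¹

def R1 (y z yb zb : ℝ → ℂ) (s t : ℝ) : ℂ :=
  R1a (y s) (yb s) (z (s + t)) (zb (s + t)) (Av omw z s t) (Av omw zb s t)
    (Av one1 y s t)⁻¹ (Av one1 yb s t)⁻¹

def R1s (y z w yb zb wb : ℝ → ℂ) (s t : ℝ) : ℂ :=
  R1sa (y s) (yb s) (z s) (zb s) (z (s + t)) (zb (s + t)) (w (s + t)) (wb (s + t))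
    (Av omw z s t) (Av omw zb s t) (Av omw w s t) (Av omw wb s t)
    (Av one1 z s t) (Av one1 zb s t)
    (Av one1 y s t)⁻¹ (Av one1 yb s t)⁻¹

def R1t (y z w yb zb wb : ℝ → ℂ) (s t : ℝ) : ℂ :=
  R1ta (y s) (yb s) (z (s + t)) (zb (s + t)) (w (s + t)) (wb (s + t))
    (Av omw z s t) (Av omw zb s t) (Av quw w s t) (Av quw wb s t)
    (Av idw z s t) (Av idw zb s t)
    (Av one1 y s t)⁻¹ (Av one1 yb s t)⁻¹

def R2 (y z yb zb : ℝ → ℂ) (s t : ℝ) : ℂ :=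
  R2a t (y s) (yb s) (z s) (zb s) (z (s + t)) (zb (s + t))
    (Av omw z s t) (Av omw zb s t) (Av one1 y s t) (Av one1 yb s t)
    (Av one1 y s t)⁻¹ (Av one1 yb s t)⁻¹

lemma HasDerivAt.inv_sq {f : ℝ → ℂ} {f' : ℂ} {x : ℝ} (h : HasDerivAt f f' x) (h0 : f x ≠ 0) :
    HasDerivAt (fun x => (f x)⁻¹) (-(f' * (f x)⁻¹ ^ 2)) x := by
  refine (h.fun_inv h0).congr_deriv ?_
  field_simp

/-- Smooth data: two functions with two continuous derivatives. -/
structure SD (y z w yb zb wb : ℝ → ℂ) : Prop where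
  hy : ∀ s, HasDerivAt y (z s) s
  hz : ∀ s, HasDerivAt z (w s) s
  hw : Continuous w
  hyb : ∀ s, HasDerivAt yb (zb s) s
  hzb : ∀ s, HasDerivAt zb (wb s) s
  hwb : Continuous wb
  nl : ∀ s t, t ∈ Set.Icc (-π) π → Av one1 y s t ≠ 0
  nlb : ∀ s t, t ∈ Set.Icc (-π) π → Av one1 yb s t ≠ 0
  py : Function.Periodic y (2 * π)
  pz : Function.Periodic z (2 * π)
  pyb : Function.Periodic yb (2 * π)
  pzb : Function.Periodic zb (2 * π)
  pl : ∀ s, Av one1 y s (-π) = - Av one1 y s π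
  plb : ∀ s, Av one1 yb s (-π) = - Av one1 yb s π

namespace SD
variable {y z w yb zb wb : ℝ → ℂ} (h : SD y z w yb zb wb)
abbrev DD : Set (ℝ × ℝ) := Set.univ ×ˢ Set.Icc (-π) π

theorem cz (h : SD y z w yb zb wb) : Continuous z :=
  continuous_iff_continuousAt.2 fun s => (h.hz s).continuousAt
theorem cy (h : SD y z w yb zb wb) : Continuous y :=
  continuous_iff_continuousAt.2 fun s => (h.hy s).continuousAt
theorem czb (h : SD y z w yb zb wb) : Continuous zb :=
  continuous_iff_continuousAt.2 fun s => (h.hzb s).continuousAt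
theorem cyb (h : SD y z w yb zb wb) : Continuous yb :=
  continuous_iff_continuousAt.2 fun s => (h.hyb s).continuousAt

theorem cil (h : SD y z w yb zb wb) :
    ContinuousOn (fun p : ℝ × ℝ => (Av one1 y p.1 p.2)⁻¹) DD :=
  (Av_continuous (by fun_prop) h.cy).continuousOn.inv₀ fun p hp => h.nl p.1 p.2 hp.2
theorem cilb (h : SD y z w yb zb wb) :
    ContinuousOn (fun p : ℝ × ℝ => (Av one1 yb p.1 p.2)⁻¹) DD :=
  (Av_continuous (by fun_prop) h.cyb).continuousOn.inv₀ fun p hp => h.nlb p.1 p.2 hp.2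

theorem cF0 (h : SD y z w yb zb wb) : ContinuousOn (Function.uncurry (F0 y z yb zb)) DD := by
  have h1 := Av_continuous (φ := idw) (by fun_prop) h.cz
  have h2 := Av_continuous (φ := idw) (by fun_prop) h.czb
  have h3 := Av_continuous (φ := one1) (by fun_prop) h.cy
  have h4 := h.cil
  have h5 := h.cilb
  simp only [Function.uncurry_def, F0, F0a]
  fun_prop

theorem cF0s (h : SD y z w yb zb wb) :
    ContinuousOn (Function.uncurry (F0s y z w yb zb wb)) DD := by
  have h1 := Av_continuous (φ := idw) (by fun_prop) h.cz
  have h2 := Av_continuous (φ := idw) (by fun_prop) h.czb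
  have h1w := Av_continuous (φ := idw) (by fun_prop) h.hw
  have h2w := Av_continuous (φ := idw) (by fun_prop) h.hwb
  have h1a := Av_continuous (φ := one1) (by fun_prop) h.cz
  have h2a := Av_continuous (φ := one1) (by fun_prop) h.czb
  have h3 := Av_continuous (φ := one1) (by fun_prop) h.cy
  have h4 := h.cil
  have h5 := h.cilb
  simp only [Function.uncurry_def, F0s, F0sa]
  fun_prop

theorem cA0 (h : SD y z w yb zb wb) : ContinuousOn (Function.uncurry (A0 y z yb zb)) DD := by
  have h1a := Av_continuous (φ := one1) (by fun_prop) h.cz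
  have h2a := Av_continuous (φ := one1) (by fun_prop) h.czb
  have h3 := Av_continuous (φ := one1) (by fun_prop) h.cy
  have h4 := h.cil
  have h5 := h.cilb
  have := h.cy
  have := h.cyb
  simp only [Function.uncurry_def, A0, A0a]
  fun_prop

theorem cA0t (h : SD y z w yb zb wb) :
    ContinuousOn (Function.uncurry (A0t y z w yb zb wb)) DD := by
  have h1 := Av_continuous (φ := idw) (by fun_prop) h.cz
  have h2 := Av_continuous (φ := idw) (by fun_prop) h.czb
  have h1w := Av_continuous (φ := idw) (by fun_prop) h.hw
  have h2w := Av_continuous (φ := idw) (by fun_prop) h.hwb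
  have h1a := Av_continuous (φ := one1) (by fun_prop) h.cz
  have h2a := Av_continuous (φ := one1) (by fun_prop) h.czb
  have h3 := Av_continuous (φ := one1) (by fun_prop) h.cy
  have h4 := h.cil
  have h5 := h.cilb
  have := h.cy
  have := h.cyb
  have := h.cz
  have := h.czb
  simp only [Function.uncurry_def, A0t, A0ta]
  fun_prop

theorem cR1 (h : SD y z w yb zb wb) : ContinuousOn (Function.uncurry (R1 y z yb zb)) DD := by
  have h1 := Av_continuous (φ := omw) (by fun_prop) h.cz
  have h2 := Av_continuous (φ := omw) (by fun_prop) h.czb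
  have h4 := h.cil
  have h5 := h.cilb
  have := h.cy
  have := h.cyb
  have := h.cz
  have := h.czb
  simp only [Function.uncurry_def, R1, R1a]
  fun_prop

theorem cR1s (h : SD y z w yb zb wb) :
    ContinuousOn (Function.uncurry (R1s y z w yb zb wb)) DD := by
  have h1 := Av_continuous (φ := omw) (by fun_prop) h.cz
  have h2 := Av_continuous (φ := omw) (by fun_prop) h.czb
  have h1w := Av_continuous (φ := omw) (by fun_prop) h.hw
  have h2w := Av_continuous (φ := omw) (by fun_prop) h.hwb
  have h1a := Av_continuous (φ := one1) (by fun_prop) h.cz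
  have h2a := Av_continuous (φ := one1) (by fun_prop) h.czb
  have h4 := h.cil
  have h5 := h.cilb
  have := h.cy
  have := h.cyb
  have := h.cz
  have := h.czb
  have := h.hw
  have := h.hwb
  simp only [Function.uncurry_def, R1s, R1sa]
  fun_prop

theorem cR1t (h : SD y z w yb zb wb) :
    ContinuousOn (Function.uncurry (R1t y z w yb zb wb)) DD := by
  have h1 := Av_continuous (φ := omw) (by fun_prop) h.cz
  have h2 := Av_continuous (φ := omw) (by fun_prop) h.czb
  have h1w := Av_continuous (φ := quw) (by fun_prop) h.hw
  have h2w := Av_continuous (φ := quw) (by fun_prop) h.hwb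
  have h1a := Av_continuous (φ := idw) (by fun_prop) h.cz
  have h2a := Av_continuous (φ := idw) (by fun_prop) h.czb
  have h4 := h.cil
  have h5 := h.cilb
  have := h.cy
  have := h.cyb
  have := h.cz
  have := h.czb
  have := h.hw
  have := h.hwb
  simp only [Function.uncurry_def, R1t, R1ta]
  fun_prop

theorem dF0 (h : SD y z w yb zb wb) (s t : ℝ) (ht : t ∈ Set.Icc (-π) π) :
    HasDerivAt (fun x => F0 y z yb zb x t) (F0s y z w yb zb wb s t) s := by
  have hp := Av_hasDerivAt_left (φ := idw) (by fun_prop) h.hw h.hz s t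
  have hpb := Av_hasDerivAt_left (φ := idw) (by fun_prop) h.hwb h.hzb s t
  have hl := Av_hasDerivAt_left (φ := one1) (by fun_prop) h.cz h.hy s t
  have hlb := Av_hasDerivAt_left (φ := one1) (by fun_prop) h.czb h.hyb s t
  have hil := hl.inv_sq (h.nl s t ht)
  have hilb := hlb.inv_sq (h.nlb s t ht)
  unfold F0 F0a
  refine ((hp.add ((hpb.mul hl).mul hilb)).add (((hp.pow 2).mul hil).add
    (((hpb.pow 2).mul hl).mul (hilb.pow 2)) |>.const_mul ((t : ℂ) / 2))).congr_deriv ?_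
  simp only [F0s, F0sa, Pi.mul_apply, Pi.pow_apply]
  push_cast
  ring

theorem dA0 (h : SD y z w yb zb wb) (s t : ℝ) (ht : t ∈ Set.Icc (-π) π) :
    HasDerivAt (fun x => A0 y z yb zb s x) (A0t y z w yb zb wb s t) t := by
  have ha : HasDerivAt (fun x => Av one1 z s x) (Av idw w s t) t := by
    simpa using Av_hasDerivAt_right (φ := one1) (by fun_prop) h.hw h.hz s t
  have hab : HasDerivAt (fun x => Av one1 zb s x) (Av idw wb s t) t := by
    simpa using Av_hasDerivAt_right (φ := one1) (by fun_prop) h.hwb h.hzb s t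
  have hl : HasDerivAt (fun x => Av one1 y s x) (Av idw z s t) t := by
    simpa using Av_hasDerivAt_right (φ := one1) (by fun_prop) h.cz h.hy s t
  have hlb : HasDerivAt (fun x => Av one1 yb s x) (Av idw zb s t) t := by
    simpa using Av_hasDerivAt_right (φ := one1) (by fun_prop) h.czb h.hyb s t
  have hil := hl.inv_sq (h.nl s t ht)
  have hilb := hlb.inv_sq (h.nlb s t ht)
  have hy := (h.hy (s + t)).comp_const_add s t
  have hyb := (h.hyb (s + t)).comp_const_add s t
  unfold A0 A0a
  refine ((((((hy.mul ha).mul hil).div_const 2).add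
    ((((hyb.mul hab).mul hl).mul (hilb.pow 2)).div_const 2)).add
    ((((hab.const_mul (y s)).sub (ha.const_mul (yb s))).mul hilb).div_const 2)).add ha).congr_deriv ?_
  simp only [A0t, A0ta, Pi.mul_apply, Pi.pow_apply, Pi.sub_apply]
  push_cast
  ring

theorem dR1s (h : SD y z w yb zb wb) (s t : ℝ) (ht : t ∈ Set.Icc (-π) π) :
    HasDerivAt (fun x => R1 y z yb zb x t) (R1s y z w yb zb wb s t) s := by
  have hm := Av_hasDerivAt_left (φ := omw) (by fun_prop) h.hw h.hz s t
  have hmb := Av_hasDerivAt_left (φ := omw) (by fun_prop) h.hwb h.hzb s t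
  have hl := Av_hasDerivAt_left (φ := one1) (by fun_prop) h.cz h.hy s t
  have hlb := Av_hasDerivAt_left (φ := one1) (by fun_prop) h.czb h.hyb s t
  have hil := hl.inv_sq (h.nl s t ht)
  have hilb := hlb.inv_sq (h.nlb s t ht)
  have hz := (h.hz (s + t)).comp_add_const s t
  have hzb := (h.hzb (s + t)).comp_add_const s t
  unfold R1 R1a
  refine (((hz.mul ((hm.mul hil).neg.sub (hmb.mul hilb))).div_const 2).add
    (((hzb.mul (((h.hyb s).mul hm).sub ((h.hy s).mul hmb))).mul
      (hilb.pow 2)).div_const 2)).congr_deriv ?_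
  simp only [R1s, R1sa, Pi.mul_apply, Pi.pow_apply, Pi.sub_apply, Pi.neg_apply]
  push_cast
  ring

theorem dR1t (h : SD y z w yb zb wb) (s t : ℝ) (ht : t ∈ Set.Icc (-π) π) :
    HasDerivAt (fun x => R1 y z yb zb s x) (R1t y z w yb zb wb s t) t := by
  have hm := Av_hasDerivAt_right (φ := omw) (by fun_prop) h.hw h.hz s t
  have hmb := Av_hasDerivAt_right (φ := omw) (by fun_prop) h.hwb h.hzb s t
  have hl : HasDerivAt (fun x => Av one1 y s x) (Av idw z s t) t := by
    simpa using Av_hasDerivAt_right (φ := one1) (by fun_prop) h.cz h.hy s t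
  have hlb : HasDerivAt (fun x => Av one1 yb s x) (Av idw zb s t) t := by
    simpa using Av_hasDerivAt_right (φ := one1) (by fun_prop) h.czb h.hyb s t
  have hil := hl.inv_sq (h.nl s t ht)
  have hilb := hlb.inv_sq (h.nlb s t ht)
  have hz := (h.hz (s + t)).comp_const_add s t
  have hzb := (h.hzb (s + t)).comp_const_add s t
  unfold R1 R1a
  refine (((hz.mul ((hm.mul hil).neg.sub (hmb.mul hilb))).div_const 2).add
    (((hzb.mul ((hm.const_mul (yb s)).sub (hmb.const_mul (y s)))).mul
      (hilb.pow 2)).div_const 2)).congr_deriv ?_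
  simp only [R1t, R1ta, Pi.mul_apply, Pi.pow_apply, Pi.sub_apply, Pi.neg_apply]
  push_cast
  ring

theorem id1 (h : SD y z w yb zb wb) (s t : ℝ) (ht : t ∈ Set.Icc (-π) π) (h0 : t ≠ 0) :
    F0s y z w yb zb wb s t = A0t y z w yb zb wb s t + R1 y z yb zb s t := by
  have e1 := Av_omw h.cz s t
  have e2 := Av_omw h.czb s t
  have e3 := Av_one h.cz h.hy s t
  have e4 := Av_one h.czb h.hyb s t
  have e5 := Av_id h.cz h.hy s t
  have e6 := Av_id h.czb h.hyb s t
  refine identity1 _ _ _ _ _ _ _ _ _ _ _ _ _ _ _ _ _ (by exact_mod_cast h0) (h.nl s t ht)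
    (h.nlb s t ht) e5 e6 e3 e4 (Av_id h.hw h.hz s t) (Av_id h.hwb h.hzb s t) ?_ ?_
  · rw [e1, mul_sub, e3, e5]; ring
  · rw [e2, mul_sub, e4, e6]; ring

theorem id2 (h : SD y z w yb zb wb) (s t : ℝ) (ht : t ∈ Set.Icc (-π) π) (h0 : t ≠ 0) :
    R1s y z w yb zb wb s t - R1t y z w yb zb wb s t = R2 y z yb zb s t := by
  have e1 := Av_omw h.cz s t
  have e2 := Av_omw h.czb s t
  have e3 := Av_one h.cz h.hy s t
  have e4 := Av_one h.czb h.hyb s t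
  have e5 := Av_id h.cz h.hy s t
  have e6 := Av_id h.czb h.hyb s t
  refine identity2 _ _ _ _ _ _ _ _ _ _ _ _ _ _ _ _ _ _ _ _ _ (by exact_mod_cast h0) (h.nl s t ht)
    (h.nlb s t ht) ?_ ?_ ?_ ?_ ?_ ?_ (Av_quw h.hw h.hz s t) (Av_quw h.hwb h.hzb s t)
  · rw [e1]; ring
  · rw [e2]; ring
  · rw [e1, mul_sub, e3, e5]; ring
  · rw [e2, mul_sub, e4, e6]; ring
  · rw [Av_omw h.hw, mul_sub, Av_one h.hw h.hz, Av_id h.hw h.hz]; ring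
  · rw [Av_omw h.hwb, mul_sub, Av_one h.hwb h.hzb, Av_id h.hwb h.hzb]; ring

theorem secc {H : ℝ → ℝ → ℂ} (hH : ContinuousOn (Function.uncurry H) DD) (x : ℝ) :
    ContinuousOn (H x) (Set.Icc (-π) π) := by
  have : ContinuousOn (fun t => Function.uncurry H (x, t)) (Set.Icc (-π) π) :=
    hH.comp (by fun_prop) (fun t ht => ⟨Set.mem_univ _, ht⟩)
  exact this

theorem secint {H : ℝ → ℝ → ℂ} (hH : ContinuousOn (Function.uncurry H) DD) (x : ℝ) :
    IntervalIntegrable (H x) volume (-π) π := by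
  apply ContinuousOn.intervalIntegrable
  rw [Set.uIcc_of_le (by linarith [pi_pos])]
  exact secc hH x

theorem pi_mem : π ∈ Set.Icc (-π) π := ⟨by linarith [pi_pos], le_rfl⟩
theorem npi_mem : -π ∈ Set.Icc (-π) π := ⟨le_rfl, by linarith [pi_pos]⟩

theorem bdryA (h : SD y z w yb zb wb) (s : ℝ) :
    ∫ t in (-π)..π, A0t y z w yb zb wb s t = (2 / π : ℂ) * (y (s + π) - y s) := by
  rw [intervalIntegral.integral_eq_sub_of_hasDerivAt (f := A0 y z yb zb s)
    (fun t ht => h.dA0 s t (by rwa [Set.uIcc_of_le (by linarith [pi_pos])] at ht))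
    (secint h.cA0t s)]
  have hpi : (π : ℂ) ≠ 0 := by exact_mod_cast pi_ne_zero
  have e1 := Av_one h.cz h.hy s π
  have e2 := Av_one h.czb h.hyb s π
  have e3 := Av_one h.cz h.hy s (-π)
  have e4 := Av_one h.czb h.hyb s (-π)
  have p1 : y (s + -π) = y (s + π) := by rw [← h.py]; congr 1; ring
  have p2 : yb (s + -π) = yb (s + π) := by rw [← h.pyb]; congr 1; ring
  have f3 : Av one1 z s (-π) = - Av one1 z s π := by
    apply mul_left_cancel₀ hpi
    rw [p1, ← e1] at e3
    push_cast at e3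
    linear_combination -e3
  have f4 : Av one1 zb s (-π) = - Av one1 zb s π := by
    apply mul_left_cancel₀ hpi
    rw [p2, ← e2] at e4
    push_cast at e4
    linear_combination -e4
  simp only [A0, A0a, p1, p2, f3, f4, h.pl, h.plb, inv_neg]
  rw [← e1]
  field_simp
  ring

theorem bdryR (h : SD y z w yb zb wb) (s : ℝ) :
    ∫ t in (-π)..π, R1t y z w yb zb wb s t = - (2 / π : ℂ) * z (s + π) := by
  rw [intervalIntegral.integral_eq_sub_of_hasDerivAt (f := R1 y z yb zb s)
    (fun t ht => h.dR1t s t (by rwa [Set.uIcc_of_le (by linarith [pi_pos])] at ht))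
    (secint h.cR1t s)]
  have hpi : (π : ℂ) ≠ 0 := by exact_mod_cast pi_ne_zero
  have p1 : z (s + -π) = z (s + π) := by rw [← h.pz]; congr 1; ring
  have p2 : zb (s + -π) = zb (s + π) := by rw [← h.pzb]; congr 1; ring
  have em : ∀ t : ℝ, (t : ℂ) * Av omw z s t = Av one1 y s t - y s := by
    intro t
    rw [Av_omw h.cz, mul_sub, Av_one h.cz h.hy, Av_id h.cz h.hy]; ring
  have emb : ∀ t : ℝ, (t : ℂ) * Av omw zb s t = Av one1 yb s t - yb s := by
    intro t
    rw [Av_omw h.czb, mul_sub, Av_one h.czb h.hyb, Av_id h.czb h.hyb]; ring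
  have f1 : Av omw z s π = (Av one1 y s π - y s) / π := by
    rw [← em]; field_simp
  have f2 : Av omw zb s π = (Av one1 yb s π - yb s) / π := by
    rw [← emb]; field_simp
  have f3 : Av omw z s (-π) = (Av one1 y s π + y s) / π := by
    have := em (-π)
    rw [h.pl] at this
    push_cast at this
    field_simp
    linear_combination -this
  have f4 : Av omw zb s (-π) = (Av one1 yb s π + yb s) / π := by
    have := emb (-π)
    rw [h.plb] at this
    push_cast at this
    field_simp
    linear_combination -this
  have n1 := h.nl s π pi_mem
  have n2 := h.nlb s π pi_mem
  simp only [R1, R1a, p1, p2, f1, f2, f3, f4, h.pl, h.plb, inv_neg]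
  field_simp
  ring

theorem ae_congr_int {f g : ℝ → ℂ} (hfg : ∀ t ∈ Set.Icc (-π) π, t ≠ 0 → f t = g t) :
    ∫ t in (-π)..π, f t = ∫ t in (-π)..π, g t := by
  apply intervalIntegral.integral_congr_ae
  have h0 : ∀ᵐ t : ℝ, t ≠ 0 := by simp [ae_iff]
  filter_upwards [h0] with t h0 ht
  rw [Set.uIoc_of_le (by linarith [pi_pos])] at ht
  exact hfg t (Set.Ioc_subset_Icc_self ht) h0

theorem deriv1 (h : SD y z w yb zb wb) (s : ℝ) :
    HasDerivAt (fun s => ∫ t in (-π)..π, F0 y z yb zb s t)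
      ((2 / π : ℂ) * (y (s + π) - y s) + ∫ t in (-π)..π, R1 y z yb zb s t) s := by
  refine (paramDeriv (by linarith [pi_pos]) h.cF0 h.cF0s
    (fun s t ht _ => h.dF0 s t ht) s).congr_deriv ?_
  rw [ae_congr_int (fun t ht h0 => h.id1 s t ht h0),
    intervalIntegral.integral_add (secint h.cA0t s) (secint h.cR1 s), h.bdryA]

theorem deriv2 (h : SD y z w yb zb wb) (s : ℝ) :
    HasDerivAt (fun s => (2 / π : ℂ) * (y (s + π) - y s) + ∫ t in (-π)..π, R1 y z yb zb s t)
      (-(2 / π : ℂ) * z s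
        + ∫ t in (-π)..π, (R1s y z w yb zb wb s t - R1t y z w yb zb wb s t)) s := by
  have h1 := paramDeriv (by linarith [pi_pos]) h.cR1 h.cR1s
    (fun s t ht _ => h.dR1s s t ht) s
  have h2 := (((h.hy (s + π)).comp_add_const s π).sub (h.hy s)).const_mul (2 / π : ℂ)
  refine (h2.add h1).congr_deriv ?_
  rw [intervalIntegral.integral_sub (secint h.cR1s s) (secint h.cR1t s), h.bdryR]
  ring

theorem cont2 (h : SD y z w yb zb wb) : Continuous (fun s => -(2 / π : ℂ) * z s
        + ∫ t in (-π)..π, (R1s y z w yb zb wb s t - R1t y z w yb zb wb s t)) := by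
  have h1 := param_continuous (F := fun s t => R1s y z w yb zb wb s t - R1t y z w yb zb wb s t)
    (by linarith [pi_pos]) (h.cR1s.sub h.cR1t)
  exact (continuous_const.mul h.cz).add h1

end SD


/-! ### Scalar estimates -/

abbrev JJ : Set ℝ := Set.Ioc (-π) π

lemma lint_abs (F : ℝ → ℝ≥0∞) : ∫⁻ h : ℝ, F |h| = 2 * ∫⁻ h in Set.Ioi (0:ℝ), F h := by
  rw [← lintegral_add_compl _ (measurableSet_Ioi (a := (0:ℝ)))]
  have h1 : ∫⁻ h in Set.Ioi (0:ℝ), F |h| = ∫⁻ h in Set.Ioi (0:ℝ), F h := by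
    apply setLIntegral_congr_fun measurableSet_Ioi
    intro x hx
    simp only [abs_of_pos (Set.mem_Ioi.1 hx)]
  have h2 : ∫⁻ h in (Set.Ioi (0:ℝ))ᶜ, F |h| = ∫⁻ h in Set.Ioi (0:ℝ), F h := by
    rw [Set.compl_Ioi, ← h1]
    have e : (Set.Iic (0:ℝ)) = (fun x : ℝ => -x) ⁻¹' (Set.Ici 0) := by ext x; simp
    have e2 := (Measure.measurePreserving_neg (volume : Measure ℝ)).setLIntegral_comp_preimage_emb
      (MeasurableEquiv.neg ℝ).measurableEmbedding (fun x => F |x|) (Set.Ici (0:ℝ))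
    rw [e]
    simp only [abs_neg] at e2
    rw [show (fun x : ℝ => -x) = (Neg.neg : ℝ → ℝ) from rfl, e2]
    exact setLIntegral_congr Ioi_ae_eq_Ici.symm
  rw [h1, h2, two_mul]

lemma ker1 (κ : ℝ) (hκ : 0 ≤ κ) :
    ∫⁻ h : ℝ, ENNReal.ofReal (|h| ^ (-(3/2) : ℝ) * (min 2 (κ * |h|)) ^ 2)
      ≤ ENNReal.ofReal (18 * κ ^ (1/2 : ℝ)) := by
  rcases hκ.eq_or_lt with rfl | hκ
  · simp
  rw [lint_abs (fun h => ENNReal.ofReal (h ^ (-(3/2) : ℝ) * (min 2 (κ * h)) ^ 2))]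
  have hk : 0 < κ⁻¹ := inv_pos.2 hκ
  rw [← Set.Ioc_union_Ioi_eq_Ioi hk.le, lintegral_union measurableSet_Ioi
    (Set.disjoint_left.2 fun x hx hx2 => (not_lt.2 hx.2) hx2)]
  have h1 : ∫⁻ h in Set.Ioc 0 κ⁻¹, ENNReal.ofReal (h ^ (-(3/2) : ℝ) * (min 2 (κ * h)) ^ 2)
      ≤ ENNReal.ofReal (κ ^ (1/2 : ℝ)) := by
    calc _ ≤ ∫⁻ h in Set.Ioc 0 κ⁻¹, ENNReal.ofReal (κ ^ (3/2 : ℝ)) := by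
          apply setLIntegral_mono (by fun_prop)
          intro x hx
          apply ENNReal.ofReal_le_ofReal
          have hx0 : 0 < x := hx.1
          have hkx : κ * x ≤ 1 := by
            have := mul_le_mul_of_nonneg_left hx.2 hκ.le
            rwa [mul_inv_cancel₀ hκ.ne'] at this
          calc x ^ (-(3/2) : ℝ) * (min 2 (κ * x)) ^ 2 ≤ x ^ (-(3/2) : ℝ) * (κ * x) ^ 2 := by
                gcongr; exact min_le_right _ _
            _ = κ ^ (3/2 : ℝ) * (κ * x) ^ (1/2 : ℝ) := by
                rw [Real.mul_rpow hκ.le hx0.le, mul_pow, ← Real.rpow_natCast κ, ← Real.rpow_natCast x]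
                rw [mul_left_comm, ← Real.rpow_add hx0, ← mul_assoc, ← Real.rpow_add hκ]
                norm_num
            _ ≤ κ ^ (3/2 : ℝ) * 1 := by
                gcongr
                exact Real.rpow_le_one (by positivity) hkx (by norm_num)
            _ = _ := mul_one _
      _ = ENNReal.ofReal (κ ^ (1/2 : ℝ)) := by
          rw [setLIntegral_const, Real.volume_Ioc, ← ENNReal.ofReal_mul (by positivity), sub_zero,
            ← Real.rpow_neg_one, ← Real.rpow_add hκ]
          norm_num
  have h2 : ∫⁻ h in Set.Ioi κ⁻¹, ENNReal.ofReal (h ^ (-(3/2) : ℝ) * (min 2 (κ * h)) ^ 2)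
      ≤ ENNReal.ofReal (8 * κ ^ (1/2 : ℝ)) := by
    calc _ ≤ ∫⁻ h in Set.Ioi κ⁻¹, ENNReal.ofReal (h ^ (-(3/2) : ℝ) * 4) := by
          apply setLIntegral_mono (by fun_prop)
          intro x hx
          apply ENNReal.ofReal_le_ofReal
          have hx0 : 0 < x := hk.trans hx
          have : (min 2 (κ * x)) ^ 2 ≤ 2 ^ 2 := by
            gcongr
            exact min_le_left _ _
          have h3 : (0:ℝ) ≤ x ^ (-(3/2) : ℝ) := by positivity
          nlinarith
      _ = ENNReal.ofReal (∫ h in Set.Ioi κ⁻¹, h ^ (-(3/2) : ℝ) * 4) := by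
          rw [ofReal_integral_eq_lintegral_ofReal]
          · exact (integrableOn_Ioi_rpow_of_lt (by norm_num) hk).mul_const 4
          · filter_upwards [ae_restrict_mem measurableSet_Ioi] with x hx
            have hx0 : 0 < x := hk.trans hx
            simp only [Pi.zero_apply]; positivity
      _ ≤ _ := by
          apply ENNReal.ofReal_le_ofReal
          rw [integral_mul_const, integral_Ioi_rpow_of_lt (by norm_num) hk, Real.inv_rpow hκ.le,
            ← Real.rpow_neg hκ.le]
          norm_num
          linarith
  calc _ ≤ 2 * (ENNReal.ofReal (κ ^ (1/2 : ℝ)) + ENNReal.ofReal (8 * κ ^ (1/2 : ℝ))) := by gcongr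
    _ = _ := by
      rw [← ENNReal.ofReal_add (by positivity) (by positivity),
        show (2 : ℝ≥0∞) = ENNReal.ofReal 2 by simp, ← ENNReal.ofReal_mul (by positivity)]
      congr 1; ring

lemma pow_int (a : ℝ) (ha : -1 < a) : ∫⁻ t in JJ, ENNReal.ofReal (|t| ^ a) ≠ ⊤ := by
  have h1 : ∫⁻ t in JJ, ENNReal.ofReal (|t| ^ a)
      ≤ ∫⁻ t : ℝ, (Set.Ioc 0 π).indicator (fun t => ENNReal.ofReal (t ^ a)) |t|
        := by
    rw [← lintegral_indicator measurableSet_Ioc]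
    apply lintegral_mono_ae
    have h0 : ∀ᵐ t : ℝ, t ≠ 0 := by simp [ae_iff]
    filter_upwards [h0] with t h0
    by_cases ht : t ∈ JJ
    · rw [Set.indicator_of_mem ht, Set.indicator_of_mem]
      exact ⟨abs_pos.2 h0, abs_le.2 ⟨ht.1.le, ht.2⟩⟩
    · rw [Set.indicator_of_notMem ht]; exact zero_le
  refine ne_top_of_le_ne_top ?_ h1
  rw [lint_abs, setLIntegral_indicator measurableSet_Ioc]
  apply ENNReal.mul_ne_top (by simp)
  rw [Set.inter_eq_left.2 (fun x hx => hx.1)]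
  have h2 : IntegrableOn (fun x : ℝ => x ^ a) (Set.Ioc 0 π) := by
    have := intervalIntegral.intervalIntegrable_rpow' (a := 0) (b := π) ha
    rwa [intervalIntegrable_iff_integrableOn_Ioc_of_le pi_pos.le] at this
  exact (h2.lintegral_lt_top).ne

lemma parsevalE (N : ℕ) (S : Finset ℤ) (c : ℤ → ℂ) :
    ∫⁻ s in Set.Ioc (-(N * π)) (N * π), ‖TP S c s‖ₑ ^ 2
      = ENNReal.ofReal (2 * (N * π) * ∑ k ∈ S, ‖c k‖ ^ 2) := by
  rw [← TP_parseval, intervalIntegral.integral_of_le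
    (by have : 0 ≤ N * π := by positivity
        linarith),
    ofReal_integral_eq_lintegral_ofReal]
  · apply lintegral_congr
    intro s
    rw [ENNReal.ofReal_pow (norm_nonneg _), ofReal_norm]
  · apply Continuous.integrableOn_Ioc
    have := TP_continuous S c
    fun_prop
  · exact Filter.Eventually.of_forall fun s => by positivity

lemma parsevalJ (S : Finset ℤ) (c : ℤ → ℂ) :
    ∫⁻ s in JJ, ‖TP S c s‖ₑ ^ 2 = ENNReal.ofReal (2 * π * ∑ k ∈ S, ‖c k‖ ^ 2) := by
  simpa using parsevalE 1 S c

/-- multiplier lemma -/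
lemma multL (S : Finset ℤ) (d : ℤ → ℂ) (b : ℝ → ℤ → ℂ)
    (hb : ∀ h k, ‖b h k‖ ≤ 2 * ‖d k‖ * min 2 (|(k:ℝ)| * |h|)) :
    ∫⁻ h : ℝ, ENNReal.ofReal (|h| ^ (-(3/2) : ℝ)) * ∫⁻ s in JJ, ‖TP S (b h) s‖ₑ ^ 2
      ≤ ENNReal.ofReal (144 * π * ∑ k ∈ S, |(k:ℝ)| ^ (1/2:ℝ) * ‖d k‖ ^ 2) := by
  have h1 : ∀ h : ℝ, ENNReal.ofReal (|h| ^ (-(3/2) : ℝ)) * ∫⁻ s in JJ, ‖TP S (b h) s‖ₑ ^ 2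
      ≤ ∑ k ∈ S, ENNReal.ofReal (8 * π * ‖d k‖ ^ 2) *
        ENNReal.ofReal (|h| ^ (-(3/2) : ℝ) * (min 2 (|(k:ℝ)| * |h|)) ^ 2) := by
    intro h
    rw [parsevalJ, ← ENNReal.ofReal_mul (by positivity)]
    simp_rw [← ENNReal.ofReal_mul (show 0 ≤ 8 * π * ‖d _‖ ^ 2 by positivity)]
    rw [← ENNReal.ofReal_sum_of_nonneg (fun k _ => by positivity)]
    apply ENNReal.ofReal_le_ofReal
    rw [Finset.mul_sum, Finset.mul_sum]
    apply Finset.sum_le_sum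
    intro k _
    have := hb h k
    calc _ ≤ |h| ^ (-(3/2) : ℝ) * (2 * π * (2 * ‖d k‖ * min 2 (|(k:ℝ)| * |h|)) ^ 2) := by gcongr
      _ = _ := by ring
  refine (lintegral_mono h1).trans ?_
  rw [lintegral_finsetSum _ (fun k _ => by fun_prop)]
  rw [Finset.mul_sum, ENNReal.ofReal_sum_of_nonneg (fun k _ => by positivity)]
  apply Finset.sum_le_sum
  intro k _
  rw [lintegral_const_mul _ (by fun_prop)]
  calc _ ≤ ENNReal.ofReal (8 * π * ‖d k‖ ^ 2) * ENNReal.ofReal (18 * |(k:ℝ)| ^ (1/2 : ℝ)) := by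
        gcongr; exact ker1 _ (abs_nonneg _)
    _ = _ := by
        rw [← ENNReal.ofReal_mul (by positivity)]; congr 1; ring

lemma CSl {α : Type*} [MeasurableSpace α] {μ : Measure α} {f g : α → ℝ≥0∞}
    (hf : AEMeasurable f μ) (hg : AEMeasurable g μ) :
    (∫⁻ x, f x * g x ∂μ) ^ 2 ≤ (∫⁻ x, f x ^ 2 ∂μ) * ∫⁻ x, g x ^ 2 ∂μ := by
  have := ENNReal.lintegral_mul_le_Lp_mul_Lq μ Real.HolderConjugate.two_two hf hg
  simp only [Pi.mul_apply, ENNReal.rpow_two] at this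
  calc _ ≤ _ := pow_le_pow_left' this 2
    _ = _ := by
      rw [mul_pow, ← ENNReal.rpow_two, ← ENNReal.rpow_two, ← ENNReal.rpow_mul, ← ENNReal.rpow_mul]
      norm_num


/-! ### Hardy inequality -/

lemma enorm_sq_le (a b : ℂ) : ‖a‖ₑ ^ 2 ≤ 2 * ‖b‖ₑ ^ 2 + 2 * ‖b - a‖ₑ ^ 2 := by
  rw [← ofReal_norm, ← ofReal_norm, ← ofReal_norm, ← ENNReal.ofReal_pow (norm_nonneg _),
    ← ENNReal.ofReal_pow (norm_nonneg _), ← ENNReal.ofReal_pow (norm_nonneg _),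
    show (2 : ℝ≥0∞) = ENNReal.ofReal 2 by simp, ← ENNReal.ofReal_mul (by positivity),
    ← ENNReal.ofReal_mul (by positivity), ← ENNReal.ofReal_add (by positivity) (by positivity)]
  apply ENNReal.ofReal_le_ofReal
  have h : ‖a‖ ≤ ‖b‖ + ‖b - a‖ := by
    calc ‖a‖ = ‖b - (b - a)‖ := by congr 1; ring
      _ ≤ _ := norm_sub_le _ _
  nlinarith [sq_nonneg (‖b‖ - ‖b - a‖), norm_nonneg a, norm_nonneg b, norm_nonneg (b - a)]

def HKs : Set (ℝ × ℝ) := {p | 80 * |p.1| ≤ p.2 ∧ p.2 ≤ 81 * |p.1|}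

lemma HKs_meas : MeasurableSet HKs := by
  have h1 : MeasurableSet {p : ℝ × ℝ | 80 * |p.1| ≤ p.2} :=
    measurableSet_le (by fun_prop) (by fun_prop)
  have h2 : MeasurableSet {p : ℝ × ℝ | p.2 ≤ 81 * |p.1|} :=
    measurableSet_le (by fun_prop) (by fun_prop)
  exact h1.inter h2

def HK (t σ : ℝ) : ℝ≥0∞ :=
  ENNReal.ofReal (|t| ^ (-(3/2) : ℝ)) * HKs.indicator (fun _ => 1) (t, σ)

lemma HK_meas : Measurable (fun p : ℝ × ℝ => HK p.1 p.2) := by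
  unfold HK
  apply Measurable.mul (by fun_prop)
  exact measurable_const.indicator HKs_meas

lemma HK_int (t : ℝ) (ht : t ≠ 0) : ∫⁻ σ, HK t σ = ENNReal.ofReal (|t| ^ (-(1/2) : ℝ)) := by
  unfold HK
  have h0 : 0 < |t| := abs_pos.2 ht
  rw [lintegral_const_mul' _ _ (by simp)]
  have : ∀ σ, HKs.indicator (fun _ => (1:ℝ≥0∞)) (t, σ)
      = (Set.Icc (80 * |t|) (81 * |t|)).indicator (fun _ => 1) σ := by
    intro σ
    by_cases h : (t, σ) ∈ HKs
    · rw [Set.indicator_of_mem h, Set.indicator_of_mem (show σ ∈ Set.Icc _ _ from h)]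
    · rw [Set.indicator_of_notMem h, Set.indicator_of_notMem (show σ ∉ Set.Icc _ _ from h)]
  simp_rw [this]
  rw [lintegral_indicator measurableSet_Icc, setLIntegral_const, Real.volume_Icc, one_mul,
    ← ENNReal.ofReal_mul (by positivity)]
  congr 1
  rw [show 81 * |t| - 80 * |t| = |t| ^ (1:ℝ) by rw [Real.rpow_one]; ring, ← Real.rpow_add h0]
  norm_num

lemma HK_int' (σ : ℝ) : ∫⁻ t in JJ, HK t σ ≤ (Set.Ioc 0 (81 * π)).indicator
    (fun σ => ENNReal.ofReal (1/4 * |σ| ^ (-(1/2) : ℝ))) σ := by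
  by_cases hσ : σ ∈ Set.Ioc 0 (81 * π)
  · rw [Set.indicator_of_mem hσ]
    have h0 : 0 < σ := hσ.1
    calc ∫⁻ t in JJ, HK t σ ≤ ∫⁻ t, HK t σ := setLIntegral_le_lintegral _ _
      _ ≤ ∫⁻ t : ℝ, (Set.Icc (σ / 81) (σ / 80)).indicator
            (fun _ => ENNReal.ofReal ((σ / 81) ^ (-(3/2) : ℝ))) |t| := by
          apply lintegral_mono
          intro t
          simp only [HK]
          by_cases h : (t, σ) ∈ HKs
          · have h' : |t| ∈ Set.Icc (σ / 81) (σ / 80) := by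
              obtain ⟨h1, h2⟩ := h
              simp only at h1 h2
              constructor <;> linarith
            rw [Set.indicator_of_mem h, Set.indicator_of_mem h', mul_one]
            apply ENNReal.ofReal_le_ofReal
            exact Real.rpow_le_rpow_of_nonpos (by positivity) h'.1 (by norm_num)
          · rw [Set.indicator_of_notMem h]; simp
      _ = 2 * (ENNReal.ofReal ((σ / 81) ^ (-(3/2) : ℝ)) * ENNReal.ofReal (σ / 80 - σ / 81)) := by
          rw [lint_abs, setLIntegral_indicator measurableSet_Icc, Set.inter_eq_left.2,
            setLIntegral_const, Real.volume_Icc]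
          intro x hx
          exact lt_of_lt_of_le (by positivity) hx.1
      _ ≤ _ := by
          rw [show (2 : ℝ≥0∞) = ENNReal.ofReal 2 by simp, ← ENNReal.ofReal_mul (by positivity),
            ← ENNReal.ofReal_mul (by positivity)]
          apply ENNReal.ofReal_le_ofReal
          rw [abs_of_pos h0, Real.div_rpow h0.le (by norm_num)]
          have e1 : (81 : ℝ) ^ (-(3/2) : ℝ) = 1 / 729 := by
            rw [show (81:ℝ) = 9 ^ (2:ℝ) by norm_num, ← Real.rpow_mul (by norm_num)]
            norm_num
          have e2 : σ ^ (-(1/2) : ℝ) = σ ^ (-(3/2) : ℝ) * σ := by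
            nth_rw 3 [← Real.rpow_one σ]
            rw [← Real.rpow_add h0]; norm_num
          rw [e1, e2]
          have : 0 < σ ^ (-(3/2) : ℝ) * σ := by positivity
          calc _ = σ ^ (-(3/2) : ℝ) * σ * (9/40) := by ring
            _ ≤ _ := by linarith
  · rw [Set.indicator_of_notMem hσ]
    have : ∀ᵐ t ∂(volume.restrict JJ), HK t σ = 0 := by
      have h0 : ∀ᵐ t : ℝ, t ≠ 0 := by simp [ae_iff]
      filter_upwards [ae_restrict_mem measurableSet_Ioc, ae_restrict_of_ae h0] with t ht h0
      unfold HK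
      rw [Set.indicator_of_notMem, mul_zero]
      rintro ⟨h1, h2⟩
      apply hσ
      simp only at h1 h2
      have h3 : |t| ≤ π := abs_le.2 ⟨ht.1.le, ht.2⟩
      have h4 : 0 < |t| := abs_pos.2 h0
      constructor <;> linarith
    rw [lintegral_congr_ae this]; simp

lemma hardy (S : Finset ℤ) (d : ℤ → ℂ) (hd : d 0 = 0) :
    ∫⁻ t in JJ, ENNReal.ofReal (|t| ^ (-(1/2) : ℝ)) * ‖TP S d t‖ₑ ^ 2
      ≤ ENNReal.ofReal (600000 * π * ∑ k ∈ S, |(k:ℝ)| ^ (1/2:ℝ) * ‖d k‖ ^ 2) := by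
  set I := ∫⁻ t in JJ, ENNReal.ofReal (|t| ^ (-(1/2) : ℝ)) * ‖TP S d t‖ₑ ^ 2 with hI
  set B := ∑ k ∈ S, |(k:ℝ)| ^ (1/2:ℝ) * ‖d k‖ ^ 2 with hB
  have hB0 : 0 ≤ B := Finset.sum_nonneg fun k _ => by positivity
  have hc : Continuous (TP S d) := TP_continuous S d
  have hcm : Measurable (TP S d) := hc.measurable
  have hl2 : ∑ k ∈ S, ‖d k‖ ^ 2 ≤ B := by
    apply Finset.sum_le_sum
    intro k _
    rcases eq_or_ne k 0 with rfl | hk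
    · simp [hd]
    · have : (1:ℝ) ≤ |(k:ℝ)| ^ (1/2:ℝ) := by
        apply Real.one_le_rpow _ (by norm_num)
        exact_mod_cast Int.one_le_abs hk
      nlinarith [sq_nonneg ‖d k‖]
  have hfin : I ≠ ⊤ := by
    set K := ∑ k ∈ S, ‖d k‖
    have hK : ∀ t, ‖TP S d t‖ ≤ K := fun t => by
      unfold TP
      refine (norm_sum_le _ _).trans (Finset.sum_le_sum fun k _ => ?_)
      rw [norm_mul, norm_exp_int, mul_one]
    have : I ≤ ∫⁻ t in JJ, ENNReal.ofReal (|t| ^ (-(1/2) : ℝ)) * ENNReal.ofReal K ^ 2 := by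
      apply lintegral_mono
      intro t
      have := ENNReal.ofReal_le_ofReal (hK t)
      rw [ofReal_norm] at this
      simp only
      gcongr
    refine ne_top_of_le_ne_top ?_ this
    rw [lintegral_mul_const _ (by fun_prop)]
    exact ENNReal.mul_ne_top (pow_int _ (by norm_num)) (by simp)
  have step1 : I ≤ ∫⁻ t in JJ, ∫⁻ σ, HK t σ * (2 * ‖TP S d σ‖ₑ ^ 2)
      + HK t σ * (2 * ‖TP S d σ - TP S d t‖ₑ ^ 2) := by
    apply lintegral_mono_ae
    have h0 : ∀ᵐ t : ℝ, t ≠ 0 := by simp [ae_iff]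
    filter_upwards [ae_restrict_of_ae h0] with t h0
    rw [← HK_int t h0, ← lintegral_mul_const' _ _ (by simp)]
    apply lintegral_mono
    intro σ
    simp only
    rw [← mul_add]
    gcongr
    exact enorm_sq_le _ _
  have hHm := HK_meas
  have step2 : (∫⁻ t in JJ, ∫⁻ σ, HK t σ * (2 * ‖TP S d σ‖ₑ ^ 2)
      + HK t σ * (2 * ‖TP S d σ - TP S d t‖ₑ ^ 2)) =
      (∫⁻ t in JJ, ∫⁻ σ, HK t σ * (2 * ‖TP S d σ‖ₑ ^ 2))
      + ∫⁻ t in JJ, ∫⁻ σ, HK t σ * (2 * ‖TP S d σ - TP S d t‖ₑ ^ 2) := by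
    rw [← lintegral_add_left]
    · apply lintegral_congr
      intro t
      rw [lintegral_add_left]
      have := HK_meas.comp (measurable_const.prodMk measurable_id : Measurable fun σ : ℝ => (t, σ))
      exact Measurable.mul this (by fun_prop)
    · apply Measurable.lintegral_prod_right (f := fun t σ => HK t σ * (2 * ‖TP S d σ‖ₑ ^ 2))
      simp only [Function.uncurry_def]; fun_prop
  have T1 : (∫⁻ t in JJ, ∫⁻ σ, HK t σ * (2 * ‖TP S d σ‖ₑ ^ 2))
      ≤ I / 2 + ENNReal.ofReal (81 * π * B) := by
    rw [lintegral_lintegral_swap (f := fun t σ => HK t σ * (2 * ‖TP S d σ‖ₑ ^ 2))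
      (by apply Measurable.aemeasurable; simp only [Function.uncurry_def]; fun_prop)]
    have a1 : ∀ σ, ∫⁻ t in JJ, HK t σ * (2 * ‖TP S d σ‖ₑ ^ 2) ≤
        JJ.indicator (fun σ => (ENNReal.ofReal (|σ| ^ (-(1/2) : ℝ)) * ‖TP S d σ‖ₑ ^ 2) * 2⁻¹) σ
        + (Set.Ioc (-((81:ℕ) * π)) ((81:ℕ) * π)).indicator (fun σ => ‖TP S d σ‖ₑ ^ 2 * 2⁻¹) σ := by
      intro σ
      rw [lintegral_mul_const' _ _ (by finiteness)]
      have h4 : ENNReal.ofReal (1/4 * |σ| ^ (-(1/2) : ℝ)) * 2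
          = ENNReal.ofReal (|σ| ^ (-(1/2) : ℝ)) * 2⁻¹ := by
        rw [show (2 : ℝ≥0∞) = ENNReal.ofReal 2 by simp, ← ENNReal.ofReal_inv_of_pos (by norm_num),
          ← ENNReal.ofReal_mul (by positivity), ← ENNReal.ofReal_mul (by positivity)]
        congr 1; ring
      calc _ ≤ _ := mul_le_mul_left (HK_int' σ) _
        _ ≤ _ := by
          by_cases h : σ ∈ Set.Ioc 0 (81 * π)
          · rw [Set.indicator_of_mem h, ← mul_assoc, h4]
            by_cases h2 : σ ≤ π
            · rw [Set.indicator_of_mem (show σ ∈ JJ from ⟨by linarith [h.1, pi_pos], h2⟩)]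
              refine le_trans (le_of_eq ?_) le_self_add
              ring
            · rw [Set.indicator_of_mem (s := Set.Ioc (-((81:ℕ) * π)) ((81:ℕ) * π))]
              · refine le_trans ?_ le_add_self
                have : ENNReal.ofReal (|σ| ^ (-(1/2) : ℝ)) ≤ 1 := by
                  rw [ENNReal.ofReal_le_one]
                  apply Real.rpow_le_one_of_one_le_of_nonpos
                  · rw [abs_of_pos h.1]; linarith [Real.pi_gt_three]
                  · norm_num
                calc _ ≤ 1 * 2⁻¹ * ‖TP S d σ‖ₑ ^ 2 := by gcongr
                  _ = _ := by ring
              · constructor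
                · push_cast; linarith [h.1, pi_pos]
                · push_cast; exact h.2
          · rw [Set.indicator_of_notMem h, zero_mul]; exact zero_le
    refine (lintegral_mono a1).trans ?_
    rw [lintegral_add_right _ (Measurable.indicator (by fun_prop) measurableSet_Ioc),
      lintegral_indicator measurableSet_Ioc, lintegral_indicator measurableSet_Ioc,
      lintegral_mul_const _ (by fun_prop), lintegral_mul_const _ (by fun_prop), parsevalE,
      ← div_eq_mul_inv]
    gcongr
    rw [show (2 : ℝ≥0∞) = ENNReal.ofReal 2 by simp, ← ENNReal.ofReal_inv_of_pos (by norm_num),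
          ← ENNReal.ofReal_mul (by positivity)]
    apply ENNReal.ofReal_le_ofReal
    push_cast
    nlinarith [pi_pos]
  have T2 : (∫⁻ t in JJ, ∫⁻ σ, HK t σ * (2 * ‖TP S d σ - TP S d t‖ₑ ^ 2))
      ≤ ENNReal.ofReal (288000 * π * B) := by
    have b1 : ∀ t σ, HK t σ ≤ ENNReal.ofReal 1000 * ENNReal.ofReal (|σ - t| ^ (-(3/2) : ℝ)) := by
      intro t σ
      unfold HK
      by_cases h : (t, σ) ∈ HKs
      · rw [Set.indicator_of_mem h, mul_one, ← ENNReal.ofReal_mul (by positivity)]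
        apply ENNReal.ofReal_le_ofReal
        obtain ⟨h1, h2⟩ := h
        simp only at h1 h2
        rcases eq_or_ne t 0 with rfl | ht
        · rw [abs_zero, Real.zero_rpow (by norm_num)]; positivity
        have h4 : 0 < |t| := abs_pos.2 ht
        have h5 : |σ - t| ≤ 82 * |t| := by
          rw [abs_le]; constructor <;> linarith [le_abs_self t, neg_abs_le t]
        have h6 : 0 < |σ - t| := by
          rw [abs_pos]; intro h
          have : σ = t := by linarith
          linarith [le_abs_self t]
        have h7 : (82 * |t|) ^ (-(3/2) : ℝ) ≤ |σ - t| ^ (-(3/2) : ℝ) :=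
          Real.rpow_le_rpow_of_nonpos h6 h5 (by norm_num)
        have h8 : (1:ℝ) ≤ 1000 * 82 ^ (-(3/2) : ℝ) := by
          have : ((100:ℝ)) ^ (-(3/2) : ℝ) ≤ 82 ^ (-(3/2) : ℝ) :=
            Real.rpow_le_rpow_of_nonpos (by norm_num) (by norm_num) (by norm_num)
          have e1 : (100 : ℝ) ^ (-(3/2) : ℝ) = 1 / 1000 := by
            rw [show (100:ℝ) = 10 ^ (2:ℝ) by norm_num, ← Real.rpow_mul (by norm_num)]
            norm_num
          linarith
        calc |t| ^ (-(3/2) : ℝ) ≤ (1000 * 82 ^ (-(3/2) : ℝ)) * |t| ^ (-(3/2) : ℝ) :=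
              le_mul_of_one_le_left (by positivity) h8
          _ = 1000 * (82 * |t|) ^ (-(3/2) : ℝ) := by
              rw [Real.mul_rpow (by norm_num) h4.le]; ring
          _ ≤ _ := by gcongr
      · rw [Set.indicator_of_notMem h]; simp
    calc _ ≤ ∫⁻ t in JJ, ∫⁻ σ, (ENNReal.ofReal 1000 * ENNReal.ofReal (|σ - t| ^ (-(3/2) : ℝ)))
            * (2 * ‖TP S d σ - TP S d t‖ₑ ^ 2) := by
          gcongr with t σ; exact b1 t σ
      _ = ∫⁻ t in JJ, ∫⁻ h, (ENNReal.ofReal 1000 * ENNReal.ofReal (|h| ^ (-(3/2) : ℝ)))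
            * (2 * ‖TP S d (t + h) - TP S d t‖ₑ ^ 2) := by
          apply lintegral_congr
          intro t
          rw [← lintegral_add_left_eq_self _ t]
          simp only [add_sub_cancel_left]
      _ = ∫⁻ h, ∫⁻ t in JJ, (ENNReal.ofReal 1000 * ENNReal.ofReal (|h| ^ (-(3/2) : ℝ)))
            * (2 * ‖TP S d (t + h) - TP S d t‖ₑ ^ 2) := by
          rw [lintegral_lintegral_swap]
          apply Measurable.aemeasurable; simp only [Function.uncurry_def]; fun_prop
      _ = ENNReal.ofReal 2000 * ∫⁻ h, ENNReal.ofReal (|h| ^ (-(3/2) : ℝ)) *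
            ∫⁻ t in JJ, ‖TP S (fun k => d k * Complex.exp (Complex.I * (k : ℂ) * (h : ℂ)) - d k) t‖ₑ ^ 2 := by
          rw [← lintegral_const_mul' _ _ (by simp)]
          apply lintegral_congr
          intro h
          rw [lintegral_const_mul' _ _ (by finiteness), lintegral_const_mul' _ _ (by simp)]
          simp only [TP_shift, TP_sub]
          rw [show (2 : ℝ≥0∞) = ENNReal.ofReal 2 by simp,
            show (2000 : ℝ) = 1000 * 2 by norm_num, ENNReal.ofReal_mul (p := 1000) (by positivity)]
          ring
      _ ≤ ENNReal.ofReal 2000 * ENNReal.ofReal (144 * π * B) := by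
          gcongr
          apply multL S d
          intro h k
          have e : ‖d k * Complex.exp (Complex.I * (k : ℂ) * (h : ℂ)) - d k‖
            = ‖d k‖ * ‖Complex.exp (Complex.I * (k : ℂ) * (h : ℂ)) - 1‖ := by
            rw [← norm_mul]; congr 1; ring
          rw [e]
          have e1 : ‖Complex.exp (Complex.I * (k : ℂ) * (h : ℂ)) - 1‖ ≤ min 2 (|(k:ℝ)| * |h|) := by
            apply le_min
            · calc _ ≤ ‖Complex.exp (Complex.I * (k : ℂ) * (h : ℂ))‖ + ‖(1:ℂ)‖ := norm_sub_le _ _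
                _ = 2 := by rw [norm_exp_int]; norm_num
            · have := Real.norm_exp_I_mul_ofReal_sub_one_le (x := k * h)
              push_cast at this
              rw [← mul_assoc, norm_mul, Real.norm_eq_abs, Real.norm_eq_abs] at this
              exact this
          nlinarith [norm_nonneg (d k), mul_nonneg (norm_nonneg (d k)) ((norm_nonneg _).trans e1), mul_le_mul_of_nonneg_left e1 (norm_nonneg (d k))]
      _ ≤ _ := by
          rw [← ENNReal.ofReal_mul (by positivity)]
          apply ENNReal.ofReal_le_ofReal
          apply le_of_eq; ring
  have fin : I / 2 + I / 2 ≤ I / 2 + ENNReal.ofReal (289000 * π * B) := by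
    rw [ENNReal.add_halves]
    refine (step1.trans (step2.le.trans (add_le_add T1 T2))).trans ?_
    rw [add_assoc, ← ENNReal.ofReal_add (by positivity) (by positivity)]
    gcongr
    nlinarith [mul_nonneg pi_pos.le hB0]
  have fin2 : I / 2 ≤ ENNReal.ofReal (289000 * π * B) :=
    (ENNReal.add_le_add_iff_left (ENNReal.div_ne_top hfin (by simp))).1 fin
  rw [ENNReal.div_le_iff (by simp) (by simp), show (2 : ℝ≥0∞) = ENNReal.ofReal 2 by simp,
    ← ENNReal.ofReal_mul (by positivity)] at fin2
  refine fin2.trans (ENNReal.ofReal_le_ofReal ?_)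
  nlinarith [mul_nonneg pi_pos.le hB0]


/-! ### Estimates for trigonometric polynomials -/

lemma exp_sub_one_min (k : ℤ) (h : ℝ) :
    ‖Complex.exp (Complex.I * (k : ℂ) * (h : ℂ)) - 1‖ ≤ min 2 (|(k:ℝ)| * |h|) := by
  apply le_min
  · calc _ ≤ ‖Complex.exp (Complex.I * (k : ℂ) * (h : ℂ))‖ + ‖(1:ℂ)‖ := norm_sub_le _ _
      _ = 2 := by rw [norm_exp_int]; norm_num
  · have := Real.norm_exp_I_mul_ofReal_sub_one_le (x := k * h)
    push_cast at this
    rw [← mul_assoc, norm_mul, Real.norm_eq_abs, Real.norm_eq_abs] at this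
    exact this

lemma exp_sub_one_holder (k : ℤ) (h : ℝ) :
    ‖Complex.exp (Complex.I * (k : ℂ) * (h : ℂ)) - 1‖
      ≤ 2 * (|(k:ℝ)| ^ (11/16:ℝ) * |h| ^ (11/16:ℝ)) := by
  refine (exp_sub_one_min k h).trans ?_
  rw [← Real.mul_rpow (abs_nonneg _) (abs_nonneg _)]
  set x := |(k:ℝ)| * |h| with hx
  have hx0 : 0 ≤ x := by positivity
  rcases le_total x 1 with h1 | h1
  · refine (min_le_right _ _).trans ?_
    have : x ≤ x ^ (11/16:ℝ) := by
      nth_rw 1 [← Real.rpow_one x]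
      rcases hx0.eq_or_lt with h0 | h0
      · rw [← h0]; norm_num
      exact Real.rpow_le_rpow_of_exponent_ge h0 h1 (by norm_num)
    linarith [Real.rpow_nonneg hx0 (11/16)]
  · refine (min_le_left _ _).trans ?_
    have : 1 ≤ x ^ (11/16:ℝ) := Real.one_le_rpow h1 (by norm_num)
    linarith

/-- weighted ℓ¹ size -/
def EE (S : Finset ℤ) (c : ℤ → ℂ) : ℝ := ∑ k ∈ S, |(k:ℝ)| ^ (27/16:ℝ) * ‖c k‖
/-- weighted ℓ² size -/
def BB (S : Finset ℤ) (c : ℤ → ℂ) : ℝ := ∑ k ∈ S, |(k:ℝ)| ^ (9/2:ℝ) * ‖c k‖ ^ 2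

def KK : ℝ := ∑' k : ℤ, |(k:ℝ)| ^ (-(9/8):ℝ)

lemma KK_sum : Summable (fun k : ℤ => |(k:ℝ)| ^ (-(9/8):ℝ)) :=
  Real.summable_abs_int_rpow (by norm_num)

lemma KK_nonneg : 0 ≤ KK := tsum_nonneg fun k => by positivity

lemma EE_nonneg (S : Finset ℤ) (c : ℤ → ℂ) : 0 ≤ EE S c :=
  Finset.sum_nonneg fun k _ => by positivity
lemma BB_nonneg (S : Finset ℤ) (c : ℤ → ℂ) : 0 ≤ BB S c :=
  Finset.sum_nonneg fun k _ => by positivity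

lemma EE_sq (S : Finset ℤ) (c : ℤ → ℂ) : EE S c ^ 2 ≤ KK * BB S c := by
  have h1 : EE S c = ∑ k ∈ S, |(k:ℝ)| ^ (-(9/16):ℝ) * (|(k:ℝ)| ^ (9/4:ℝ) * ‖c k‖) := by
    apply Finset.sum_congr rfl
    intro k _
    rcases eq_or_ne k 0 with rfl | hk
    · norm_num
    have : 0 < |(k:ℝ)| := by positivity
    rw [← mul_assoc, ← Real.rpow_add this]; norm_num
  rw [h1]
  refine (Finset.sum_mul_sq_le_sq_mul_sq _ _ _).trans ?_
  apply mul_le_mul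
  · have : ∀ k : ℤ, (|(k:ℝ)| ^ (-(9/16):ℝ)) ^ 2 = |(k:ℝ)| ^ (-(9/8):ℝ) := by
      intro k
      rw [← Real.rpow_natCast, ← Real.rpow_mul (abs_nonneg _)]; norm_num
    simp_rw [this]
    exact KK_sum.sum_le_tsum S (fun k _ => by positivity)
  · apply le_of_eq
    apply Finset.sum_congr rfl
    intro k _
    rw [mul_pow, ← Real.rpow_natCast, ← Real.rpow_mul (abs_nonneg _)]; norm_num
  · exact Finset.sum_nonneg fun k _ => by positivity
  · exact KK_nonneg

lemma int_rpow_mono (k : ℤ) {a b : ℝ} (ha : 0 < a) (hab : a ≤ b) : |(k:ℝ)| ^ a ≤ |(k:ℝ)| ^ b := by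
  rcases eq_or_ne k 0 with rfl | hk
  · simp [Real.zero_rpow ha.ne', Real.zero_rpow (ha.trans_le hab).ne']
  · apply Real.rpow_le_rpow_of_exponent_le _ hab
    exact_mod_cast Int.one_le_abs hk

lemma norm_dc (c : ℤ → ℂ) (k : ℤ) : ‖dc c k‖ = |(k:ℝ)| * ‖c k‖ := by
  simp [dc]

lemma y_bound (S : Finset ℤ) (c : ℤ → ℂ) (s : ℝ) : ‖TP S (dc c) s‖ ≤ EE S c := by
  unfold TP EE
  refine (norm_sum_le _ _).trans (Finset.sum_le_sum fun k _ => ?_)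
  rw [norm_mul, norm_exp_int, mul_one, norm_dc]
  have := int_rpow_mono k (a := 1) (b := 27/16) (by norm_num) (by norm_num)
  rw [Real.rpow_one] at this
  gcongr

lemma y_holder (S : Finset ℤ) (c : ℤ → ℂ) (s t : ℝ) :
    ‖TP S (dc c) (s + t) - TP S (dc c) s‖ ≤ 2 * EE S c * |t| ^ (11/16:ℝ) := by
  rw [TP_shift, TP_sub]
  unfold TP EE
  rw [Finset.mul_sum, Finset.sum_mul]
  refine (norm_sum_le _ _).trans (Finset.sum_le_sum fun k _ => ?_)
  rw [norm_mul, norm_exp_int, mul_one]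
  have e : ‖dc c k * Complex.exp (Complex.I * (k : ℂ) * (t : ℂ)) - dc c k‖
      = ‖dc c k‖ * ‖Complex.exp (Complex.I * (k : ℂ) * (t : ℂ)) - 1‖ := by
    rw [← norm_mul]; congr 1; ring
  rw [e, norm_dc]
  calc _ ≤ |(k:ℝ)| * ‖c k‖ * (2 * (|(k:ℝ)| ^ (11/16:ℝ) * |t| ^ (11/16:ℝ))) := by
        gcongr; exact exp_sub_one_holder k t
    _ = _ := by
        have : |(k:ℝ)| ^ (27/16:ℝ) = |(k:ℝ)| * |(k:ℝ)| ^ (11/16:ℝ) := by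
          rcases eq_or_ne k 0 with rfl | hk
          · norm_num
          have h0 : 0 < |(k:ℝ)| := by positivity
          nth_rw 2 [← Real.rpow_one |(k:ℝ)|]
          rw [← Real.rpow_add h0]; norm_num
        rw [this]; ring

lemma d_norm (c : ℤ → ℂ) (k : ℤ) :
    |(k:ℝ)| ^ (1/2:ℝ) * ‖dc (dc c) k‖ ^ 2 = |(k:ℝ)| ^ (9/2:ℝ) * ‖c k‖ ^ 2 := by
  rw [norm_dc, norm_dc]
  rcases eq_or_ne k 0 with rfl | hk
  · norm_num
  have h0 : 0 < |(k:ℝ)| := by positivity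
  have : |(k:ℝ)| ^ (9/2:ℝ) = |(k:ℝ)| ^ (1/2:ℝ) * |(k:ℝ)| ^ 4 := by
    rw [← Real.rpow_natCast, ← Real.rpow_add h0]; norm_num
  rw [this]; ring

lemma d_sum (S : Finset ℤ) (c : ℤ → ℂ) :
    ∑ k ∈ S, |(k:ℝ)| ^ (1/2:ℝ) * ‖dc (dc c) k‖ ^ 2 = BB S c :=
  Finset.sum_congr rfl fun k _ => d_norm c k

lemma d_l2 (S : Finset ℤ) (c : ℤ → ℂ) : ∑ k ∈ S, ‖dc (dc c) k‖ ^ 2 ≤ BB S c := by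
  rw [← d_sum]
  apply Finset.sum_le_sum
  intro k _
  rcases eq_or_ne k 0 with rfl | hk
  · simp [dc]
  · have : (1:ℝ) ≤ |(k:ℝ)| ^ (1/2:ℝ) := by
      apply Real.one_le_rpow _ (by norm_num)
      exact_mod_cast Int.one_le_abs hk
    nlinarith [sq_nonneg ‖dc (dc c) k‖]

lemma Av_TP {φ : ℝ → ℂ} (hφ : Continuous φ) (S : Finset ℤ) (d : ℤ → ℂ) (s t : ℝ) :
    Av φ (TP S d) s t = TP S (fun k => d k * ∫ u in (0:ℝ)..1,
      φ u * Complex.exp (Complex.I * (k : ℂ) * ((u * t : ℝ) : ℂ))) s := by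
  unfold Av
  simp only [TP_shift]
  unfold TP
  simp only [Finset.mul_sum]
  rw [intervalIntegral.integral_finsetSum]
  · apply Finset.sum_congr rfl
    intro k _
    rw [← intervalIntegral.integral_const_mul, ← intervalIntegral.integral_mul_const]
    apply intervalIntegral.integral_congr
    intro u _
    simp only; ring
  · intro k _
    apply Continuous.intervalIntegrable
    fun_prop

def qb (d : ℤ → ℂ) (t : ℝ) (k : ℤ) : ℂ := d k - 2 * (d k * ∫ u in (0:ℝ)..1,
      omw u * Complex.exp (Complex.I * (k : ℂ) * ((u * t : ℝ) : ℂ)))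

lemma qb_TP (S : Finset ℤ) (d : ℤ → ℂ) (s t : ℝ) :
    TP S d s - 2 * Av omw (TP S d) s t = TP S (qb d t) s := by
  rw [Av_TP (by fun_prop)]
  unfold TP qb
  rw [Finset.mul_sum, ← Finset.sum_sub_distrib]
  apply Finset.sum_congr rfl
  intro k _
  ring

lemma qb_bound (d : ℤ → ℂ) (t : ℝ) (k : ℤ) :
    ‖qb d t k‖ ≤ 2 * ‖d k‖ * min 2 (|(k:ℝ)| * |t|) := by
  have h1 : qb d t k = d k * (2 * ∫ u in (0:ℝ)..1,
      omw u * (1 - Complex.exp (Complex.I * (k : ℂ) * ((u * t : ℝ) : ℂ)))) := by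
    have e : ∫ u in (0:ℝ)..1, omw u = 1 / 2 := by
      have := intervalIntegral.integral_eq_sub_of_hasDerivAt (a := 0) (b := 1)
        (f := fun u : ℝ => (u : ℂ) - (u:ℂ) ^ 2 / 2) (f' := omw) ?_ ?_
      · rw [this]; norm_num
      · intro u _
        have h3 : HasDerivAt (fun u : ℝ => (u : ℂ)) 1 u := Complex.ofRealCLM.hasDerivAt
        refine (h3.sub ((h3.pow 2).div_const 2)).congr_deriv ?_
        simp only [omw]; push_cast; ring
      · apply Continuous.intervalIntegrable; fun_prop
    have e2 : ∫ u in (0:ℝ)..1,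
      omw u * (1 - Complex.exp (Complex.I * (k : ℂ) * ((u * t : ℝ) : ℂ))) =
      (∫ u in (0:ℝ)..1, omw u) - ∫ u in (0:ℝ)..1,
      omw u * Complex.exp (Complex.I * (k : ℂ) * ((u * t : ℝ) : ℂ)) := by
      rw [← intervalIntegral.integral_sub]
      · apply intervalIntegral.integral_congr
        intro u _; simp only; ring
      all_goals apply Continuous.intervalIntegrable; fun_prop
    rw [e2, e]; unfold qb; ring
  rw [h1, norm_mul, norm_mul]
  have h2 : ‖∫ u in (0:ℝ)..1,
      omw u * (1 - Complex.exp (Complex.I * (k : ℂ) * ((u * t : ℝ) : ℂ)))‖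
      ≤ min 2 (|(k:ℝ)| * |t|) * |(1:ℝ) - 0| := by
    apply intervalIntegral.norm_integral_le_of_norm_le_const
    intro u hu
    rw [Set.uIoc_of_le zero_le_one] at hu
    rw [norm_mul, norm_sub_rev 1 (Complex.exp _)]
    have a1 : ‖omw u‖ ≤ 1 := by
      have : omw u = ((1 - u : ℝ) : ℂ) := by simp [omw]
      rw [this, Complex.norm_real, Real.norm_eq_abs, abs_le]
      constructor <;> linarith [hu.1, hu.2]
    have a2 := exp_sub_one_min k (u * t)
    have a3 : |u * t| ≤ |t| := by
      rw [abs_mul, abs_of_pos hu.1]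
      exact mul_le_of_le_one_left (abs_nonneg _) hu.2
    calc _ ≤ 1 * min 2 (|(k:ℝ)| * |t|) := by
          gcongr
          refine a2.trans ?_
          gcongr
      _ = _ := one_mul _
  rw [sub_zero, abs_one, mul_one] at h2
  have : ‖(2:ℂ)‖ = 2 := by norm_num
  rw [this]
  nlinarith [norm_nonneg (d k), mul_le_mul_of_nonneg_left h2 (norm_nonneg (d k))]

lemma qb_int (S : Finset ℤ) (c : ℤ → ℂ) :
    ∫⁻ h : ℝ, ENNReal.ofReal (|h| ^ (-(3/2) : ℝ)) * ∫⁻ s in JJ, ‖TP S (qb (dc (dc c)) h) s‖ₑ ^ 2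
      ≤ ENNReal.ofReal (144 * π * BB S c) := by
  rw [← d_sum]
  exact multL S (dc (dc c)) _ (qb_bound (dc (dc c)))

lemma hardy_s (S : Finset ℤ) (c : ℤ → ℂ) (s : ℝ) :
    ∫⁻ t in JJ, ENNReal.ofReal (|t| ^ (-(1/2) : ℝ)) * ‖TP S (dc (dc c)) (s + t)‖ₑ ^ 2
      ≤ ENNReal.ofReal (600000 * π * BB S c) := by
  have := hardy S (fun k => dc (dc c) k * Complex.exp (Complex.I * (k : ℂ) * (s : ℂ)))
    (by simp [dc])
  simp only [norm_mul, norm_exp_int, mul_one, d_sum] at this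
  simp only [← TP_shift] at this
  simpa only [add_comm] using this

lemma m_bound (S : Finset ℤ) (c : ℤ → ℂ) (s t : ℝ) (ht : t ≠ 0) :
    ‖Av omw (TP S (dc (dc c))) s t‖ ≤ 2 * EE S c * |t| ^ (-(5/16):ℝ) := by
  have hz := TP_continuous S (dc (dc c))
  have hy := TP_continuous S (dc c)
  have hyd := TP_hasDerivAt S (dc c)
  have e1 : (t : ℂ) * Av omw (TP S (dc (dc c))) s t
      = Av one1 (TP S (dc c)) s t - TP S (dc c) s := by
    rw [Av_omw hz, mul_sub, Av_one hz hyd, Av_id hz hyd]; ring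
  have e2 : Av one1 (TP S (dc c)) s t - TP S (dc c) s
      = ∫ u in (0:ℝ)..1, (TP S (dc c) (s + u * t) - TP S (dc c) s) := by
    rw [intervalIntegral.integral_sub]
    · simp [Av]
    all_goals apply Continuous.intervalIntegrable; fun_prop
  have e3 : ‖∫ u in (0:ℝ)..1, (TP S (dc c) (s + u * t) - TP S (dc c) s)‖
      ≤ 2 * EE S c * |t| ^ (11/16:ℝ) * |(1:ℝ) - 0| := by
    apply intervalIntegral.norm_integral_le_of_norm_le_const
    intro u hu
    rw [Set.uIoc_of_le zero_le_one] at hu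
    refine (y_holder S c s (u * t)).trans ?_
    have a3 : |u * t| ≤ |t| := by
      rw [abs_mul, abs_of_pos hu.1]
      exact mul_le_of_le_one_left (abs_nonneg _) hu.2
    have := EE_nonneg S c
    gcongr
  rw [← e2, ← e1, norm_mul, Complex.norm_real, Real.norm_eq_abs, sub_zero, abs_one, mul_one] at e3
  have h0 : 0 < |t| := abs_pos.2 ht
  have e4 : |t| ^ (11/16:ℝ) = |t| * |t| ^ (-(5/16):ℝ) := by
    nth_rw 2 [← Real.rpow_one |t|]
    rw [← Real.rpow_add h0]; norm_num
  rw [e4] at e3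
  apply le_of_mul_le_mul_left _ h0
  linarith

lemma R2a_bound (t : ℝ) (ht : t ≠ 0) (y0 z0 z m l : ℂ) (M lam : ℝ) (hlam : 0 < lam)
    (hy : ‖y0‖ ≤ M) (hl : ‖l‖ ≤ M) (hl2 : lam ≤ ‖l‖) :
    ‖R2a t y0 (starRingEnd ℂ y0) z0 (starRingEnd ℂ z0) z (starRingEnd ℂ z) m (starRingEnd ℂ m)
      l (starRingEnd ℂ l) l⁻¹ (starRingEnd ℂ l)⁻¹‖
    ≤ M / lam ^ 3 * (‖z‖ * (2 * M * (‖z0 - 2 * m‖ * |t|⁻¹) + 3 * ‖z0‖ * ‖m‖ + ‖m‖ ^ 2)) := by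
  have hq : starRingEnd ℂ z0 - 2 * starRingEnd ℂ m = starRingEnd ℂ (z0 - 2 * m) := by
    rw [map_sub, map_mul, Complex.conj_ofNat]
  unfold R2a
  rw [hq]
  set q := z0 - 2 * m
  have hM : lam ≤ M := hl2.trans hl
  have hM0 : 0 ≤ M := (norm_nonneg _).trans hy
  have ht0 : 0 < |t| := abs_pos.2 ht
  have hil : ‖l⁻¹‖ ≤ lam⁻¹ := by rw [norm_inv]; exact inv_anti₀ hlam hl2
  have hilb : ‖(starRingEnd ℂ l)⁻¹‖ ≤ lam⁻¹ := by
    rw [norm_inv, RCLike.norm_conj]; exact inv_anti₀ hlam hl2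
  have n1 : ‖m * (z0 - m)‖ ≤ ‖m‖ * (‖z0‖ + ‖m‖) := by
    rw [norm_mul]; gcongr; exact norm_sub_le _ _
  have n1b : ‖starRingEnd ℂ m * (starRingEnd ℂ z0 - starRingEnd ℂ m)‖ ≤ ‖m‖ * (‖z0‖ + ‖m‖) := by
    rw [← map_sub, ← map_mul, RCLike.norm_conj]; exact n1
  have n2 : ‖y0 * q / t‖ ≤ M * (‖q‖ * |t|⁻¹) := by
    rw [norm_div, norm_mul, Complex.norm_real, Real.norm_eq_abs, div_eq_mul_inv, mul_assoc]; gcongr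
  have n2b : ‖starRingEnd ℂ y0 * starRingEnd ℂ q / t‖ ≤ M * (‖q‖ * |t|⁻¹) := by
    rw [norm_div, norm_mul, RCLike.norm_conj, RCLike.norm_conj, Complex.norm_real,
      Real.norm_eq_abs, div_eq_mul_inv, mul_assoc]; gcongr
  set X := M * (‖q‖ * |t|⁻¹)
  have hX : 0 ≤ X := by positivity
  have t1 : ‖z * ((y0 * q / t + m * (z0 - m)) * l⁻¹ ^ 2
        + (starRingEnd ℂ y0 * starRingEnd ℂ q / t
          + starRingEnd ℂ m * (starRingEnd ℂ z0 - starRingEnd ℂ m)) * (starRingEnd ℂ l)⁻¹ ^ 2) / 2‖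
      ≤ ‖z‖ * ((X + ‖m‖ * (‖z0‖ + ‖m‖)) * lam⁻¹ ^ 2) := by
    rw [norm_div, norm_mul, mul_div_assoc]
    gcongr
    have : ‖(2:ℂ)‖ = 2 := by norm_num
    rw [this, div_le_iff₀ (by norm_num), mul_two]
    refine (norm_add_le _ _).trans ?_
    rw [norm_mul, norm_mul, norm_pow, norm_pow]
    gcongr
    · exact (norm_add_le _ _).trans (add_le_add n2 n1)
    · exact (norm_add_le _ _).trans (add_le_add n2b n1b)
  have n3 : ‖-(starRingEnd ℂ y0 * (starRingEnd ℂ y0 * q - y0 * starRingEnd ℂ q) / t)‖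
      ≤ 2 * M * X := by
    have : -(starRingEnd ℂ y0 * (starRingEnd ℂ y0 * q - y0 * starRingEnd ℂ q) / t)
      = y0 * (starRingEnd ℂ y0 * starRingEnd ℂ q / t) -
        starRingEnd ℂ y0 * (starRingEnd ℂ y0 * q / t) := by ring
    rw [this]
    have n2c : ‖starRingEnd ℂ y0 * q / t‖ ≤ X := by
      rw [norm_div, norm_mul, RCLike.norm_conj, Complex.norm_real,
        Real.norm_eq_abs, div_eq_mul_inv, mul_assoc]; simp only [X]; gcongr
    calc _ ≤ M * X + M * X := by
          refine (norm_sub_le _ _).trans ?_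
          rw [norm_mul, norm_mul, RCLike.norm_conj]
          gcongr
      _ = _ := by ring
  have n4 : ∀ a : ℂ, ‖starRingEnd ℂ z0 * a - z0 * starRingEnd ℂ a‖ ≤ 2 * (‖z0‖ * ‖a‖) := by
    intro a
    refine (norm_sub_le _ _).trans ?_
    rw [norm_mul, norm_mul, RCLike.norm_conj, RCLike.norm_conj]; linarith
  have t2 : ‖starRingEnd ℂ z * (-(starRingEnd ℂ y0 * (starRingEnd ℂ y0 * q
        - y0 * starRingEnd ℂ q) / t)
        + (starRingEnd ℂ z0 * m - z0 * starRingEnd ℂ m) * starRingEnd ℂ y0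
        + (starRingEnd ℂ z0 * l - z0 * starRingEnd ℂ l) * starRingEnd ℂ m)
          * (starRingEnd ℂ l)⁻¹ ^ 3 / 2‖
      ≤ ‖z‖ * (M * X + 2 * M * (‖z0‖ * ‖m‖)) * lam⁻¹ ^ 3 := by
    have : ‖(2:ℂ)‖ = 2 := by norm_num
    rw [norm_div, norm_mul, norm_mul, norm_pow, RCLike.norm_conj, this, div_le_iff₀ (by norm_num)]
    have : ‖(-(starRingEnd ℂ y0 * (starRingEnd ℂ y0 * q
        - y0 * starRingEnd ℂ q) / t)
        + (starRingEnd ℂ z0 * m - z0 * starRingEnd ℂ m) * starRingEnd ℂ y0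
        + (starRingEnd ℂ z0 * l - z0 * starRingEnd ℂ l) * starRingEnd ℂ m)‖
        ≤ 2 * (M * X + 2 * M * (‖z0‖ * ‖m‖)) := by
      calc _ ≤ 2 * M * X + 2 * (‖z0‖ * ‖m‖) * M + 2 * (‖z0‖ * M) * ‖m‖ := by
            refine norm_add₃_le.trans ?_
            rw [norm_mul (_ - _), norm_mul (_ - _), RCLike.norm_conj, RCLike.norm_conj]
            gcongr
            · exact n4 m
            · exact (n4 l).trans (by gcongr)
        _ = _ := by ring
    calc _ ≤ ‖z‖ * (2 * (M * X + 2 * M * (‖z0‖ * ‖m‖))) * lam⁻¹ ^ 3 := by gcongr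
      _ = _ := by ring
  refine (norm_add_le _ _).trans ((add_le_add t1 t2).trans ?_)
  have h5 : lam⁻¹ ^ 2 ≤ M * lam⁻¹ ^ 3 := by
    have : 1 ≤ M * lam⁻¹ := by
      rw [← div_eq_mul_inv, one_le_div hlam]; exact hM
    calc lam⁻¹ ^ 2 = 1 * lam⁻¹ ^ 2 := by ring
      _ ≤ (M * lam⁻¹) * lam⁻¹ ^ 2 := by gcongr
      _ = _ := by ring
  calc _ ≤ ‖z‖ * ((X + ‖m‖ * (‖z0‖ + ‖m‖)) * (M * lam⁻¹ ^ 3))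
        + ‖z‖ * (M * X + 2 * M * (‖z0‖ * ‖m‖)) * lam⁻¹ ^ 3 := by gcongr
    _ = _ := by
        simp only [X]
        rw [div_eq_mul_inv M, ← inv_pow]; ring


/-! ### The L² estimate of the second derivative -/

abbrev cj (f : ℝ → ℂ) : ℝ → ℂ := fun s => starRingEnd ℂ (f s)

lemma cj_deriv {f : ℝ → ℂ} {f' : ℂ} {s : ℝ} (h : HasDerivAt f f' s) :
    HasDerivAt (cj f) (starRingEnd ℂ f') s :=
  (Complex.conjCLE.toContinuousLinearMap.hasFDerivAt (x := f s)).comp_hasDerivAt s h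

lemma Av_cj {φ : ℝ → ℂ} (hφ : ∀ u, starRingEnd ℂ (φ u) = φ u) (f : ℝ → ℂ) (s t : ℝ) :
    Av φ (cj f) s t = starRingEnd ℂ (Av φ f s t) := by
  unfold Av
  rw [intervalIntegral.integral_of_le zero_le_one, intervalIntegral.integral_of_le zero_le_one,
    ← integral_conj]
  simp only [map_mul, hφ, cj]

/-- well-stretched condition for trigonometric polynomials -/
def WS (S : Finset ℤ) (c : ℤ → ℂ) (lam : ℝ) : Prop :=
  ∀ s t : ℝ, |t| ≤ π → lam * |t| ≤ ‖TP S c (s + t) - TP S c s‖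

lemma WS.l {S : Finset ℤ} {c : ℤ → ℂ} {lam : ℝ} (h : WS S c lam) (s t : ℝ)
    (ht : t ∈ Set.Icc (-π) π) : lam ≤ ‖Av one1 (TP S (dc c)) s t‖ := by
  have hy := TP_continuous S (dc c)
  have h1 : ∀ t ∈ Set.Icc (-π) π, t ≠ 0 → lam ≤ ‖Av one1 (TP S (dc c)) s t‖ := by
    intro t ht h0
    have e := Av_one hy (TP_hasDerivAt S c) s t
    have := h s t (abs_le.2 ht)
    rw [← e, norm_mul, Complex.norm_real, Real.norm_eq_abs, mul_comm] at this
    exact le_of_mul_le_mul_left this (abs_pos.2 h0)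
  rcases eq_or_ne t 0 with rfl | h0
  · have hc : Continuous (fun t => ‖Av one1 (TP S (dc c)) s t‖) := by
      have := (Av_continuous (φ := one1) (by fun_prop) hy).comp
        (continuous_const.prodMk continuous_id : Continuous fun t : ℝ => (s, t))
      exact this.norm
    have ht2 : Tendsto (fun t => ‖Av one1 (TP S (dc c)) s t‖) (𝓝[≠] 0)
      (𝓝 ‖Av one1 (TP S (dc c)) s 0‖) := (hc.tendsto 0).mono_left nhdsWithin_le_nhds
    apply ge_of_tendsto ht2
    have h2 : ∀ᶠ t : ℝ in 𝓝[≠] 0, t ∈ Set.Icc (-π) π :=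
      nhdsWithin_le_nhds (Icc_mem_nhds (by linarith [pi_pos]) pi_pos)
    filter_upwards [h2, self_mem_nhdsWithin] with t ht h0
    exact h1 t ht h0
  · exact h1 t ht h0

lemma Av_norm_le (S : Finset ℤ) (c : ℤ → ℂ) (s t : ℝ) :
    ‖Av one1 (TP S (dc c)) s t‖ ≤ EE S c := by
  have := intervalIntegral.norm_integral_le_of_norm_le_const (a := 0) (b := 1) (C := EE S c)
    (f := fun u : ℝ => one1 u * TP S (dc c) (s + u * t))
    (fun u _ => by simpa using y_bound S c _)
  simpa [Av] using this

lemma WS.le_EE {S : Finset ℤ} {c : ℤ → ℂ} {lam : ℝ} (h : WS S c lam) : lam ≤ EE S c :=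
  (h.l 0 0 ⟨by linarith [pi_pos], pi_pos.le⟩).trans (Av_norm_le S c 0 0)

lemma WS.sd {S : Finset ℤ} {c : ℤ → ℂ} {lam : ℝ} (h : WS S c lam) (hlam : 0 < lam) :
    SD (TP S (dc c)) (TP S (dc (dc c))) (TP S (dc (dc (dc c))))
      (cj (TP S (dc c))) (cj (TP S (dc (dc c)))) (cj (TP S (dc (dc (dc c))))) := by
  have hpl : ∀ s, Av one1 (TP S (dc c)) s (-π) = - Av one1 (TP S (dc c)) s π := by
    intro s
    have hpi : (π : ℂ) ≠ 0 := by exact_mod_cast pi_ne_zero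
    have e1 := Av_one (TP_continuous S (dc c)) (TP_hasDerivAt S c) s π
    have e2 := Av_one (TP_continuous S (dc c)) (TP_hasDerivAt S c) s (-π)
    have p1 : TP S c (s + -π) = TP S c (s + π) := by
      rw [← TP_periodic S c (s + -π)]; congr 1; ring
    rw [p1, ← e1] at e2
    apply mul_left_cancel₀ hpi
    push_cast at e2
    linear_combination -e2
  have n1 : ∀ s t, t ∈ Set.Icc (-π) π → Av one1 (TP S (dc c)) s t ≠ 0 := by
    intro s t ht h0
    have := h.l s t ht
    rw [h0, norm_zero] at this
    linarith
  refine ⟨TP_hasDerivAt _ _, TP_hasDerivAt _ _, TP_continuous _ _,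
    fun s => cj_deriv (TP_hasDerivAt _ _ s), fun s => cj_deriv (TP_hasDerivAt _ _ s),
    Complex.continuous_conj.comp (TP_continuous _ _), n1, ?_, TP_periodic _ _, TP_periodic _ _,
    ?_, ?_, hpl, ?_⟩
  · intro s t ht
    rw [Av_cj (by simp)]
    simpa using n1 s t ht
  · intro s; simp only [cj, TP_periodic S _ s]
  · intro s; simp only [cj, TP_periodic S _ s]
  · intro s
    rw [Av_cj (by simp), Av_cj (by simp), hpl, map_neg]

lemma R2_bound {S : Finset ℤ} {c : ℤ → ℂ} {lam : ℝ} (h : WS S c lam) (hlam : 0 < lam) (s t : ℝ)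
    (ht : t ∈ Set.Icc (-π) π) (h0 : t ≠ 0) :
    ‖R2 (TP S (dc c)) (TP S (dc (dc c))) (cj (TP S (dc c))) (cj (TP S (dc (dc c)))) s t‖
    ≤ EE S c / lam ^ 3 * (‖TP S (dc (dc c)) (s + t)‖ *
      (2 * EE S c * (‖TP S (qb (dc (dc c)) t) s‖ * |t|⁻¹)
        + 12 * EE S c * ‖TP S (dc (dc c)) s‖ * |t| ^ (-(5/8):ℝ)
        + 4 * EE S c ^ 2 * |t| ^ (-(5/8):ℝ))) := by
  unfold R2
  rw [Av_cj (φ := omw) (by simp), Av_cj (φ := one1) (by simp)]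
  refine (R2a_bound t h0 _ _ _ _ _ (EE S c) lam hlam (y_bound S c s) (Av_norm_le S c s t)
    (h.l s t ht)).trans ?_
  rw [qb_TP]
  have hm := m_bound S c s t h0
  have hE := EE_nonneg S c
  have ht0 : 0 < |t| := abs_pos.2 h0
  have e1 : (|t| ^ (-(5/16):ℝ)) ^ 2 = |t| ^ (-(5/8):ℝ) := by
    rw [← Real.rpow_natCast, ← Real.rpow_mul ht0.le]; norm_num
  have e2 : |t| ^ (-(5/16):ℝ) ≤ 2 * |t| ^ (-(5/8):ℝ) := by
    have a1 : |t| ^ (-(5/16):ℝ) = |t| ^ (5/16:ℝ) * |t| ^ (-(5/8):ℝ) := by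
      rw [← Real.rpow_add ht0]; norm_num
    have a2 : |t| ^ (5/16:ℝ) ≤ 2 := by
      calc |t| ^ (5/16:ℝ) ≤ 4 ^ (5/16:ℝ) := by
            apply Real.rpow_le_rpow ht0.le _ (by norm_num)
            have := abs_le.2 ht
            linarith [Real.pi_lt_four]
        _ ≤ 4 ^ (1/2:ℝ) := Real.rpow_le_rpow_of_exponent_le (by norm_num) (by norm_num)
        _ = 2 := by
            rw [show (4:ℝ) = 2 ^ (2:ℝ) by norm_num, ← Real.rpow_mul (by norm_num)]; norm_num
    rw [a1]; gcongr
  have e3 : ‖Av omw (TP S (dc (dc c))) s t‖ ≤ 4 * EE S c * |t| ^ (-(5/8):ℝ) := by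
    refine hm.trans ?_
    calc _ ≤ 2 * EE S c * (2 * |t| ^ (-(5/8):ℝ)) := by gcongr
      _ = _ := by ring
  have e4 : ‖Av omw (TP S (dc (dc c))) s t‖ ^ 2 ≤ 4 * EE S c ^ 2 * |t| ^ (-(5/8):ℝ) := by
    calc _ ≤ (2 * EE S c * |t| ^ (-(5/16):ℝ)) ^ 2 := by gcongr
      _ = _ := by rw [mul_pow, e1]; ring
  have e5 : 3 * ‖TP S (dc (dc c)) s‖ * ‖Av omw (TP S (dc (dc c))) s t‖
      ≤ 12 * EE S c * ‖TP S (dc (dc c)) s‖ * |t| ^ (-(5/8):ℝ) := by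
    calc 3 * ‖TP S (dc (dc c)) s‖ * ‖Av omw (TP S (dc (dc c))) s t‖
      ≤ 3 * ‖TP S (dc (dc c)) s‖ * (4 * EE S c * |t| ^ (-(5/8):ℝ)) := by gcongr
    _ = _ := by ring
  have c0 : 0 ≤ EE S c / lam ^ 3 := by positivity
  refine mul_le_mul_of_nonneg_left (mul_le_mul_of_nonneg_left ?_ (norm_nonneg _)) c0
  linarith

lemma sq3 (a b c : ℝ≥0∞) : (a + b + c) ^ 2 ≤ 9 * (a ^ 2 + b ^ 2 + c ^ 2) := by
  set m := max a (max b c)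
  have h1 : a + b + c ≤ 3 * m := by
    calc a + b + c ≤ m + m + m := by
          gcongr
          · exact le_max_left _ _
          · exact (le_max_left _ _).trans (le_max_right _ _)
          · exact (le_max_right _ _).trans (le_max_right _ _)
      _ = _ := by ring
  have h2 : m ^ 2 ≤ a ^ 2 + b ^ 2 + c ^ 2 := by
    rcases max_choice a (max b c) with h | h
    · simp only [m]; rw [h, add_assoc]; exact le_self_add
    · simp only [m]; rw [h]
      rcases max_choice b c with h | h
      · rw [h, add_right_comm]; exact le_add_self
      · rw [h]; exact le_add_self
  calc _ ≤ (3 * m) ^ 2 := by gcongr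
    _ = 9 * m ^ 2 := by ring
    _ ≤ _ := by gcongr

def jj : ℝ := (∫⁻ t in JJ, ENNReal.ofReal (|t| ^ (-(3/4):ℝ))).toReal

lemma jj_eq : ∫⁻ t in JJ, ENNReal.ofReal (|t| ^ (-(3/4):ℝ)) = ENNReal.ofReal jj :=
  (ENNReal.ofReal_toReal (pow_int _ (by norm_num))).symm

lemma jj_nonneg : 0 ≤ jj := ENNReal.toReal_nonneg

lemma ofReal_rpow_sq (t a b : ℝ) (h : a * 2 = b) :
    ENNReal.ofReal (|t| ^ a) ^ 2 = ENNReal.ofReal (|t| ^ b) := by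
  rw [← ENNReal.ofReal_pow (by positivity), ← Real.rpow_natCast, ← Real.rpow_mul (abs_nonneg _)]
  congr 2

/-- the rough part of the second derivative -/
def Rr (S : Finset ℤ) (c : ℤ → ℂ) (s : ℝ) : ℂ := ∫ t in (-π)..π,
  (R1s (TP S (dc c)) (TP S (dc (dc c))) (TP S (dc (dc (dc c))))
      (cj (TP S (dc c))) (cj (TP S (dc (dc c)))) (cj (TP S (dc (dc (dc c))))) s t
  - R1t (TP S (dc c)) (TP S (dc (dc c))) (TP S (dc (dc (dc c))))
      (cj (TP S (dc c))) (cj (TP S (dc (dc c)))) (cj (TP S (dc (dc (dc c))))) s t)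

def Qq (S : Finset ℤ) (c : ℤ → ℂ) (s : ℝ) : ℝ≥0∞ :=
  ∫⁻ t in JJ, ENNReal.ofReal (|t| ^ (-(3/2) : ℝ)) * ‖TP S (qb (dc (dc c)) t) s‖ₑ ^ 2

lemma qb_meas (S : Finset ℤ) (c : ℤ → ℂ) :
    Measurable (fun p : ℝ × ℝ => TP S (qb (dc (dc c)) p.2) p.1) := by
  simp only [← qb_TP]
  have h1 := TP_continuous S (dc (dc c))
  have h2 := Av_continuous (φ := omw) (by fun_prop) h1
  apply Continuous.measurable
  fun_prop

lemma Qq_int (S : Finset ℤ) (c : ℤ → ℂ) :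
    ∫⁻ s in JJ, Qq S c s ≤ ENNReal.ofReal (144 * π * BB S c) := by
  unfold Qq
  have := qb_meas S c
  rw [lintegral_lintegral_swap]
  · refine le_trans ?_ (qb_int S c)
    refine le_trans (setLIntegral_le_lintegral _ _) (le_of_eq ?_)
    apply lintegral_congr
    intro t
    rw [lintegral_const_mul' _ _ (by simp)]
  · apply Measurable.aemeasurable; simp only [Function.uncurry_def]; fun_prop

def XX (S : Finset ℤ) (c : ℤ → ℂ) (s : ℝ) : ℝ≥0∞ :=
  ∫⁻ t in JJ, (ENNReal.ofReal (|t| ^ (-(1/4):ℝ)) * ‖TP S (dc (dc c)) (s + t)‖ₑ)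
    * (ENNReal.ofReal (|t| ^ (-(3/4):ℝ)) * ‖TP S (qb (dc (dc c)) t) s‖ₑ)

def WW (S : Finset ℤ) (c : ℤ → ℂ) (s : ℝ) : ℝ≥0∞ :=
  ∫⁻ t in JJ, (ENNReal.ofReal (|t| ^ (-(1/4):ℝ)) * ‖TP S (dc (dc c)) (s + t)‖ₑ)
    * ENNReal.ofReal (|t| ^ (-(3/8):ℝ))

lemma qbs_meas (S : Finset ℤ) (c : ℤ → ℂ) (s : ℝ) :
    Measurable (fun t => TP S (qb (dc (dc c)) t) s) := by
  have h1 : Measurable fun t : ℝ => (s, t) := by fun_prop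
  have h2 := (qb_meas S c).comp h1
  simpa only [Function.comp_def] using h2

lemma WW_H (S : Finset ℤ) (c : ℤ → ℂ) (s : ℝ) :
    ∫⁻ t in JJ, (ENNReal.ofReal (|t| ^ (-(1/4):ℝ)) * ‖TP S (dc (dc c)) (s + t)‖ₑ) ^ 2
      ≤ ENNReal.ofReal (600000 * π * BB S c) := by
  refine le_trans (le_of_eq ?_) (hardy_s S c s)
  apply lintegral_congr
  intro t
  rw [mul_pow, ofReal_rpow_sq t _ (-(1/2)) (by norm_num)]

lemma XX_sq (S : Finset ℤ) (c : ℤ → ℂ) (s : ℝ) :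
    XX S c s ^ 2 ≤ ENNReal.ofReal (600000 * π * BB S c) * Qq S c s := by
  have hzm : Measurable (TP S (dc (dc c))) := (TP_continuous _ _).measurable
  have hqm := qbs_meas S c s
  refine (CSl (by fun_prop) (by fun_prop)).trans ?_
  refine mul_le_mul' (WW_H S c s) (le_of_eq ?_)
  apply lintegral_congr
  intro t
  rw [mul_pow, ofReal_rpow_sq t _ (-(3/2)) (by norm_num)]

lemma WW_sq (S : Finset ℤ) (c : ℤ → ℂ) (s : ℝ) :
    WW S c s ^ 2 ≤ ENNReal.ofReal (600000 * π * BB S c) * ENNReal.ofReal jj := by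
  have hzm : Measurable (TP S (dc (dc c))) := (TP_continuous _ _).measurable
  refine (CSl (by fun_prop) (by fun_prop)).trans ?_
  rw [← jj_eq]
  refine mul_le_mul' (WW_H S c s) (le_of_eq ?_)
  apply lintegral_congr
  intro t
  rw [ofReal_rpow_sq t _ (-(3/4)) (by norm_num)]

lemma Rr_alg1 {t x q z A E : ℝ} (ht : t ≠ 0) (hx : 0 ≤ x) (hq : 0 ≤ q) (hz : 0 ≤ z) (hA : 0 ≤ A)
    (hE : 0 ≤ E) :
    ENNReal.ofReal (A * (x * (2 * E * (q * |t|⁻¹) + 12 * E * z * |t| ^ (-(5/8):ℝ)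
      + 4 * E ^ 2 * |t| ^ (-(5/8):ℝ))))
    = ENNReal.ofReal A * (ENNReal.ofReal (2 * E) *
        ((ENNReal.ofReal (|t| ^ (-(1/4):ℝ)) * ENNReal.ofReal x) *
          (ENNReal.ofReal (|t| ^ (-(3/4):ℝ)) * ENNReal.ofReal q))
      + ENNReal.ofReal (12 * E) * ENNReal.ofReal z *
        ((ENNReal.ofReal (|t| ^ (-(1/4):ℝ)) * ENNReal.ofReal x) *
          ENNReal.ofReal (|t| ^ (-(3/8):ℝ)))
      + ENNReal.ofReal (4 * E ^ 2) *
        ((ENNReal.ofReal (|t| ^ (-(1/4):ℝ)) * ENNReal.ofReal x) *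
          ENNReal.ofReal (|t| ^ (-(3/8):ℝ)))) := by
  have ht0 : 0 < |t| := abs_pos.2 ht
  have b1 : |t|⁻¹ = |t| ^ (-(1/4):ℝ) * |t| ^ (-(3/4):ℝ) := by
    rw [← Real.rpow_add ht0, ← Real.rpow_neg_one]; norm_num
  have b2 : |t| ^ (-(5/8):ℝ) = |t| ^ (-(1/4):ℝ) * |t| ^ (-(3/8):ℝ) := by
    rw [← Real.rpow_add ht0]; norm_num
  have p1 : 0 ≤ |t| ^ (-(1/4):ℝ) := by positivity
  have p2 : 0 ≤ |t| ^ (-(3/4):ℝ) := by positivity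
  have p3 : 0 ≤ |t| ^ (-(3/8):ℝ) := by positivity
  rw [b1, b2]
  generalize |t| ^ (-(1/4):ℝ) = a1 at *
  generalize |t| ^ (-(3/4):ℝ) = a2 at *
  generalize |t| ^ (-(3/8):ℝ) = a3 at *
  rw [ENNReal.ofReal_mul hA]
  congr 1
  rw [← ENNReal.ofReal_mul p1, ← ENNReal.ofReal_mul p2, ← ENNReal.ofReal_mul (by positivity),
    ← ENNReal.ofReal_mul (by positivity), ← ENNReal.ofReal_mul (by positivity),
    ← ENNReal.ofReal_mul (by positivity), ← ENNReal.ofReal_mul (by positivity),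
    ← ENNReal.ofReal_mul (by positivity), ← ENNReal.ofReal_add (by positivity) (by positivity),
    ← ENNReal.ofReal_add (by positivity) (by positivity)]
  congr 1
  ring

lemma Rr_key {S : Finset ℤ} {c : ℤ → ℂ} {lam : ℝ} (h : WS S c lam) (hlam : 0 < lam) (s : ℝ) :
    ‖Rr S c s‖ₑ ≤ ENNReal.ofReal (EE S c / lam ^ 3) *
      (ENNReal.ofReal (2 * EE S c) * XX S c s
        + ENNReal.ofReal (12 * EE S c) * ‖TP S (dc (dc c)) s‖ₑ * WW S c s
        + ENNReal.ofReal (4 * EE S c ^ 2) * WW S c s) := by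
  have hE := EE_nonneg S c
  have hzm : Measurable (TP S (dc (dc c))) := (TP_continuous _ _).measurable
  have hqm := qbs_meas S c s
  have e1 : Rr S c s = ∫ t in JJ, R2 (TP S (dc c)) (TP S (dc (dc c)))
      (cj (TP S (dc c))) (cj (TP S (dc (dc c)))) s t := by
    unfold Rr
    rw [SD.ae_congr_int (fun t ht h0 => (h.sd hlam).id2 s t ht h0),
      intervalIntegral.integral_of_le (by linarith [pi_pos])]
  rw [e1]
  refine (enorm_integral_le_lintegral_enorm _).trans ?_
  unfold XX WW
  rw [← lintegral_const_mul' _ _ (by finiteness), ← lintegral_const_mul' _ _ (by finiteness),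
    ← lintegral_const_mul' _ _ (by finiteness), ← lintegral_add_left (by fun_prop),
    ← lintegral_add_left (by fun_prop), ← lintegral_const_mul' _ _ (by finiteness)]
  apply lintegral_mono_ae
  have h0 : ∀ᵐ t : ℝ, t ≠ 0 := by simp [ae_iff]
  filter_upwards [ae_restrict_of_ae h0, ae_restrict_mem measurableSet_Ioc] with t h0 ht
  have a1 := ENNReal.ofReal_le_ofReal (R2_bound h hlam s t (Set.Ioc_subset_Icc_self ht) h0)
  rw [ofReal_norm, Rr_alg1 h0 (norm_nonneg _) (norm_nonneg _) (norm_nonneg _) (by positivity) hE,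
    ofReal_norm, ofReal_norm, ofReal_norm] at a1
  exact a1

lemma Rr_alg2 {R A a X z W b d H Q j : ℝ≥0∞} (h : R ≤ A * (a * X + b * z * W + d * W))
    (hX : X ^ 2 ≤ H * Q) (hW : W ^ 2 ≤ H * j) :
    R ^ 2 ≤ A ^ 2 * (9 * H * (a ^ 2 * Q + b ^ 2 * j * z ^ 2 + d ^ 2 * j)) := by
  calc R ^ 2 ≤ _ := pow_le_pow_left' h 2
    _ ≤ A ^ 2 * (9 * (a ^ 2 * X ^ 2 + b ^ 2 * z ^ 2 * W ^ 2 + d ^ 2 * W ^ 2)) := by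
      rw [mul_pow]
      gcongr
      refine (sq3 _ _ _).trans (le_of_eq ?_)
      simp only [mul_pow]
    _ ≤ A ^ 2 * (9 * (a ^ 2 * (H * Q) + b ^ 2 * z ^ 2 * (H * j) + d ^ 2 * (H * j))) := by
      gcongr
    _ = _ := by ring

lemma Rr_pt {S : Finset ℤ} {c : ℤ → ℂ} {lam : ℝ} (h : WS S c lam) (hlam : 0 < lam) (s : ℝ) :
    ‖Rr S c s‖ₑ ^ 2 ≤ ENNReal.ofReal (EE S c / lam ^ 3) ^ 2 * (9 *
      ENNReal.ofReal (600000 * π * BB S c) * (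
      ENNReal.ofReal (2 * EE S c) ^ 2 * Qq S c s
      + ENNReal.ofReal (12 * EE S c) ^ 2 * ENNReal.ofReal jj * ‖TP S (dc (dc c)) s‖ₑ ^ 2
      + ENNReal.ofReal (4 * EE S c ^ 2) ^ 2 * ENNReal.ofReal jj)) :=
  Rr_alg2 (Rr_key h hlam s) (XX_sq S c s) (WW_sq S c s)

def CR : ℝ := 9 * KK * (600000 * π) * (4 * KK * (144 * π) + 144 * KK * jj * (2 * π)
  + 16 * KK ^ 2 * jj * (2 * π))

lemma CR_nonneg : 0 ≤ CR := by
  have := KK_nonneg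
  have := jj_nonneg
  unfold CR; positivity

lemma Rr_L2 {S : Finset ℤ} {c : ℤ → ℂ} {lam : ℝ} (h : WS S c lam) (hlam : 0 < lam) :
    ∫⁻ s in JJ, ‖Rr S c s‖ₑ ^ 2 ≤ ENNReal.ofReal (CR * (BB S c ^ 4 / lam ^ 6)) := by
  have hE := EE_nonneg S c
  have hB := BB_nonneg S c
  have hK := KK_nonneg
  have hj := jj_nonneg
  have hzm : Measurable (TP S (dc (dc c))) := (TP_continuous _ _).measurable
  have hqm := qb_meas S c
  refine (lintegral_mono fun s => Rr_pt h hlam s).trans ?_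
  have hQm : Measurable (Qq S c) := by
    unfold Qq
    apply Measurable.lintegral_prod_right (f := fun s t => ENNReal.ofReal (|t| ^ (-(3/2) : ℝ)) *
      ‖TP S (qb (dc (dc c)) t) s‖ₑ ^ 2)
    simp only [Function.uncurry_def]; fun_prop
  rw [lintegral_const_mul' _ _ (by finiteness), lintegral_const_mul' _ _ (by finiteness),
    lintegral_add_left (by fun_prop), lintegral_add_left (by fun_prop),
    lintegral_const_mul' _ _ (by finiteness), lintegral_const_mul' _ _ (by finiteness),
    setLIntegral_const, Real.volume_Ioc, parsevalJ]
  have hz : ENNReal.ofReal (2 * π * ∑ k ∈ S, ‖dc (dc c) k‖ ^ 2)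
      ≤ ENNReal.ofReal (2 * π * BB S c) :=
    ENNReal.ofReal_le_ofReal (by gcongr; exact d_l2 S c)
  calc _ ≤ ENNReal.ofReal (EE S c / lam ^ 3) ^ 2 * (9 *
      ENNReal.ofReal (600000 * π * BB S c) * (
      ENNReal.ofReal (2 * EE S c) ^ 2 * ENNReal.ofReal (144 * π * BB S c)
      + ENNReal.ofReal (12 * EE S c) ^ 2 * ENNReal.ofReal jj * ENNReal.ofReal (2 * π * BB S c)
      + ENNReal.ofReal (4 * EE S c ^ 2) ^ 2 * ENNReal.ofReal jj * ENNReal.ofReal (π - -π))) := by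
        gcongr
        exact Qq_int S c
    _ = ENNReal.ofReal ((EE S c / lam ^ 3) ^ 2 * (9 * (600000 * π * BB S c) * (
      (2 * EE S c) ^ 2 * (144 * π * BB S c)
      + (12 * EE S c) ^ 2 * jj * (2 * π * BB S c)
      + (4 * EE S c ^ 2) ^ 2 * jj * (π - -π)))) := by
        have : 0 ≤ π - -π := by linarith [pi_pos]
        rw [show (9 : ℝ≥0∞) = ENNReal.ofReal 9 by simp]
        simp only [← ENNReal.ofReal_pow (show 0 ≤ EE S c / lam ^ 3 by positivity),
          ← ENNReal.ofReal_pow (show 0 ≤ 2 * EE S c by positivity),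
          ← ENNReal.ofReal_pow (show 0 ≤ 12 * EE S c by positivity),
          ← ENNReal.ofReal_pow (show 0 ≤ 4 * EE S c ^ 2 by positivity)]
        repeat rw [← ENNReal.ofReal_mul (by positivity)]
        repeat rw [← ENNReal.ofReal_add (by positivity) (by positivity)]
        repeat rw [← ENNReal.ofReal_mul (by positivity)]
    _ ≤ _ := by
        apply ENNReal.ofReal_le_ofReal
        have hE2 := EE_sq S c
        have e4 : (EE S c ^ 2) ^ 2 ≤ (KK * BB S c) ^ 2 := by gcongr
        calc _ = (EE S c ^ 2) / lam ^ 6 * (9 * (600000 * π * BB S c) * (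
              4 * (EE S c ^ 2) * (144 * π * BB S c)
              + 144 * (EE S c ^ 2) * jj * (2 * π * BB S c)
              + 16 * (EE S c ^ 2) ^ 2 * jj * (2 * π))) := by
              rw [div_pow, ← pow_mul]; ring
          _ ≤ (KK * BB S c) / lam ^ 6 * (9 * (600000 * π * BB S c) * (
              4 * (KK * BB S c) * (144 * π * BB S c)
              + 144 * (KK * BB S c) * jj * (2 * π * BB S c)
              + 16 * (KK * BB S c) ^ 2 * jj * (2 * π))) := by
              gcongr
          _ = _ := by unfold CR; ring


/-! ### The smooth case -/

lemma one1_def : (one1 : ℝ → ℂ) = fun _ => 1 := rfl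

/-- the kernel of the smoothing part -/
def kap (t : ℝ) : ℝ := 1 / t ^ 2 - 1 / (4 * Real.sin (t / 2) ^ 2)

lemma kap_meas : Measurable kap := by unfold kap; fun_prop

lemma kap_bound_pos {t : ℝ} (h0 : 0 < t) (ht : t ≤ π) : |kap t| ≤ 10 := by
  obtain ⟨x, rfl⟩ : ∃ x, t = 2 * x := ⟨t / 2, by ring⟩
  have hx : 0 < x := by linarith
  have hx2 : x ≤ π / 2 := by linarith
  have h1 : Real.sin x ≤ x := Real.sin_le hx.le
  have h2 := Real.sin_ge_sub_cube hx.le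
  have h3 := Real.mul_le_sin hx.le hx2
  have h4 : x / 2 ≤ Real.sin x := by
    refine le_trans ?_ h3
    rw [div_mul_eq_mul_div, div_le_div_iff₀ (by norm_num) pi_pos]
    nlinarith [Real.pi_lt_four]
  have hs : 0 < Real.sin x := by linarith
  have e : kap (2 * x) = -((x ^ 2 - Real.sin x ^ 2) / (4 * x ^ 2 * Real.sin x ^ 2)) := by
    unfold kap
    rw [show 2 * x / 2 = x by ring]
    field_simp
    ring
  rw [e, abs_neg, abs_of_nonneg, div_le_iff₀ (by positivity)]
  · have a1 : x ^ 2 - Real.sin x ^ 2 ≤ (x ^ 3 / 6) * (2 * x) := by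
      have : x ^ 2 - Real.sin x ^ 2 = (x - Real.sin x) * (x + Real.sin x) := by ring
      rw [this]
      apply mul_le_mul <;> first | positivity | linarith
    have a2 : (x / 2) ^ 2 ≤ Real.sin x ^ 2 := by gcongr
    have a3 : x ^ 2 * (x / 2) ^ 2 ≤ x ^ 2 * Real.sin x ^ 2 := by gcongr
    nlinarith [pow_pos hx 4]
  · apply div_nonneg _ (by positivity)
    have : Real.sin x ^ 2 ≤ x ^ 2 := by gcongr
    linarith

lemma kap_bound {t : ℝ} (ht : t ∈ Set.Icc (-π) π) : |kap t| ≤ 10 := by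
  rcases lt_trichotomy t 0 with h | h | h
  · have : kap t = kap (-t) := by
      unfold kap; rw [neg_div, Real.sin_neg]; ring
    rw [this]
    exact kap_bound_pos (by linarith) (by linarith [ht.1])
  · subst h; norm_num [kap]
  · exact kap_bound_pos h ht.2

lemma kap_int {f : ℝ → ℂ} (hf : Continuous f) :
    IntervalIntegrable (fun t => (kap t : ℂ) * f t) volume (-π) π := by
  rw [intervalIntegrable_iff_integrableOn_Ioc_of_le (by linarith [pi_pos])]
  have h1 : IntegrableOn f (Set.Ioc (-π) π) :=
    (hf.integrableOn_Icc (a := -π) (b := π)).mono_set Set.Ioc_subset_Icc_self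
  refine Integrable.bdd_mul (c := 10) h1 ?_ ?_
  · exact (Complex.measurable_ofReal.comp kap_meas).aestronglyMeasurable
  · filter_upwards [ae_restrict_mem measurableSet_Ioc] with t ht
    simpa using kap_bound (Set.Ioc_subset_Icc_self ht)

def tk (k : ℤ) : ℂ := ∫ t in (-π)..π, (kap t : ℂ) * (Complex.exp (Complex.I * k * t) - 1)

lemma tk_bound (k : ℤ) : ‖tk k‖ ≤ 40 * π := by
  have := intervalIntegral.norm_integral_le_of_norm_le_const (a := -π) (b := π) (C := 20)
    (f := fun t : ℝ => (kap t : ℂ) * (Complex.exp (Complex.I * k * t) - 1)) ?_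
  · refine this.trans (le_of_eq ?_)
    rw [sub_neg_eq_add, abs_of_pos (by linarith [pi_pos])]; ring
  · intro t ht
    rw [Set.uIoc_of_le (by linarith [pi_pos])] at ht
    have h1 := kap_bound (Set.Ioc_subset_Icc_self ht)
    have h2 : ‖Complex.exp (Complex.I * k * t) - 1‖ ≤ 2 := by
      refine (norm_sub_le _ _).trans ?_
      rw [norm_exp_int]; norm_num
    rw [norm_mul, Complex.norm_real, Real.norm_eq_abs]
    calc _ ≤ (10 : ℝ) * 2 := by gcongr
      _ = _ := by norm_num

lemma TP_tk (S : Finset ℤ) (c : ℤ → ℂ) (s : ℝ) :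
    ∫ t in (-π)..π, (kap t : ℂ) * (TP S c (s + t) - TP S c s) = TP S (fun k => tk k * c k) s := by
  have e : ∀ t : ℝ, (kap t : ℂ) * (TP S c (s + t) - TP S c s)
      = ∑ k ∈ S, (c k * Complex.exp (Complex.I * k * s)) *
        ((kap t : ℂ) * (Complex.exp (Complex.I * k * t) - 1)) := by
    intro t
    rw [TP_shift, TP_sub, TP, Finset.mul_sum]
    refine Finset.sum_congr rfl fun k _ => by ring
  simp only [e]
  rw [intervalIntegral.integral_finsetSum]
  · simp only [intervalIntegral.integral_const_mul, TP, tk]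
    refine Finset.sum_congr rfl fun k _ => by ring
  · intro k _
    exact (kap_int (by fun_prop)).const_mul _

/-- the complexified integrand -/
def HH (Y y : ℝ → ℂ) (s t : ℝ) : ℂ :=
  ((((((y (s + t)) / ((t : ℂ)⁻¹ * (Y (s + t) - Y s))) ^ 2).re - 1) / t
    + (1 / t - t / (4 * Real.sin (t / 2) ^ 2)) : ℝ) : ℂ) * ((t : ℂ)⁻¹ * (Y (s + t) - Y s))

lemma HH_eq {S : Finset ℤ} {c : ℤ → ℂ} {lam : ℝ} (h : WS S c lam) (hlam : 0 < lam) (s t : ℝ)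
    (ht : t ∈ Set.Icc (-π) π) (h0 : t ≠ 0) :
    HH (TP S c) (TP S (dc c)) s t =
      F0 (TP S (dc c)) (TP S (dc (dc c))) (cj (TP S (dc c))) (cj (TP S (dc (dc c)))) s t
      + (kap t : ℂ) * (TP S c (s + t) - TP S c s) := by
  have ht' : (t : ℂ) ≠ 0 := by exact_mod_cast h0
  have hsd := h.sd hlam
  have e1 := Av_one (TP_continuous S (dc c)) (TP_hasDerivAt S c) s t
  have e2 := Av_id (TP_continuous S (dc (dc c))) (TP_hasDerivAt S (dc c)) s t
  have n1 := hsd.nl s t ht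
  have n2 := hsd.nlb s t ht
  unfold HH F0
  rw [← e1]
  rw [inv_mul_cancel_left₀ ht']
  rw [Av_cj (φ := one1) (by simp)] at n2 ⊢
  rw [Av_cj (φ := idw) (by simp)]
  simp only [show (fun _ : ℝ => (1:ℂ)) = one1 from rfl, show (fun u : ℝ => (u:ℂ)) = idw from rfl] at *
  have e3 : TP S (dc c) (s + t) = t * Av idw (TP S (dc (dc c))) s t + Av one1 (TP S (dc c)) s t := by
    rw [e2]; ring
  rw [e3]
  generalize Av idw (TP S (dc (dc c))) s t = p at *
  generalize Av one1 (TP S (dc c)) s t = l at *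
  have er : ∀ w : ℂ, ((w.re : ℝ) : ℂ) = (w + starRingEnd ℂ w) / 2 := by
    intro w; rw [Complex.re_eq_add_conj]
  have ek : (1 / t - t / (4 * Real.sin (t / 2) ^ 2) : ℝ) = kap t * t := by
    unfold kap; field_simp
  rw [ek]
  push_cast
  rw [er]
  simp only [map_pow, map_div₀, map_add, map_mul, Complex.conj_ofReal]
  unfold F0a
  field_simp
  ring

def GG (S : Finset ℤ) (c : ℤ → ℂ) (s : ℝ) : ℂ := ∫ t in (-π)..π, HH (TP S c) (TP S (dc c)) s t

lemma GG_eq {S : Finset ℤ} {c : ℤ → ℂ} {lam : ℝ} (h : WS S c lam) (hlam : 0 < lam) (s : ℝ) :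
    GG S c s = (∫ t in (-π)..π, F0 (TP S (dc c)) (TP S (dc (dc c))) (cj (TP S (dc c)))
      (cj (TP S (dc (dc c)))) s t) + TP S (fun k => tk k * c k) s := by
  unfold GG
  rw [SD.ae_congr_int (fun t ht h0 => HH_eq h hlam s t ht h0),
    intervalIntegral.integral_add (SD.secint (h.sd hlam).cF0 s), TP_tk]
  apply kap_int
  have := TP_continuous S c
  fun_prop

def G2 (S : Finset ℤ) (c : ℤ → ℂ) (s : ℝ) : ℂ :=
  (-(2 / π : ℂ) * TP S (dc (dc c)) s + Rr S c s) + TP S (dc (dc (fun k => tk k * c k))) s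

lemma GG_smooth {S : Finset ℤ} {c : ℤ → ℂ} {lam : ℝ} (h : WS S c lam) (hlam : 0 < lam) :
    ∃ G1 : ℝ → ℂ, (∀ s, HasDerivAt (GG S c) (G1 s) s) ∧ (∀ s, HasDerivAt G1 (G2 S c s) s) ∧
      Continuous (G2 S c) := by
  have hsd := h.sd hlam
  have d0 : GG S c = (fun s => ∫ t in (-π)..π, F0 (TP S (dc c)) (TP S (dc (dc c)))
      (cj (TP S (dc c))) (cj (TP S (dc (dc c)))) s t) + TP S (fun k => tk k * c k) :=
    funext (GG_eq h hlam)
  have d1 := fun s => (hsd.deriv1 s).add (TP_hasDerivAt S (fun k => tk k * c k) s)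
  have d2 := fun s => (hsd.deriv2 s).add (TP_hasDerivAt S (dc (fun k => tk k * c k)) s)
  rw [← d0] at d1
  exact ⟨_, d1, d2, hsd.cont2.add (TP_continuous _ _)⟩

lemma GG_per (S : Finset ℤ) (c : ℤ → ℂ) : Function.Periodic (GG S c) (2 * π) := by
  intro s
  unfold GG HH
  simp only [add_right_comm s (2 * π), TP_periodic S _ _]

/-- Fourier coefficients -/
def fc (f : ℝ → ℂ) (k : ℤ) : ℂ := ∫ s in (-π)..π, f s * Complex.exp (-Complex.I * k * s)

lemma fc_deriv {f f1 f2 : ℝ → ℂ} (h1 : ∀ s, HasDerivAt f (f1 s) s)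
    (h2 : ∀ s, HasDerivAt f1 (f2 s) s) (hc : Continuous f2) (hp : Function.Periodic f (2 * π))
    (k : ℤ) : fc f2 k = -(k:ℂ) ^ 2 * fc f k := by
  have hp1 : Function.Periodic f1 (2 * π) := by
    intro s
    have a := (h1 (s + 2 * π)).comp_add_const s (2 * π)
    have b : (fun x => f (x + 2 * π)) = f := funext hp
    rw [b] at a
    exact a.unique (h1 s)
  have hc0 : Continuous f := continuous_iff_continuousAt.2 fun s => (h1 s).continuousAt
  have hc1 : Continuous f1 := continuous_iff_continuousAt.2 fun s => (h2 s).continuousAt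
  have he : ∀ s : ℝ, HasDerivAt (fun s : ℝ => Complex.exp (-Complex.I * k * s))
      (-Complex.I * k * Complex.exp (-Complex.I * k * s)) s := by
    intro s
    have h1 : HasDerivAt (fun s : ℝ => -Complex.I * (k : ℂ) * (s : ℂ)) (-Complex.I * (k : ℂ)) s := by
      simpa using (Complex.ofRealCLM.hasDerivAt (x := s)).const_mul (-Complex.I * (k : ℂ))
    exact h1.cexp.congr_deriv (by ring)
  have hpr : ∀ s : ℝ, HasDerivAt (fun s : ℝ => (f1 s + Complex.I * k * f s) *
      Complex.exp (-Complex.I * k * s))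
      (f2 s * Complex.exp (-Complex.I * k * s)
        + (k:ℂ) ^ 2 * (f s * Complex.exp (-Complex.I * k * s))) s := by
    intro s
    refine (((h2 s).add ((h1 s).const_mul (Complex.I * k))).mul (he s)).congr_deriv ?_
    simp only [Pi.add_apply]
    linear_combination (-(k:ℂ) ^ 2 * f s * Complex.exp (-Complex.I * k * s)) * Complex.I_sq
  have hIntg := intervalIntegral.integral_eq_sub_of_hasDerivAt (a := -π) (b := π)
    (fun s _ => hpr s) (by apply Continuous.intervalIntegrable; fun_prop)
  rw [intervalIntegral.integral_add, intervalIntegral.integral_const_mul] at hIntg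
  · have hq : Function.Periodic (fun s : ℝ => (f1 s + Complex.I * k * f s) *
      Complex.exp (-Complex.I * k * s)) (2 * π) := by
      intro s
      have := exp_int_periodic (-k) s
      simp only [Int.cast_neg, mul_neg, ← neg_mul] at this
      simp only [this, hp s, hp1 s]
    have e := hq (-π)
    rw [show -π + 2 * π = π by ring] at e
    simp only at hIntg e
    rw [e, sub_self] at hIntg
    unfold fc
    linear_combination hIntg
  all_goals apply Continuous.intervalIntegrable; fun_prop

lemma fc_bessel {f : ℝ → ℂ} (hf : Continuous f) (T : Finset ℤ) :
    ∑ k ∈ T, ‖fc f k‖ ^ 2 ≤ 2 * π * ∫ s in (-π)..π, ‖f s‖ ^ 2 := by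
  have hpp : -π < π := by linarith [pi_pos]
  have hL : MemLp f 2 (volume.restrict (Set.Ioc (-π) π)) := by
    rw [memLp_two_iff_integrable_sq_norm hf.aestronglyMeasurable]
    have : Continuous fun x => ‖f x‖ ^ 2 := by fun_prop
    exact (this.integrableOn_Icc (a := -π) (b := π)).mono_set Set.Ioc_subset_Icc_self
  have h := hasSum_sq_fourierCoeffOn hpp hL
  have e : ∀ k, ‖fc f k‖ ^ 2 = (2 * π) ^ 2 * ‖fourierCoeffOn hpp f k‖ ^ 2 := by
    intro k
    have : fourierCoeffOn hpp f k = ((2 * π : ℝ) : ℂ)⁻¹ * fc f k := by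
      rw [fourierCoeffOn_eq_integral, fc, Complex.real_smul]
      congr 1
      · push_cast; rw [one_div]; congr 1; ring
      · apply intervalIntegral.integral_congr
        intro s _
        simp only [fourier_coe_apply, smul_eq_mul]
        rw [mul_comm]
        congr 2
        have : (π : ℂ) ≠ 0 := by exact_mod_cast pi_ne_zero
        push_cast
        field_simp
        ring
    rw [this, norm_mul, norm_inv, Complex.norm_real, Real.norm_eq_abs, abs_of_pos (by positivity)]
    have := pi_pos
    field_simp
  simp only [e]
  rw [← Finset.mul_sum]
  have := sum_le_hasSum T (fun _ _ => by positivity) h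
  calc _ ≤ (2 * π) ^ 2 * ((π - -π)⁻¹ • ∫ x in (-π)..π, ‖f x‖ ^ 2) := by gcongr
    _ = _ := by
      rw [smul_eq_mul, show π - -π = 2 * π by ring]
      have := pi_pos
      field_simp

def CG : ℝ := 9 * ((2 / π) ^ 2 * (2 * π) * KK ^ 3 + CR + 2 * π * (40 * π) ^ 2 * KK ^ 3)

lemma CG_nonneg : 0 ≤ CG := by
  have := KK_nonneg
  have := CR_nonneg
  unfold CG; positivity

lemma BB_le {S : Finset ℤ} {c : ℤ → ℂ} {lam : ℝ} (h : WS S c lam) (hlam : 0 < lam) :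
    BB S c ≤ KK ^ 3 * (BB S c ^ 4 / lam ^ 6) := by
  have hB := BB_nonneg S c
  have h1 : lam ^ 2 ≤ KK * BB S c := by
    refine le_trans ?_ (EE_sq S c)
    have := h.le_EE
    gcongr
  have h2 : (lam ^ 2) ^ 3 ≤ (KK * BB S c) ^ 3 := by gcongr
  rw [mul_div_assoc', le_div_iff₀ (by positivity)]
  calc BB S c * lam ^ 6 = BB S c * (lam ^ 2) ^ 3 := by ring
    _ ≤ BB S c * (KK * BB S c) ^ 3 := by gcongr
    _ = _ := by ring

lemma G2_L2 {S : Finset ℤ} {c : ℤ → ℂ} {lam : ℝ} (h : WS S c lam) (hlam : 0 < lam) :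
    ∫⁻ s in JJ, ‖G2 S c s‖ₑ ^ 2 ≤ ENNReal.ofReal (CG * (BB S c ^ 4 / lam ^ 6)) := by
  have hK := KK_nonneg
  have hR := CR_nonneg
  have hB := BB_nonneg S c
  have hBB := BB_le h hlam
  have hzm : Measurable (TP S (dc (dc c))) := (TP_continuous _ _).measurable
  have hzm2 : Measurable (TP S (dc (dc (fun k => tk k * c k)))) := (TP_continuous _ _).measurable
  have h1 : ∀ s, ‖G2 S c s‖ₑ ^ 2 ≤ 9 * (ENNReal.ofReal ((2 / π) ^ 2) * ‖TP S (dc (dc c)) s‖ₑ ^ 2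
      + ‖TP S (dc (dc (fun k => tk k * c k))) s‖ₑ ^ 2 + ‖Rr S c s‖ₑ ^ 2) := by
    intro s
    have : ‖G2 S c s‖ₑ ≤ ‖-(2 / π : ℂ) * TP S (dc (dc c)) s‖ₑ
        + ‖TP S (dc (dc (fun k => tk k * c k))) s‖ₑ + ‖Rr S c s‖ₑ := by
      unfold G2
      rw [add_right_comm]
      exact (enorm_add_le _ _).trans (add_le_add_left (enorm_add_le _ _) _)
    refine (pow_le_pow_left' this 2).trans ((sq3 _ _ _).trans (le_of_eq ?_))
    have e : ‖-(2 / π : ℂ)‖ₑ = ENNReal.ofReal (2 / π) := by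
      rw [enorm_neg, ← ofReal_norm]
      congr 1
      rw [norm_div, Complex.norm_real, Real.norm_eq_abs, abs_of_pos pi_pos]; simp
    rw [enorm_mul, mul_pow, e, ENNReal.ofReal_pow (by positivity)]
  refine (lintegral_mono h1).trans ?_
  rw [lintegral_const_mul' _ _ (by finiteness), lintegral_add_left (by fun_prop),
    lintegral_add_left (by fun_prop), lintegral_const_mul' _ _ (by finiteness), parsevalJ, parsevalJ]
  have a1 : 2 * π * ∑ k ∈ S, ‖dc (dc c) k‖ ^ 2 ≤ 2 * π * (KK ^ 3 * (BB S c ^ 4 / lam ^ 6)) := by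
    gcongr; exact (d_l2 S c).trans hBB
  have a2 : 2 * π * ∑ k ∈ S, ‖dc (dc (fun k => tk k * c k)) k‖ ^ 2
      ≤ 2 * π * ((40 * π) ^ 2 * (KK ^ 3 * (BB S c ^ 4 / lam ^ 6))) := by
    gcongr
    calc _ ≤ ∑ k ∈ S, (40 * π) ^ 2 * ‖dc (dc c) k‖ ^ 2 := by
          gcongr with k hk
          have : dc (dc (fun k => tk k * c k)) k = tk k * dc (dc c) k := by
            simp only [dc]; ring
          rw [this, norm_mul, mul_pow]
          gcongr
          exact tk_bound k
      _ ≤ _ := by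
          rw [← Finset.mul_sum]
          gcongr
          exact (d_l2 S c).trans hBB
  calc _ ≤ ENNReal.ofReal 9 * (ENNReal.ofReal ((2 / π) ^ 2) *
        ENNReal.ofReal (2 * π * (KK ^ 3 * (BB S c ^ 4 / lam ^ 6)))
        + ENNReal.ofReal (2 * π * ((40 * π) ^ 2 * (KK ^ 3 * (BB S c ^ 4 / lam ^ 6))))
        + ENNReal.ofReal (CR * (BB S c ^ 4 / lam ^ 6))) := by
        rw [show ENNReal.ofReal 9 = 9 by simp]
        gcongr
        exact Rr_L2 h hlam
    _ = _ := by
        rw [← ENNReal.ofReal_mul (by positivity), ← ENNReal.ofReal_add (by positivity) (by positivity),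
          ← ENNReal.ofReal_add (by positivity) (by positivity), ← ENNReal.ofReal_mul (by positivity)]
        congr 1
        unfold CG; ring

theorem smooth_main {S : Finset ℤ} {c : ℤ → ℂ} {lam : ℝ} (h : WS S c lam) (hlam : 0 < lam)
    (T : Finset ℤ) :
    ∑ k ∈ T, (k:ℝ) ^ 4 * ‖fc (GG S c) k‖ ^ 2 ≤ 2 * π * (CG * (BB S c ^ 4 / lam ^ 6)) := by
  obtain ⟨G1, h1, h2, hc⟩ := GG_smooth h hlam
  have hB := BB_nonneg S c
  have hG := CG_nonneg
  have e : ∀ k : ℤ, (k:ℝ) ^ 4 * ‖fc (GG S c) k‖ ^ 2 = ‖fc (G2 S c) k‖ ^ 2 := by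
    intro k
    rw [fc_deriv h1 h2 hc (GG_per S c), norm_mul, norm_neg, norm_pow, Complex.norm_intCast,
      mul_pow, sq_abs]
    ring
  simp only [e]
  refine (fc_bessel hc T).trans ?_
  gcongr
  rw [intervalIntegral.integral_of_le (by linarith [pi_pos]),
    integral_eq_lintegral_of_nonneg_ae (ae_of_all _ fun _ => by positivity)
      (by fun_prop)]
  apply ENNReal.toReal_le_of_le_ofReal (by positivity)
  refine le_trans (le_of_eq ?_) (G2_L2 h hlam)
  apply lintegral_congr
  intro s
  rw [ENNReal.ofReal_pow (norm_nonneg _), ofReal_norm]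


/-! ### Passage to the limit -/

/-- Fourier inversion for continuous periodic functions with summable coefficients -/
lemma fourier_inv {Y : ℝ → ℂ} (hc : Continuous Y) (hp : Function.Periodic Y (2 * π))
    (hs : Summable (fun k => ‖fc Y k / (2 * π)‖)) (s : ℝ) :
    HasSum (fun k : ℤ => fc Y k / (2 * π) * Complex.exp (Complex.I * k * s)) (Y s) := by
  have : Fact (0 < 2 * π) := ⟨by positivity⟩
  have hpi : (π : ℂ) ≠ 0 := by exact_mod_cast pi_ne_zero
  let f : C(AddCircle (2 * π), ℂ) := ⟨hp.lift, continuous_coinduced_dom.mpr hc⟩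
  have hf : ∀ x : ℝ, f (x : AddCircle (2 * π)) = Y x := fun x => hp.lift_coe x
  have e : ∀ k, fourierCoeff f k = fc Y k / (2 * π) := by
    intro k
    rw [fourierCoeff_eq_intervalIntegral _ _ (-π), show -π + 2 * π = π by ring, fc,
      Complex.real_smul, div_eq_inv_mul (∫ s in (-π)..π, _)]
    congr 1
    · push_cast; rw [one_div]
    · apply intervalIntegral.integral_congr
      intro s _
      simp only [fourier_coe_apply, smul_eq_mul, hf]
      rw [mul_comm]
      congr 2
      push_cast
      field_simp
  have hs' : Summable (fourierCoeff f) := by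
    rw [show fourierCoeff f = _ from funext e]
    exact hs.of_norm
  have := has_pointwise_sum_fourier_series_of_summable hs' (s : AddCircle (2 * π))
  rw [hf] at this
  convert this using 2 with k
  rw [e, smul_eq_mul, fourier_coe_apply]
  congr 2
  push_cast
  field_simp

structure LD (Y y : ℝ → ℂ) (c : ℤ → ℂ) (lam : ℝ) : Prop where
  hp : Function.Periodic Y (2 * π)
  hd : ∀ s, HasDerivAt Y (y s) s
  hc : ∀ k, c k = fc Y k / (2 * π)
  hlam : 0 < lam
  hws : ∀ s t, |t| ≤ π → lam * |t| ≤ ‖Y (s + t) - Y s‖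
  hB : Summable (fun k : ℤ => |(k:ℝ)| ^ (9/2:ℝ) * ‖c k‖ ^ 2)

namespace LD
variable {Y y : ℝ → ℂ} {c : ℤ → ℂ} {lam : ℝ}

def B (c : ℤ → ℂ) : ℝ := ∑' k : ℤ, |(k:ℝ)| ^ (9/2:ℝ) * ‖c k‖ ^ 2

def Eb (c : ℤ → ℂ) : ℝ := Real.sqrt (KK * B c)

lemma Eb_nonneg : 0 ≤ Eb c := Real.sqrt_nonneg _

lemma BB_le (h : LD Y y c lam) (S : Finset ℤ) : BB S c ≤ B c :=
  h.hB.sum_le_tsum S fun _ _ => by positivity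

lemma EE_le (h : LD Y y c lam) (S : Finset ℤ) : EE S c ≤ Eb c := by
  apply Real.le_sqrt_of_sq_le
  have := KK_nonneg
  have := h.BB_le S
  exact (EE_sq S c).trans (by gcongr)

lemma sumE (h : LD Y y c lam) : Summable (fun k : ℤ => |(k:ℝ)| ^ (27/16:ℝ) * ‖c k‖) :=
  summable_of_sum_le (fun _ => by positivity) h.EE_le

lemma sumd (h : LD Y y c lam) : Summable (fun k : ℤ => ‖dc c k‖) := by
  refine Summable.of_nonneg_of_le (fun _ => norm_nonneg _) (fun k => ?_) h.sumE
  rw [norm_dc]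
  have := int_rpow_mono k (a := 1) (b := 27/16) (by norm_num) (by norm_num)
  rw [Real.rpow_one] at this
  gcongr

lemma sumc (h : LD Y y c lam) : Summable (fun k : ℤ => ‖c k‖) := by
  refine Summable.of_norm_bounded_eventually h.sumd ?_
  rw [Filter.eventually_cofinite]
  refine (Set.finite_singleton (0:ℤ)).subset fun k hk => ?_
  by_contra hk0
  apply hk
  rw [norm_norm, norm_dc]
  have : (1:ℝ) ≤ |(k:ℝ)| := by exact_mod_cast Int.one_le_abs hk0
  nlinarith [norm_nonneg (c k)]

lemma sumY (h : LD Y y c lam) (s : ℝ) :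
    HasSum (fun k : ℤ => c k * Complex.exp (Complex.I * k * s)) (Y s) := by
  have hcY : Continuous Y := continuous_iff_continuousAt.2 fun s => (h.hd s).continuousAt
  have := fourier_inv hcY h.hp (by simpa only [← h.hc] using h.sumc) s
  simpa only [← h.hc] using this

lemma y_eq (h : LD Y y c lam) (s : ℝ) :
    ∑' k : ℤ, dc c k * Complex.exp (Complex.I * k * s) = y s := by
  have h1 := hasDerivAt_tsum (𝕜 := ℝ) (g := fun (k : ℤ) (s : ℝ) => c k * Complex.exp (Complex.I * k * s))
    (g' := fun k s => dc c k * Complex.exp (Complex.I * k * s)) (y₀ := 0) h.sumd ?_ ?_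
    (h.sumY 0).summable s
  · have e : (fun z : ℝ => ∑' k : ℤ, c k * Complex.exp (Complex.I * k * z)) = Y :=
      funext fun z => (h.sumY z).tsum_eq
    rw [e] at h1
    exact h1.unique (h.hd s)
  · intro k s
    have := TP_hasDerivAt {k} c s
    rw [show TP {k} c = fun s : ℝ => c k * Complex.exp (Complex.I * k * s) from
      funext fun s => by simp [TP]] at this
    simpa [TP] using this
  · intro k s
    rw [norm_mul, norm_exp_int, mul_one]

lemma limy (h : LD Y y c lam) : TendstoUniformly (fun S s => TP S (dc c) s) y atTop := by
  have := tendstoUniformly_tsum (f := fun (k : ℤ) (s : ℝ) => dc c k * Complex.exp (Complex.I * k * s))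
    h.sumd (fun k s => by rw [norm_mul, norm_exp_int, mul_one])
  rwa [show (fun s : ℝ => ∑' k : ℤ, dc c k * Complex.exp (Complex.I * k * s)) = y from
    funext h.y_eq] at this

lemma limY (h : LD Y y c lam) (s : ℝ) : Tendsto (fun S => TP S c s) atTop (𝓝 (Y s)) := h.sumY s

lemma evWS (h : LD Y y c lam) : ∀ᶠ S in atTop, WS S c (lam / 2) := by
  have h1 := Metric.tendstoUniformly_iff.1 h.limy (lam / 2) (by linarith [h.hlam])
  filter_upwards [h1] with S hS
  intro s t ht
  have h2 : ‖(Y (s + t) - TP S c (s + t)) - (Y s - TP S c s)‖ ≤ lam / 2 * ‖s + t - s‖ := by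
    refine Convex.norm_image_sub_le_of_norm_hasDerivWithin_le (s := Set.univ)
      (f := fun x => Y x - TP S c x) (f' := fun x => y x - TP S (dc c) x) ?_ ?_ convex_univ
      (Set.mem_univ _) (Set.mem_univ _)
    · intro x _
      exact ((h.hd x).sub (TP_hasDerivAt S c x)).hasDerivWithinAt
    · intro x _
      have := hS x
      rw [dist_eq_norm] at this
      exact this.le
  rw [add_sub_cancel_left, Real.norm_eq_abs] at h2
  have h3 := h.hws s t ht
  have h4 : ‖Y (s + t) - Y s‖ ≤ ‖TP S c (s + t) - TP S c s‖
      + ‖(Y (s + t) - TP S c (s + t)) - (Y s - TP S c s)‖ := by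
    refine le_trans (le_of_eq ?_) (norm_add_le _ _)
    congr 1; ring
  linarith

lemma HH_lim (h : LD Y y c lam) (s t : ℝ) (ht : |t| ≤ π) (h0 : t ≠ 0) :
    Tendsto (fun S => HH (TP S c) (TP S (dc c)) s t) atTop (𝓝 (HH Y y s t)) := by
  have ht' : (t : ℂ)⁻¹ ≠ 0 := inv_ne_zero (by exact_mod_cast h0)
  have hn : Y (s + t) - Y s ≠ 0 := by
    intro e
    have := h.hws s t ht
    rw [e, norm_zero] at this
    have := mul_pos h.hlam (abs_pos.2 h0)
    linarith
  have l1 := (h.limY (s + t)).sub (h.limY s) |>.const_mul (t : ℂ)⁻¹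
  have l2 := ((h.limy.tendsto_at (s + t)).div l1 (mul_ne_zero ht' hn)).pow 2
  have l3 := (Complex.continuous_re.tendsto _).comp l2
  have l4 := ((l3.sub_const 1).div_const t).add_const (1 / t - t / (4 * Real.sin (t / 2) ^ 2))
  have l5 := (Complex.continuous_ofReal.tendsto _).comp l4
  exact l5.mul l1

lemma p_bound (S : Finset ℤ) (c : ℤ → ℂ) (s t : ℝ) (h0 : t ≠ 0) :
    ‖Av idw (TP S (dc (dc c))) s t‖ ≤ 4 * EE S c * |t| ^ (-(5/16):ℝ) := by
  have hz := TP_continuous S (dc (dc c))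
  have ht0 : 0 < |t| := abs_pos.2 h0
  have e1 := Av_one hz (TP_hasDerivAt S (dc c)) s t
  have e2 : Av omw (TP S (dc (dc c))) s t
      = Av one1 (TP S (dc (dc c))) s t - Av idw (TP S (dc (dc c))) s t :=
    Av_sub (φ := one1) (ψ := idw) (by fun_prop) (by fun_prop) hz s t
  have b1 : ‖Av one1 (TP S (dc (dc c))) s t‖ ≤ 2 * EE S c * |t| ^ (-(5/16):ℝ) := by
    have b2 := y_holder S c s t
    rw [← e1, norm_mul, Complex.norm_real, Real.norm_eq_abs] at b2
    have b3 : |t| ^ (11/16:ℝ) = |t| * |t| ^ (-(5/16):ℝ) := by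
      nth_rw 2 [← Real.rpow_one |t|]
      rw [← Real.rpow_add ht0]; norm_num
    rw [b3, mul_left_comm] at b2
    exact le_of_mul_le_mul_left b2 ht0
  have b2 := m_bound S c s t h0
  rw [show Av idw (TP S (dc (dc c))) s t = Av one1 (TP S (dc (dc c))) s t
    - Av omw (TP S (dc (dc c))) s t by rw [e2]; ring]
  refine (norm_sub_le _ _).trans ?_
  linarith

def bd (c : ℤ → ℂ) (lam : ℝ) (t : ℝ) : ℝ :=
  8 * Eb c * |t| ^ (-(5/16):ℝ) + (32 * Eb c ^ 2 * lam⁻¹ + 40 * Eb c)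

lemma bd_int (c : ℤ → ℂ) (lam : ℝ) : IntervalIntegrable (bd c lam) volume (-π) π := by
  unfold bd
  apply IntervalIntegrable.add
  · apply IntervalIntegrable.const_mul
    rw [intervalIntegrable_iff_integrableOn_Ioc_of_le (by linarith [pi_pos])]
    refine ⟨Measurable.aestronglyMeasurable (by fun_prop), ?_⟩
    have := pow_int (-(5/16)) (by norm_num)
    rw [hasFiniteIntegral_iff_ofReal (ae_of_all _ fun _ => by positivity)]
    exact lt_top_iff_ne_top.2 this
  · exact intervalIntegrable_const

lemma F0a_bound (t p l : ℂ) (hl : l ≠ 0) :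
    ‖F0a t p (starRingEnd ℂ p) l l⁻¹ (starRingEnd ℂ l)⁻¹‖ ≤ 2 * ‖p‖ + ‖t‖ * ‖p‖ ^ 2 * ‖l‖⁻¹ := by
  have hl' : ‖l‖ ≠ 0 := norm_ne_zero_iff.2 hl
  unfold F0a
  refine (norm_add_le _ _).trans ?_
  have h1 : ‖p + starRingEnd ℂ p * l * (starRingEnd ℂ l)⁻¹‖ ≤ 2 * ‖p‖ := by
    refine (norm_add_le _ _).trans (le_of_eq ?_)
    rw [norm_mul, norm_mul, norm_inv, RCLike.norm_conj, RCLike.norm_conj]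
    field_simp; ring
  have h2 : ‖t / 2 * (p ^ 2 * l⁻¹ + starRingEnd ℂ p ^ 2 * l * (starRingEnd ℂ l)⁻¹ ^ 2)‖
      ≤ ‖t‖ * ‖p‖ ^ 2 * ‖l‖⁻¹ := by
    rw [norm_mul, norm_div, Complex.norm_ofNat]
    calc _ ≤ ‖t‖ / 2 * (‖p ^ 2 * l⁻¹‖ + ‖starRingEnd ℂ p ^ 2 * l * (starRingEnd ℂ l)⁻¹ ^ 2‖) := by
          gcongr; exact norm_add_le _ _
      _ = _ := by
          simp only [norm_mul, norm_pow, norm_inv, RCLike.norm_conj]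
          field_simp; ring
  linarith

lemma HH_bound (h : LD Y y c lam) {S : Finset ℤ} (hS : WS S c (lam / 2)) (s t : ℝ)
    (ht : t ∈ Set.Icc (-π) π) (h0 : t ≠ 0) :
    ‖HH (TP S c) (TP S (dc c)) s t‖ ≤ bd c (lam / 2) t := by
  have hl2 : 0 < lam / 2 := by linarith [h.hlam]
  have ht0 : 0 < |t| := abs_pos.2 h0
  have ht4 : |t| ≤ 4 := (abs_le.2 ht).trans Real.pi_lt_four.le
  have hE := EE_nonneg S c
  have hEb := h.EE_le S
  have hEb0 : 0 ≤ Eb c := Eb_nonneg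
  rw [HH_eq hS hl2 s t ht h0]
  refine (norm_add_le _ _).trans ?_
  have hp := p_bound S c s t h0
  have hl := hS.l s t ht
  have a1 : ‖(kap t : ℂ) * (TP S c (s + t) - TP S c s)‖ ≤ 40 * Eb c := by
    rw [← Av_one (TP_continuous S (dc c)) (TP_hasDerivAt S c) s t, norm_mul, norm_mul,
      Complex.norm_real, Complex.norm_real, Real.norm_eq_abs, Real.norm_eq_abs]
    have := kap_bound ht
    have := (Av_norm_le S c s t).trans hEb
    calc _ ≤ (10 : ℝ) * (4 * Eb c) := by gcongr
      _ = _ := by ring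
  have a2 : ‖F0 (TP S (dc c)) (TP S (dc (dc c))) (cj (TP S (dc c))) (cj (TP S (dc (dc c)))) s t‖
      ≤ 8 * Eb c * |t| ^ (-(5/16):ℝ) + 32 * Eb c ^ 2 * (lam / 2)⁻¹ := by
    unfold F0
    rw [Av_cj (φ := one1) (by simp), Av_cj (φ := idw) (by simp)]
    refine (F0a_bound _ _ _ ((hS.sd hl2).nl s t ht)).trans ?_
    rw [Complex.norm_real, Real.norm_eq_abs]
    have hp2 : ‖Av idw (TP S (dc (dc c))) s t‖ ≤ 4 * Eb c * |t| ^ (-(5/16):ℝ) :=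
      hp.trans (by gcongr)
    have e1 : |t| * (|t| ^ (-(5/16):ℝ)) ^ 2 ≤ 2 := by
      have : |t| * (|t| ^ (-(5/16):ℝ)) ^ 2 = |t| ^ (3/8:ℝ) := by
        rw [← Real.rpow_natCast, ← Real.rpow_mul ht0.le]
        nth_rw 1 [← Real.rpow_one |t|]
        rw [← Real.rpow_add ht0]; norm_num
      rw [this]
      calc |t| ^ (3/8:ℝ) ≤ 4 ^ (3/8:ℝ) := Real.rpow_le_rpow ht0.le ht4 (by norm_num)
        _ ≤ 4 ^ (1/2:ℝ) := Real.rpow_le_rpow_of_exponent_le (by norm_num) (by norm_num)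
        _ = 2 := by
            rw [show (4:ℝ) = 2 ^ (2:ℝ) by norm_num, ← Real.rpow_mul (by norm_num)]; norm_num
    have e2 : |t| * ‖Av idw (TP S (dc (dc c))) s t‖ ^ 2 ≤ 32 * Eb c ^ 2 := by
      calc _ ≤ |t| * (4 * Eb c * |t| ^ (-(5/16):ℝ)) ^ 2 := by gcongr
        _ = 16 * Eb c ^ 2 * (|t| * (|t| ^ (-(5/16):ℝ)) ^ 2) := by ring
        _ ≤ 16 * Eb c ^ 2 * 2 := by gcongr
        _ = _ := by ring
    have e3 : |t| * ‖Av idw (TP S (dc (dc c))) s t‖ ^ 2 * ‖Av one1 (TP S (dc c)) s t‖⁻¹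
        ≤ 32 * Eb c ^ 2 * (lam / 2)⁻¹ := by gcongr
    linarith
  unfold bd
  linarith

def Gl (Y y : ℝ → ℂ) (s : ℝ) : ℂ := ∫ t in (-π)..π, HH Y y s t

lemma ae_ne : ∀ᵐ t : ℝ, t ≠ 0 := by simp [ae_iff]

lemma uIoc_eq : Set.uIoc (-π) π = Set.Ioc (-π) π := Set.uIoc_of_le (by linarith [pi_pos])

lemma GG_lim (h : LD Y y c lam) (s : ℝ) :
    Tendsto (fun S => GG S c s) atTop (𝓝 (Gl Y y s)) := by
  unfold GG Gl
  apply intervalIntegral.tendsto_integral_filter_of_dominated_convergence (bd c (lam / 2))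
  · refine Eventually.of_forall fun S => Measurable.aestronglyMeasurable ?_
    have h1 := (TP_continuous S c).measurable
    have h2 := (TP_continuous S (dc c)).measurable
    unfold HH
    fun_prop
  · filter_upwards [h.evWS] with S hS
    filter_upwards [ae_ne] with t h0 ht
    rw [uIoc_eq] at ht
    exact h.HH_bound hS s t (Set.Ioc_subset_Icc_self ht) h0
  · exact bd_int _ _
  · filter_upwards [ae_ne] with t h0 ht
    rw [uIoc_eq] at ht
    exact h.HH_lim s t (abs_le.2 (Set.Ioc_subset_Icc_self ht)) h0

lemma GG_bound (h : LD Y y c lam) {S : Finset ℤ} (hS : WS S c (lam / 2)) (s : ℝ) :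
    ‖GG S c s‖ ≤ ∫ t in (-π)..π, bd c (lam / 2) t := by
  unfold GG
  apply intervalIntegral.norm_integral_le_of_norm_le (by linarith [pi_pos]) _ (bd_int _ _)
  filter_upwards [ae_ne] with t h0 ht
  exact h.HH_bound hS s t (Set.Ioc_subset_Icc_self ht) h0

lemma GG_cont (h : LD Y y c lam) {S : Finset ℤ} (hS : WS S c (lam / 2)) : Continuous (GG S c) := by
  obtain ⟨G1, h1, -, -⟩ := GG_smooth hS (by linarith [h.hlam])
  exact continuous_iff_continuousAt.2 fun s => (h1 s).continuousAt

lemma fc_lim (h : LD Y y c lam) (k : ℤ) :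
    Tendsto (fun S => fc (GG S c) k) atTop (𝓝 (fc (Gl Y y) k)) := by
  unfold fc
  apply intervalIntegral.tendsto_integral_filter_of_dominated_convergence
    (fun _ => ∫ t in (-π)..π, bd c (lam / 2) t)
  · filter_upwards [h.evWS] with S hS
    have := h.GG_cont hS
    apply Continuous.aestronglyMeasurable
    fun_prop
  · filter_upwards [h.evWS] with S hS
    refine ae_of_all _ fun s _ => ?_
    have e := norm_exp_int (-k) s
    simp only [Int.cast_neg, mul_neg, ← neg_mul] at e
    rw [norm_mul, e, mul_one]
    exact h.GG_bound hS s
  · exact intervalIntegrable_const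
  · exact ae_of_all _ fun s _ => (h.GG_lim s).mul_const _

lemma Gl_int (h : LD Y y c lam) : IntervalIntegrable (Gl Y y) volume (-π) π := by
  have hb : ∀ s, ‖Gl Y y s‖ ≤ ∫ t in (-π)..π, bd c (lam / 2) t := by
    intro s
    refine le_of_tendsto (h.GG_lim s).norm ?_
    filter_upwards [h.evWS] with S hS
    exact h.GG_bound hS s
  have hm : AEStronglyMeasurable (Gl Y y) (volume.restrict (Set.uIoc (-π) π)) := by
    obtain ⟨S0, hS0⟩ := (eventually_atTop.1 h.evWS)
    have hl : Tendsto (fun S => GG (S0 ∪ S) c) atTop (𝓝 (Gl Y y)) := by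
      rw [tendsto_pi_nhds]
      intro s
      refine (h.GG_lim s).comp ?_
      exact tendsto_atTop_mono (fun S => Finset.subset_union_right) tendsto_id
    refine (stronglyMeasurable_of_tendsto atTop (fun S => ?_) hl).aestronglyMeasurable
    exact (h.GG_cont (hS0 _ Finset.subset_union_left)).stronglyMeasurable
  refine (intervalIntegrable_const (c := ∫ t in (-π)..π, bd c (lam / 2) t)).mono_fun' hm ?_
  exact ae_of_all _ hb

theorem main (h : LD Y y c lam) (T : Finset ℤ) :
    ∑ k ∈ T, (k:ℝ) ^ 4 * ‖fc (Gl Y y) k‖ ^ 2 ≤ 128 * π * CG * (B c ^ 4 / lam ^ 6) := by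
  have hlam := h.hlam
  have hl : Tendsto (fun S => ∑ k ∈ T, (k:ℝ) ^ 4 * ‖fc (GG S c) k‖ ^ 2) atTop
      (𝓝 (∑ k ∈ T, (k:ℝ) ^ 4 * ‖fc (Gl Y y) k‖ ^ 2)) :=
    tendsto_finsetSum _ fun k _ => ((h.fc_lim k).norm.pow 2).const_mul _
  refine le_of_tendsto hl ?_
  filter_upwards [h.evWS] with S hS
  have hG := CG_nonneg
  have hB := h.BB_le S
  have hB0 := BB_nonneg S c
  calc _ ≤ _ := smooth_main hS (by linarith [h.hlam]) T
    _ ≤ 2 * π * (CG * (B c ^ 4 / (lam / 2) ^ 6)) := by gcongr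
    _ = _ := by rw [div_pow]; field_simp; ring

end LD


/-! ### Complexification and conclusion -/

/-- identification of the plane with `ℂ` -/
def Lc : E2 ≃ₗᵢ[ℝ] ℂ := Complex.orthonormalBasisOneI.repr.symm

lemma Lc_apply (x : E2) : Lc x = (x 0 : ℂ) + Complex.I * (x 1 : ℂ) := by
  have : x = Complex.orthonormalBasisOneI.repr ((x 0 : ℂ) + Complex.I * (x 1 : ℂ)) := by
    ext i
    rw [Complex.orthonormalBasisOneI_repr_apply]
    fin_cases i <;> simp
  rw [Lc]
  conv_lhs => rw [this]
  exact LinearIsometryEquiv.symm_apply_apply _ _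

lemma Lc_re (x : E2) : (Lc x).re = x 0 := by rw [Lc_apply]; simp
lemma Lc_im (x : E2) : (Lc x).im = x 1 := by rw [Lc_apply]; simp

lemma bracket (l v : ℂ) :
    -‖v‖ ^ 2 / ‖l‖ ^ 2 + 2 * (⟪l, v⟫) ^ 2 / ‖l‖ ^ 4 = ((v / l) ^ 2).re := by
  rcases eq_or_ne l 0 with rfl | hl
  · simp
  have hn : Complex.normSq l ≠ 0 := by simpa using hl
  rw [Complex.inner, show ‖l‖ ^ 4 = (‖l‖ ^ 2) ^ 2 by ring, ← Complex.normSq_eq_norm_sq,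
    ← Complex.normSq_eq_norm_sq]
  have e : v / l = ((Complex.normSq l)⁻¹ : ℝ) * (starRingEnd ℂ l * v) := by
    rw [div_eq_mul_inv, Complex.inv_def]; ring
  have e2 : Complex.normSq (starRingEnd ℂ l * v) = Complex.normSq l * Complex.normSq v := by
    rw [map_mul, Complex.normSq_conj]
  have e3 : ∀ w : ℂ, (w ^ 2).re = 2 * w.re ^ 2 - Complex.normSq w := by
    intro w; rw [Complex.normSq_apply, sq, Complex.mul_re]; ring
  rw [e, mul_pow, ← Complex.ofReal_pow, Complex.re_ofReal_mul, e3, e2]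
  field_simp
  ring

lemma gY_eq (Y Y' : ℝ → E2) (s : ℝ) :
    Lc (gY Y Y' s) = ((4 * π)⁻¹ : ℝ) * LD.Gl (fun s => Lc (Y s)) (fun s => Lc (Y' s)) s := by
  unfold gY LD.Gl
  rw [map_smul, Complex.real_smul]
  congr 1
  rw [intervalIntegral.integral_of_le (by linarith [pi_pos]),
    intervalIntegral.integral_of_le (by linarith [pi_pos]),
    ← Lc.coe_toContinuousLinearEquiv, ← ContinuousLinearEquiv.integral_comp_comm]
  apply integral_congr_ae
  refine ae_of_all _ fun t => ?_
  simp only [Lc.coe_toContinuousLinearEquiv]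
  unfold HH
  have e1 : Lc (t⁻¹ • (Y (s + t) - Y s)) = (t : ℂ)⁻¹ * (Lc (Y (s + t)) - Lc (Y s)) := by
    rw [map_smul, map_sub, Complex.real_smul, Complex.ofReal_inv]
  rw [map_smul, Complex.real_smul, e1, ← bracket, ← e1, Lc.norm_map, Lc.norm_map, Lc.inner_map_map]

lemma fc_conj {f : ℝ → ℝ} (k : ℤ) :
    fc (fun s => (f s : ℂ)) (-k) = starRingEnd ℂ (fc (fun s => (f s : ℂ)) k) := by
  unfold fc
  rw [intervalIntegral.integral_of_le (by linarith [pi_pos]),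
    intervalIntegral.integral_of_le (by linarith [pi_pos]), ← integral_conj]
  congr 1
  funext s
  rw [map_mul, ← Complex.exp_conj]
  simp

lemma coef_eq {g : ℝ → E2} (hg : IntervalIntegrable (fun s => Lc (g s)) volume (-π) π) (k : ℤ) :
    coefSq g k = (‖fc (fun s => Lc (g s)) k‖ ^ 2 + ‖fc (fun s => Lc (g s)) (-k)‖ ^ 2) / 2 := by
  have h0 : IntervalIntegrable (fun s => ((g s 0 : ℝ) : ℂ)) volume (-π) π := by
    have h1 : IntervalIntegrable (fun s => g s 0) volume (-π) π := by
      rw [show (fun s => g s 0) = fun s => (Lc (g s)).re from funext fun s => (Lc_re _).symm]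
      exact ⟨hg.1.re, hg.2.re⟩
    exact ⟨h1.1.ofReal, h1.2.ofReal⟩
  have h1 : IntervalIntegrable (fun s => ((g s 1 : ℝ) : ℂ)) volume (-π) π := by
    have h1 : IntervalIntegrable (fun s => g s 1) volume (-π) π := by
      rw [show (fun s => g s 1) = fun s => (Lc (g s)).im from funext fun s => (Lc_im _).symm]
      exact ⟨hg.1.im, hg.2.im⟩
    exact ⟨h1.1.ofReal, h1.2.ofReal⟩
  have e : ∀ k : ℤ, fc (fun s => Lc (g s)) k
      = fc (fun s => ((g s 0 : ℝ) : ℂ)) k + Complex.I * fc (fun s => ((g s 1 : ℝ) : ℂ)) k := by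
    intro k
    have he : ContinuousOn (fun s : ℝ => Complex.exp (-Complex.I * k * s)) (Set.uIcc (-π) π) := by
      fun_prop
    unfold fc
    rw [← intervalIntegral.integral_const_mul, ← intervalIntegral.integral_add
      (h0.mul_continuousOn he) ((h1.mul_continuousOn he).const_mul _)]
    congr 1
    funext s
    simp only [Lc_apply]
    ring
  rw [e, e, fc_conj, fc_conj, ← Complex.normSq_eq_norm_sq, ← Complex.normSq_eq_norm_sq]
  unfold coefSq
  rw [Fin.sum_univ_two]
  change Complex.normSq (fc (fun s => ((g s 0 : ℝ) : ℂ)) k)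
    + Complex.normSq (fc (fun s => ((g s 1 : ℝ) : ℂ)) k) = _
  simp only [Complex.normSq_apply, Complex.add_re, Complex.add_im, Complex.mul_re, Complex.mul_im,
    Complex.I_re, Complex.I_im, Complex.conj_re, Complex.conj_im]
  ring

lemma coef_nonneg (g : ℝ → E2) (k : ℤ) : 0 ≤ coefSq g k :=
  Finset.sum_nonneg fun _ _ => Complex.normSq_nonneg _

lemma sob_nonneg (σ : ℝ) (g : ℝ → E2) (k : ℤ) : 0 ≤ sobSummand σ g k := by
  unfold sobSummand
  have := coef_nonneg g k
  split_ifs <;> positivity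

lemma final_main {θ : ℝ} (hθ1 : 1 / 4 ≤ θ) (Y Y' : ℝ → E2) (lam : ℝ) (hlam : 0 < lam)
    (hp : Function.Periodic Y (2 * π)) (hd : ∀ s, HasDerivAt Y (Y' s) s)
    (hws : ∀ s₁ s₂ : ℝ, |s₁ - s₂| ≤ π → lam * |s₁ - s₂| ≤ ‖Y s₁ - Y s₂‖)
    (hs : Summable (sobSummand (2 + θ) Y)) :
    Summable (sobSummand 2 (gY Y Y')) ∧
      sobNorm 2 (gY Y Y') ≤ (Real.sqrt (128 * π * CG) + 1) / lam ^ 3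
        * sobNorm ((9 : ℝ) / 4) Y ^ 4 := by
  have hpi := pi_pos
  have hCG := CG_nonneg
  have hs2 : Summable (sobSummand ((9:ℝ)/4) Y) := by
    refine Summable.of_nonneg_of_le (sob_nonneg _ _) (fun k => ?_) hs
    unfold sobSummand
    split_ifs with hk
    · exact le_rfl
    · have := coef_nonneg Y k
      have hk1 : (1:ℝ) ≤ |(k:ℝ)| := by exact_mod_cast Int.one_le_abs hk
      gcongr
      linarith
  have hYi : IntervalIntegrable (fun s => Lc (Y s)) volume (-π) π := by
    apply Continuous.intervalIntegrable
    exact Lc.continuous.comp (continuous_iff_continuousAt.2 fun s => (hd s).continuousAt)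
  set c : ℤ → ℂ := fun k => fc (fun s => Lc (Y s)) k / (2 * π) with hc
  have hle : ∀ k : ℤ, |(k:ℝ)| ^ (9/2:ℝ) * ‖c k‖ ^ 2 ≤ sobSummand ((9:ℝ)/4) Y k := by
    intro k
    unfold sobSummand
    split_ifs with hk
    · subst hk; simp [Real.zero_rpow]
    · rw [show (2:ℝ) * (9/4) = 9/2 by norm_num, coef_eq hYi]
      gcongr
      simp only [hc]
      rw [norm_div, div_pow, div_le_iff₀ (by simp [hpi.ne'])]
      have e : ‖(2 * π : ℂ)‖ = 2 * π := by
        rw [norm_mul, Complex.norm_real, Real.norm_eq_abs, abs_of_pos hpi]; simp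
      rw [e]
      have h3 : (2:ℝ) ≤ (2 * π) ^ 2 := by nlinarith [Real.pi_gt_three]
      have a1 : 0 ≤ ‖fc (fun s => Lc (Y s)) k‖ ^ 2 := by positivity
      have a2 : 0 ≤ ‖fc (fun s => Lc (Y s)) (-k)‖ ^ 2 := by positivity
      nlinarith
  have hB : Summable (fun k : ℤ => |(k:ℝ)| ^ (9/2:ℝ) * ‖c k‖ ^ 2) :=
    Summable.of_nonneg_of_le (fun _ => by positivity) hle hs2
  have hld : LD (fun s => Lc (Y s)) (fun s => Lc (Y' s)) c lam := by
    refine ⟨fun s => ?_, fun s => ?_, fun k => rfl, hlam, fun s t ht => ?_, hB⟩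
    · simp only [hp s]
    · exact (Lc.toContinuousLinearEquiv.toContinuousLinearMap.hasFDerivAt (x := Y s)).comp_hasDerivAt
        s (hd s)
    · have := hws (s + t) s (by simpa using ht)
      rw [← map_sub, Lc.norm_map]
      simpa using this
  set N := sobNorm ((9:ℝ)/4) Y with hN
  have hN0 : 0 ≤ N := Real.sqrt_nonneg _
  have hBN : LD.B c ≤ N ^ 2 := by
    rw [hN, sobNorm, Real.sq_sqrt (tsum_nonneg (sob_nonneg _ _))]
    exact hB.tsum_le_tsum hle hs2
  have hB0 : 0 ≤ LD.B c := tsum_nonneg fun _ => by positivity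
  set K := 128 * π * CG * ((N ^ 4) ^ 2 / (lam ^ 3) ^ 2) with hK
  have hmain : ∀ T : Finset ℤ, ∑ k ∈ T, (k:ℝ) ^ 4 *
      ‖fc (LD.Gl (fun s => Lc (Y s)) (fun s => Lc (Y' s))) k‖ ^ 2 ≤ K := by
    intro T
    refine (hld.main T).trans ?_
    rw [hK]
    rw [show (lam ^ 3) ^ 2 = lam ^ 6 by ring, show (N ^ 4) ^ 2 = (N ^ 2) ^ 4 by ring]
    gcongr
  have hgi : IntervalIntegrable (fun s => Lc (gY Y Y' s)) volume (-π) π := by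
    simp only [gY_eq]
    exact hld.Gl_int.const_mul _
  have hfc : ∀ k, ‖fc (fun s => Lc (gY Y Y' s)) k‖ ^ 2
      ≤ ‖fc (LD.Gl (fun s => Lc (Y s)) (fun s => Lc (Y' s))) k‖ ^ 2 := by
    intro k
    have : fc (fun s => Lc (gY Y Y' s)) k
        = ((4 * π)⁻¹ : ℝ) * fc (LD.Gl (fun s => Lc (Y s)) (fun s => Lc (Y' s))) k := by
      unfold fc
      rw [← intervalIntegral.integral_const_mul]
      simp only [gY_eq, mul_assoc]
    rw [this, norm_mul, mul_pow]
    have h1 : ‖(((4 * π)⁻¹ : ℝ) : ℂ)‖ ^ 2 ≤ 1 := by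
      rw [Complex.norm_real, Real.norm_eq_abs, abs_of_pos (by positivity)]
      have : (4 * π)⁻¹ ≤ 1 := inv_le_one_of_one_le₀ (by linarith [Real.pi_gt_three])
      exact pow_le_one₀ (by positivity) this
    exact mul_le_of_le_one_left (by positivity) h1
  have hT : ∀ T : Finset ℤ, ∑ k ∈ T, sobSummand 2 (gY Y Y') k ≤ K := by
    intro T
    have e : ∀ k : ℤ, sobSummand 2 (gY Y Y') k ≤
        ((k:ℝ) ^ 4 * ‖fc (LD.Gl (fun s => Lc (Y s)) (fun s => Lc (Y' s))) k‖ ^ 2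
        + (((-k : ℤ):ℝ) ^ 4 * ‖fc (LD.Gl (fun s => Lc (Y s)) (fun s => Lc (Y' s))) (-k)‖ ^ 2)) / 2 := by
      intro k
      unfold sobSummand
      split_ifs with hk
      · positivity
      · rw [coef_eq hgi]
        have e4 : |(k:ℝ)| ^ (2 * 2 : ℝ) = (k:ℝ) ^ 4 := by
          rw [show (2 * 2 : ℝ) = ((4:ℕ) : ℝ) by norm_num, Real.rpow_natCast]
          exact Even.pow_abs (by decide) _
        rw [e4]
        have a1 := hfc k
        have a2 := hfc (-k)
        have a3 : 0 ≤ (k:ℝ) ^ 4 := by positivity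
        have a4 : (((-k : ℤ):ℝ)) ^ 4 = (k:ℝ) ^ 4 := by push_cast; ring
        rw [a4]
        nlinarith [mul_le_mul_of_nonneg_left a1 a3, mul_le_mul_of_nonneg_left a2 a3]
    refine (Finset.sum_le_sum fun k _ => e k).trans ?_
    rw [← Finset.sum_div, Finset.sum_add_distrib]
    have m1 := hmain T
    have m2 := hmain (T.map (Equiv.neg ℤ).toEmbedding)
    rw [Finset.sum_map] at m2
    simp only [Equiv.coe_toEmbedding, Equiv.neg_apply] at m2
    linarith
  have hsum : Summable (sobSummand 2 (gY Y Y')) := summable_of_sum_le (sob_nonneg _ _) hT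
  refine ⟨hsum, ?_⟩
  have hts : ∑' k, sobSummand 2 (gY Y Y') k ≤ K := hsum.tsum_le_of_sum_le hT
  have hq : Real.sqrt K = Real.sqrt (128 * π * CG) / lam ^ 3 * N ^ 4 := by
    rw [hK, Real.sqrt_mul (by positivity), Real.sqrt_div (by positivity),
      Real.sqrt_sq (by positivity), Real.sqrt_sq (by positivity)]
    ring
  calc sobNorm 2 (gY Y Y') ≤ Real.sqrt K := Real.sqrt_le_sqrt hts
    _ = _ := hq
    _ ≤ _ := by gcongr; linarith

/-- The improved `Ḣ²` a priori estimate for the nonlinearity `g_Y`. -/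
theorem statement17 (θ : ℝ) (hθ1 : 1 / 4 ≤ θ) (hθ2 : θ < 1) :
    ∃ C : ℝ, 0 < C ∧
      ∀ (Y Y' Y'' : ℝ → E2) (lam : ℝ),
        0 < lam →
        Function.Periodic Y (2 * π) →
        (∀ s, HasDerivAt Y (Y' s) s) →
        Continuous Y' →
        LocallyIntegrable Y'' volume →
        (∀ a b : ℝ, a ≤ b → Y' b - Y' a = ∫ u in a..b, Y'' u) →
        -- well-stretched condition with constant `lam`
        (∀ s₁ s₂ : ℝ, |s₁ - s₂| ≤ π → lam * |s₁ - s₂| ≤ ‖Y s₁ - Y s₂‖) →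
        -- `‖Y‖_{Ḣ^{2+θ}(𝕋)} < ∞`
        Summable (sobSummand (2 + θ) Y) →
        Summable (sobSummand 2 (gY Y Y')) ∧
        sobNorm 2 (gY Y Y') ≤ C / lam ^ 3 * sobNorm ((9 : ℝ) / 4) Y ^ 4 := by
  refine ⟨Real.sqrt (128 * π * CG) + 1, by positivity, ?_⟩
  intro Y Y' Y'' lam hlam hp hd _ _ _ hws hs
  exact final_main hθ1 Y Y' lam hlam hp hd hws hs
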